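/- arXiv:math/0311449 — 3 statements merged into one kernel-verified Lean document; each statement's English description precedes it below -/
import Mathlib

section
/- For every integer k ≥ 3 and every ε > 0 there exists n₀ such that every graph G on n ≥ n₀ vertices with minimum degree at least n·(1 - 1/(9k¹⁰) + ε) has a fractional K_k-decomposition. -/
/-- `c` is a copy of `H` in `G`, i.e. a subgraph of `G` isomorphic to `H`. -/
def SimpleGraph.Subgraph.IsCopy {α β : Type*} {G : SimpleGraph α} (c : G.Subgraph)
    (H : SimpleGraph β) : Prop :=
  Nonempty (c.coe ≃g H)

/-- A fractional `H`-decomposition of `G`: an assignment of nonnegative real weights to the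
copies of `H` in `G` such that for each edge `e` of `G`, the sum of the weights of the copies
of `H` containing `e` equals `1`. -/
def IsFracDecomp {α β : Type*} (G : SimpleGraph α) (H : SimpleGraph β)
    (ψ : G.Subgraph → ℝ) : Prop :=
  (∀ c, 0 ≤ ψ c) ∧ (∀ c, ¬ c.IsCopy H → ψ c = 0) ∧
  ∀ e ∈ G.edgeSet, (∑ᶠ c ∈ {c : G.Subgraph | c.IsCopy H ∧ e ∈ c.edgeSet}, ψ c) = 1

open Finset in
open scoped Classical in
/-- The `r`-cliques of `G` containing the set `A`. -/
noncomputable def cliquesOver {V : Type*} [Fintype V] (G : SimpleGraph V) (r : ℕ) (A : Finset V) :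
    Finset (Finset V) :=
  {S : Finset V | G.IsNClique r S ∧ A ⊆ S}

open Finset in
open scoped Classical in
theorem mem_cliquesOver {V : Type*} [Fintype V] {G : SimpleGraph V} {r : ℕ} {A S : Finset V} :
    S ∈ cliquesOver G r A ↔ G.IsNClique r S ∧ A ⊆ S := by
  simp [cliquesOver]

open Finset in
open scoped Classical in
/-- Common neighbours. -/
noncomputable def commonNbrs {V : Type*} [Fintype V] (G : SimpleGraph V) (S : Finset V) : Finset V :=
  {x : V | ∀ s ∈ S, G.Adj x s}

open Finset in
open scoped Classical in
theorem cliquesOver_double {V : Type*} [Fintype V] (G : SimpleGraph V) (r : ℕ) (A : Finset V) :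
    ∑ S ∈ cliquesOver G r A, #(commonNbrs G S) = #(cliquesOver G (r+1) A) * (r + 1 - #A) := by
  have h := sum_card_bipartiteAbove_eq_sum_card_bipartiteBelow
    (s := cliquesOver G r A) (t := cliquesOver G (r+1) A) (fun S S' => S ⊆ S')
  have h1 : ∀ S ∈ cliquesOver G r A,
      #((cliquesOver G (r+1) A).bipartiteAbove (fun S S' => S ⊆ S') S) = #(commonNbrs G S) := by
    intro S hS
    rw [mem_cliquesOver] at hS
    symm
    apply Finset.card_bij (fun x _ => insert x S)
    · intro x hx
      simp only [commonNbrs, mem_filter, mem_univ, true_and] at hx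
      rw [mem_bipartiteAbove, mem_cliquesOver]
      exact ⟨⟨hS.1.insert hx, hS.2.trans (subset_insert _ _)⟩, subset_insert _ _⟩
    · intro x hx y hy hxy
      simp only [commonNbrs, mem_filter, mem_univ, true_and] at hx hy
      have hxS : x ∉ S := fun h => G.irrefl (hx x h)
      have : x ∈ insert y S := hxy ▸ mem_insert_self x S
      rcases mem_insert.1 this with h | h
      · exact h
      · exact absurd h hxS
    · intro S' hS'
      rw [mem_bipartiteAbove, mem_cliquesOver] at hS'
      obtain ⟨⟨hc, hA⟩, hsub⟩ := hS'
      have hcard : #(S' \ S) = 1 := by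
        rw [card_sdiff_of_subset hsub, hc.card_eq, hS.1.card_eq]; omega
      obtain ⟨x, hx⟩ := card_eq_one.1 hcard
      have hxm : x ∈ S' \ S := by rw [hx]; simp
      rw [mem_sdiff] at hxm
      refine ⟨x, ?_, ?_⟩
      · simp only [commonNbrs, mem_filter, mem_univ, true_and]
        intro s hs
        exact hc.isClique hxm.1 (hsub hs) (fun h => hxm.2 (h ▸ hs))
      · rw [insert_eq, ← hx]; exact sdiff_union_of_subset hsub
  have h2 : ∀ S' ∈ cliquesOver G (r+1) A,
      #((cliquesOver G r A).bipartiteBelow (fun S S' => S ⊆ S') S') = r + 1 - #A := by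
    intro S' hS'
    rw [mem_cliquesOver] at hS'
    rw [← hS'.1.card_eq, ← card_sdiff_of_subset hS'.2]
    symm
    apply Finset.card_bij (fun x _ => S'.erase x)
    · intro x hx
      rw [mem_sdiff] at hx
      rw [mem_bipartiteBelow, mem_cliquesOver]
      refine ⟨⟨?_, ?_⟩, erase_subset _ _⟩
      · exact hS'.1.erase_of_mem hx.1
      · intro a ha
        exact mem_erase.2 ⟨fun h => hx.2 (h ▸ ha), hS'.2 ha⟩
    · intro x hx y hy hxy
      rw [mem_sdiff] at hx hy
      by_contra hne
      have : x ∈ S'.erase y := mem_erase.2 ⟨hne, hx.1⟩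
      rw [← hxy] at this
      simp at this
    · intro S hS
      rw [mem_bipartiteBelow, mem_cliquesOver] at hS
      obtain ⟨⟨hc, hA⟩, hsub⟩ := hS
      have hcard : #(S' \ S) = 1 := by
        rw [card_sdiff_of_subset hsub, hc.card_eq, hS'.1.card_eq]; omega
      obtain ⟨x, hx⟩ := card_eq_one.1 hcard
      have hxm : x ∈ S' \ S := by rw [hx]; simp
      rw [mem_sdiff] at hxm
      refine ⟨x, mem_sdiff.2 ⟨hxm.1, fun h => hxm.2 (hA h)⟩, ?_⟩
      rw [erase_eq, ← hx]; exact Finset.sdiff_sdiff_eq_self hsub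
  rw [sum_congr rfl h1, sum_congr rfl h2, sum_const, smul_eq_mul] at h
  exact h

open Finset in
open scoped Classical in
theorem commonNbrs_lower {V : Type*} [Fintype V] (G : SimpleGraph V) (γ : ℝ)
    (hdeg : ∀ v, (Fintype.card V : ℝ) * (1 - γ) ≤ ((G.neighborSet v).ncard : ℝ)) (S : Finset V) :
    (Fintype.card V : ℝ) * (1 - #S * γ) ≤ #(commonNbrs G S) := by
  have hn : ∀ v, (G.neighborSet v).ncard = #({x : V | G.Adj x v} : Finset V) := by
    intro v
    rw [← Set.ncard_coe_finset]
    congr 1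
    ext x
    simp [G.adj_comm]
  have hc : ∀ v, (#({x : V | ¬ G.Adj x v} : Finset V) : ℝ) ≤ Fintype.card V * γ := by
    intro v
    have h1 := hdeg v
    rw [hn] at h1
    have h2 := Finset.card_filter_add_card_filter_not (s := (univ : Finset V)) (fun x => G.Adj x v)
    rw [card_univ] at h2
    have h3 : (#({x : V | G.Adj x v} : Finset V) : ℝ) + #({x : V | ¬ G.Adj x v} : Finset V)
      = Fintype.card V := by exact_mod_cast h2
    linarith
  have hsub : (commonNbrs G S)ᶜ ⊆ S.biUnion (fun v => ({x : V | ¬ G.Adj x v} : Finset V)) := by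
    intro x hx
    simp only [commonNbrs, mem_compl, mem_filter, mem_univ, true_and, not_forall] at hx
    obtain ⟨s, hs, h⟩ := hx
    simp only [mem_biUnion, mem_filter, mem_univ, true_and]
    exact ⟨s, hs, h⟩
  have h1 : (#(commonNbrs G S)ᶜ : ℝ) ≤ #S * (Fintype.card V * γ) := by
    calc (#(commonNbrs G S)ᶜ : ℝ) ≤ #(S.biUnion (fun v => ({x : V | ¬ G.Adj x v} : Finset V))) := by
          exact_mod_cast card_le_card hsub
      _ ≤ ∑ v ∈ S, (#({x : V | ¬ G.Adj x v} : Finset V) : ℝ) := by exact_mod_cast card_biUnion_le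
      _ ≤ ∑ v ∈ S, (Fintype.card V * γ) := sum_le_sum (fun v _ => hc v)
      _ = _ := by rw [sum_const, nsmul_eq_mul]
  have h2 : (#(commonNbrs G S) : ℝ) + #(commonNbrs G S)ᶜ = Fintype.card V := by
    exact_mod_cast card_add_card_compl _
  nlinarith

open Finset in
theorem cliquesOver_self {V : Type*} [Fintype V] (G : SimpleGraph V) (r : ℕ) (A : Finset V)
    (hA : G.IsNClique r A) : cliquesOver G r A = {A} := by
  ext S
  rw [mem_cliquesOver, mem_singleton]
  constructor
  · rintro ⟨h1, h2⟩
    exact (eq_of_subset_of_card_le h2 (by rw [h1.card_eq, hA.card_eq])).symm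
  · rintro rfl; exact ⟨hA, subset_rfl⟩

open Finset in
theorem cliquesOver_upper {V : Type*} [Fintype V] (G : SimpleGraph V) (a : ℕ) (A : Finset V)
    (hA : G.IsNClique a A) (m : ℕ) :
    (#(cliquesOver G (a + m) A) : ℝ) ≤ (Fintype.card V : ℝ) ^ m / m.factorial := by
  induction m with
  | zero => simp [cliquesOver_self G a A hA]
  | succ m ih =>
    have h := cliquesOver_double G (a + m) A
    rw [hA.card_eq, show a + m + 1 - a = m + 1 by omega] at h
    have h1 : ∑ S ∈ cliquesOver G (a+m) A, #(commonNbrs G S)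
        ≤ #(cliquesOver G (a+m) A) * Fintype.card V := by
      rw [← smul_eq_mul]
      exact sum_le_card_nsmul _ _ _ (fun S _ => card_le_univ _)
    rw [h] at h1
    have h2 : (#(cliquesOver G (a+m+1) A) : ℝ) * (m+1) ≤ #(cliquesOver G (a+m) A) * Fintype.card V := by
      exact_mod_cast h1
    rw [← add_assoc, Nat.factorial_succ, le_div_iff₀ (by positivity)]
    rw [le_div_iff₀ (by positivity)] at ih
    push_cast
    calc (#(cliquesOver G (a+m+1) A) : ℝ) * ((m+1) * m.factorial)
        = (#(cliquesOver G (a+m+1) A) : ℝ) * (m+1) * m.factorial := by ring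
      _ ≤ #(cliquesOver G (a+m) A) * Fintype.card V * m.factorial := by gcongr
      _ = (#(cliquesOver G (a+m) A) * m.factorial) * Fintype.card V := by ring
      _ ≤ (Fintype.card V : ℝ) ^ m * Fintype.card V := by gcongr
      _ = _ := by ring

open Finset in
theorem cliquesOver_lower {V : Type*} [Fintype V] (G : SimpleGraph V) (γ : ℝ) (hγ : 0 ≤ γ)
    (hdeg : ∀ v, (Fintype.card V : ℝ) * (1 - γ) ≤ ((G.neighborSet v).ncard : ℝ))
    (a : ℕ) (A : Finset V)
    (hA : G.IsNClique a A) (m : ℕ) (hm : ((a + m : ℕ) : ℝ) * γ ≤ 1) :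
    (Fintype.card V : ℝ) ^ m / m.factorial * (1 - (a + m : ℕ) ^ 2 * γ)
      ≤ (#(cliquesOver G (a + m) A) : ℝ) := by
  induction m with
  | zero => simp [cliquesOver_self G a A hA]; positivity
  | succ m ih =>
    have hm' : ((a + m : ℕ) : ℝ) * γ ≤ 1 := by
      push_cast at hm ⊢; nlinarith
    have ih := ih hm'
    have h := cliquesOver_double G (a + m) A
    rw [hA.card_eq, show a + m + 1 - a = m + 1 by omega] at h
    have h1 : (#(cliquesOver G (a+m) A) : ℝ) * (Fintype.card V * (1 - (a + m : ℕ) * γ))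
        ≤ ∑ S ∈ cliquesOver G (a+m) A, (#(commonNbrs G S) : ℝ) := by
      rw [← nsmul_eq_mul]
      apply card_nsmul_le_sum
      intro S hS
      have := commonNbrs_lower G γ hdeg S
      rwa [(mem_cliquesOver.1 hS).1.card_eq] at this
    have h2 : ∑ S ∈ cliquesOver G (a+m) A, (#(commonNbrs G S) : ℝ)
      = (#(cliquesOver G (a+m+1) A) : ℝ) * (m+1) := by exact_mod_cast h
    rw [h2] at h1
    rw [← add_assoc, Nat.factorial_succ]
    have hm1 : (0:ℝ) < m + 1 := by positivity
    refine le_trans ?_ ((div_le_iff₀ hm1).2 h1)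
    have hpos : 0 ≤ 1 - ((a + m : ℕ) : ℝ) * γ := by linarith
    have key : (1 - ((a + m + 1 : ℕ) : ℝ) ^ 2 * γ) ≤
        (1 - ((a + m : ℕ) : ℝ) ^ 2 * γ) * (1 - ((a + m : ℕ) : ℝ) * γ) := by
      push_cast
      have : (0:ℝ) ≤ a + m := by positivity
      have h3 : 0 ≤ ((a:ℝ) + m)^2 * γ * ((a + m) * γ) := by positivity
      have h4 : 0 ≤ ((a:ℝ) + m) * γ := by positivity
      nlinarith
    calc (Fintype.card V : ℝ) ^ (m+1) / ((m+1) * m.factorial : ℕ) * (1 - ((a + m + 1 : ℕ) : ℝ) ^ 2 * γ)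
        ≤ (Fintype.card V : ℝ) ^ (m+1) / ((m+1) * m.factorial : ℕ) *
          ((1 - ((a + m : ℕ) : ℝ) ^ 2 * γ) * (1 - ((a + m : ℕ) : ℝ) * γ)) := by gcongr
      _ = ((Fintype.card V : ℝ) ^ m / m.factorial * (1 - (a + m : ℕ) ^ 2 * γ)) *
          (Fintype.card V * (1 - (a + m : ℕ) * γ)) / (m + 1) := by
            push_cast; field_simp; ring
      _ ≤ _ := by gcongr

open Finset in
open scoped Classical in
theorem card_powersetCard_over {V : Type*} (S A : Finset V) (k : ℕ) (hS : #S = k + 2)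
    (hA : A ⊆ S) : #{K ∈ powersetCard k S | A ⊆ K} = (k + 2 - #A).choose 2 := by
  rw [← hS, ← card_sdiff_of_subset hA, ← card_powersetCard]
  apply Finset.card_bij (fun K _ => S \ K)
  · intro K hK
    simp only [mem_filter, mem_powersetCard] at hK ⊢
    obtain ⟨⟨h1, h2⟩, h3⟩ := hK
    refine ⟨sdiff_subset_sdiff subset_rfl h3, ?_⟩
    rw [card_sdiff_of_subset h1]; omega
  · intro K hK L hL h
    simp only [mem_filter, mem_powersetCard] at hK hL
    rw [← Finset.sdiff_sdiff_eq_self hK.1.1, h, Finset.sdiff_sdiff_eq_self hL.1.1]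
  · intro p hp
    rw [mem_powersetCard] at hp
    have hpS : p ⊆ S := hp.1.trans sdiff_subset
    refine ⟨S \ p, ?_, Finset.sdiff_sdiff_eq_self hpS⟩
    simp only [mem_filter, mem_powersetCard]
    refine ⟨⟨sdiff_subset, ?_⟩, ?_⟩
    · rw [card_sdiff_of_subset hpS]; omega
    · intro a ha
      exact mem_sdiff.2 ⟨hA ha, fun h => (mem_sdiff.1 (hp.1 h)).2 ha⟩

open Finset in
open scoped Classical in
/-- The gadget weight. -/
noncomputable def gadget {V : Type*} (k : ℕ) (e K : Finset V) : ℝ :=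
  ((k : ℝ) - 2) / k + (-((k : ℝ) - 2) / (k - 1)) * (∑ a ∈ e, if a ∈ K then 1 else 0)
    + if e ⊆ K then 1 else 0

open Finset in
open scoped Classical in
theorem gadget_lower {V : Type*} (k : ℕ) (hk : 3 ≤ k) (e K : Finset V) (he : #e = 2) :
    -1 ≤ gadget k e K := by
  have hk' : (3:ℝ) ≤ k := by exact_mod_cast hk
  have h1 : 0 ≤ ((k : ℝ) - 2) / k := div_nonneg (by linarith) (by linarith)
  have h2 : -1 ≤ (-((k : ℝ) - 2) / (k - 1)) := by
    rw [le_div_iff₀ (by linarith)]; linarith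
  rw [neg_sub] at h2
  obtain ⟨a, b, hab, rfl⟩ := card_eq_two.1 he
  unfold gadget
  rw [sum_pair hab]
  by_cases ha : a ∈ K <;> by_cases hb : b ∈ K <;> simp [insert_subset_iff, ha, hb] <;> linarith

open Finset in
open scoped Classical in
theorem gadget_sum {V : Type*} (k : ℕ) (hk : 3 ≤ k) (S e f : Finset V) (hS : #S = k + 2)
    (he : #e = 2) (hf : #f = 2) (heS : e ⊆ S) (hfS : f ⊆ S) :
    ∑ K ∈ powersetCard k S with f ⊆ K, gadget k e K = if e = f then 1 else 0 := by
  have hk' : (3:ℝ) ≤ k := by exact_mod_cast hk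
  have hC : ∀ A : Finset V, A ⊆ S → (#{K ∈ powersetCard k S | A ⊆ K} : ℝ)
      = ((k : ℝ) + 2 - #A) * (k + 1 - #A) / 2 := by
    intro A hA
    rw [card_powersetCard_over S A k hS hA, Nat.cast_choose_two]
    have := card_le_card hA
    rw [Nat.cast_sub (by omega)]
    push_cast; ring
  have hI : ∀ a : V, (∑ K ∈ powersetCard k S with f ⊆ K, if a ∈ K then (1:ℝ) else 0)
      = #{K ∈ powersetCard k S | insert a f ⊆ K} := by
    intro a
    rw [sum_boole, filter_filter]
    congr 3
    ext K
    rw [insert_subset_iff]; tauto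
  have hI2 : (∑ K ∈ powersetCard k S with f ⊆ K, if e ⊆ K then (1:ℝ) else 0)
      = #{K ∈ powersetCard k S | e ∪ f ⊆ K} := by
    rw [sum_boole, filter_filter]
    congr 3
    ext K
    rw [union_subset_iff]; tauto
  have h0 : ∑ K ∈ powersetCard k S with f ⊆ K, gadget k e K
      = ((k : ℝ) - 2) / k * #{K ∈ powersetCard k S | f ⊆ K} +
        (-((k : ℝ) - 2) / (k - 1)) * (∑ a ∈ e, (#{K ∈ powersetCard k S | insert a f ⊆ K} : ℝ))
        + #{K ∈ powersetCard k S | e ∪ f ⊆ K} := by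
    unfold gadget
    rw [sum_add_distrib, sum_add_distrib, sum_const, ← mul_sum, sum_comm, hI2, nsmul_eq_mul]
    rw [sum_congr rfl (fun a _ => hI a)]
    ring
  rw [h0, hC f hfS, hC _ (union_subset heS hfS),
    sum_congr rfl (fun a ha => hC (insert a f) (insert_subset (heS ha) hfS))]
  obtain ⟨a, b, hab, rfl⟩ := card_eq_two.1 he
  rw [sum_pair hab, hf]
  have hk1 : (k:ℝ) - 1 ≠ 0 := by intro h; linarith
  have hk0 : (k:ℝ) ≠ 0 := by intro h; linarith
  by_cases ha : a ∈ f <;> by_cases hb : b ∈ f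
  · have hsub : ({a, b} : Finset V) ⊆ f := by simp [insert_subset_iff, ha, hb]
    have heq : ({a, b} : Finset V) = f := eq_of_subset_of_card_le hsub (by omega)
    rw [if_pos heq, union_eq_right.2 hsub, insert_eq_of_mem ha, insert_eq_of_mem hb, hf]
    field_simp; push_cast; ring
  · have hne : ({a, b} : Finset V) ≠ f := by rintro rfl; simp at hb
    have hu : #({a, b} ∪ f) = 3 := by
      rw [insert_union, singleton_union, insert_eq_of_mem (mem_insert_of_mem ha),
        card_insert_of_notMem hb, hf]
    rw [if_neg hne, hu, insert_eq_of_mem ha, card_insert_of_notMem hb, hf]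
    field_simp; push_cast; ring
  · have hne : ({a, b} : Finset V) ≠ f := by rintro rfl; simp at ha
    have hu : #({a, b} ∪ f) = 3 := by
      rw [insert_union, singleton_union, insert_eq_of_mem hb, card_insert_of_notMem ha, hf]
    rw [if_neg hne, hu, insert_eq_of_mem hb, card_insert_of_notMem ha, hf]
    field_simp; push_cast; ring
  · have hne : ({a, b} : Finset V) ≠ f := by rintro rfl; simp at ha
    have hu : #({a, b} ∪ f) = 4 := by
      rw [insert_union, singleton_union, card_insert_of_notMem, card_insert_of_notMem hb, hf]
      simp [ha, hab]
    rw [if_neg hne, hu, card_insert_of_notMem hb, card_insert_of_notMem ha, hf]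
    field_simp; push_cast; ring

open Finset in
open scoped Classical in
theorem weight_sum {V : Type*} [Fintype V] (G : SimpleGraph V) (k : ℕ) (hk : 3 ≤ k)
    (c : Finset V → ℝ) (f : Finset V) (hf : #f = 2) :
    ∑ K ∈ cliquesOver G k f, ∑ S ∈ cliquesOver G (k+2) K, ∑ e ∈ powersetCard 2 S,
      c e * gadget k e K = #(cliquesOver G (k+2) f) * c f := by
  have h1 : ∑ K ∈ cliquesOver G k f, ∑ S ∈ cliquesOver G (k+2) K, ∑ e ∈ powersetCard 2 S,
      c e * gadget k e K
      = ∑ S ∈ cliquesOver G (k+2) f, ∑ K ∈ powersetCard k S with f ⊆ K, ∑ e ∈ powersetCard 2 S,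
      c e * gadget k e K := by
    apply sum_comm'
    intro K S
    simp only [mem_cliquesOver, mem_filter, mem_powersetCard]
    constructor
    · rintro ⟨⟨h1, h2⟩, h3, h4⟩
      exact ⟨⟨⟨h4, h1.card_eq⟩, h2⟩, h3, h2.trans h4⟩
    · rintro ⟨⟨⟨h4, h1⟩, h2⟩, h3, h5⟩
      exact ⟨⟨⟨h3.isClique.subset (by exact_mod_cast h4), h1⟩, h2⟩, h3, h4⟩
  rw [h1, ← nsmul_eq_mul, ← sum_const]
  apply sum_congr rfl
  intro S hS
  rw [mem_cliquesOver] at hS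
  rw [sum_comm]
  have h2 : ∀ e ∈ powersetCard 2 S, ∑ K ∈ powersetCard k S with f ⊆ K, c e * gadget k e K
      = if e = f then c e else 0 := by
    intro e he
    rw [mem_powersetCard] at he
    rw [← mul_sum, gadget_sum k hk S e f hS.1.card_eq he.2 hf he.1 hS.2]
    simp
  rw [sum_congr rfl h2, sum_ite_eq', if_pos (mem_powersetCard.2 ⟨hS.2, hf⟩)]

open Finset in
open scoped Classical in
theorem exists_weight {V : Type*} [Fintype V] (G : SimpleGraph V) (k : ℕ) (hk : 3 ≤ k)
    (hn : 0 < Fintype.card V)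
    (hdeg : ∀ v, (Fintype.card V : ℝ) * (1 - 1 / (9 * (k : ℝ) ^ 10))
      ≤ ((G.neighborSet v).ncard : ℝ)) :
    ∃ w : Finset V → ℝ, (∀ K, G.IsNClique k K → 0 ≤ w K) ∧
      ∀ f, G.IsNClique 2 f → ∑ K ∈ cliquesOver G k f, w K = 1 := by
  obtain ⟨m, rfl⟩ : ∃ m, k = 2 + m := ⟨k - 2, by omega⟩
  set k := 2 + m with hkdef
  have hk' : (3:ℝ) ≤ k := by exact_mod_cast hk
  have hmk : (m : ℝ) = k - 2 := by rw [hkdef]; push_cast; ring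
  set n : ℝ := (Fintype.card V : ℝ) with hndef
  have hn' : 0 < n := by rw [hndef]; exact_mod_cast hn
  set γ : ℝ := 1 / (9 * (k : ℝ) ^ 10) with hγdef
  have hγ : 0 < γ := by positivity
  have hγ10 : (k:ℝ)^10 * γ = 1/9 := by rw [hγdef]; field_simp
  have hpow : ∀ j, j ≤ 10 → (k:ℝ)^j * γ ≤ 1/9 := by
    intro j hj
    rw [← hγ10]
    gcongr
    linarith
  set P : ℝ := n ^ m / m.factorial with hPdef
  have hP : 0 < P := by positivity
  have hNu : ∀ e, G.IsNClique 2 e → (#(cliquesOver G k e) : ℝ) ≤ P :=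
    fun e he => cliquesOver_upper G 2 e he m
  have hNl : ∀ e, G.IsNClique 2 e → P * (1 - (k:ℝ)^2 * γ) ≤ (#(cliquesOver G k e) : ℝ) :=
    fun e he => cliquesOver_lower G γ hγ.le hdeg 2 e he m
      (by have := hpow 1 (by norm_num); rw [pow_one] at this; linarith)
  have hk2 : ((k:ℝ) + 2)^2 * γ ≤ 1/2 := by
    have h1 := hpow 3 (by norm_num)
    have h2 : ((k:ℝ)+2)^2 ≤ 3 * (k:ℝ)^2 := by nlinarith
    have h3 := hpow 2 (by norm_num)
    nlinarith
  have hTl : ∀ e, G.IsNClique 2 e → P * n^2 / (2 * k^2) ≤ (#(cliquesOver G (k+2) e) : ℝ) := by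
    intro e he
    have h := cliquesOver_lower G γ hγ.le hdeg 2 e he (m+2) (by
      push_cast
      have e1 : (2:ℝ) + (m + 2) = k + 2 := by rw [hmk]; ring
      rw [e1]
      nlinarith)
    rw [show 2 + (m+2) = k + 2 by omega] at h
    refine le_trans ?_ h
    have h3 : (1:ℝ)/2 ≤ 1 - ((k+2 : ℕ):ℝ)^2 * γ := by push_cast; linarith
    have h4 : n ^ (m+2) / ((m+2).factorial : ℝ) = P * n^2 / (k * (k-1)) := by
      rw [hPdef, Nat.factorial_succ, Nat.factorial_succ]
      push_cast
      have e1 : (m:ℝ) + 1 + 1 = k := by rw [hmk]; ring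
      have e2 : (m:ℝ) + 1 = k - 1 := by rw [hmk]; ring
      rw [e1, e2]
      have hk1 : (k:ℝ) - 1 ≠ 0 := by intro h; linarith
      field_simp
      ring
    rw [← hndef, h4]
    calc P * n^2 / (2 * k^2) = P * n^2 / (k^2) * (1/2) := by field_simp
      _ ≤ P * n^2 / (k * (k-1)) * (1 - ((k+2 : ℕ):ℝ)^2 * γ) := by
        have : 0 < (k:ℝ) * (k-1) := mul_pos (by linarith) (by linarith)
        gcongr
        nlinarith
  set c : Finset V → ℝ := fun e => (1 - #(cliquesOver G k e) / P) / #(cliquesOver G (k+2) e)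
    with hc
  have hTpos : ∀ e, G.IsNClique 2 e → 0 < (#(cliquesOver G (k+2) e) : ℝ) :=
    fun e he => lt_of_lt_of_le (by positivity) (hTl e he)
  have hc0 : ∀ e, G.IsNClique 2 e → 0 ≤ c e := by
    intro e he
    apply div_nonneg _ (hTpos e he).le
    rw [sub_nonneg, div_le_one hP]
    exact hNu e he
  have hc1 : ∀ e, G.IsNClique 2 e → c e ≤ 2 * k^4 * γ / (P * n^2) := by
    intro e he
    have h1 : 1 - #(cliquesOver G k e) / P ≤ k^2 * γ := by
      have : 1 - (k:ℝ)^2 * γ ≤ #(cliquesOver G k e) / P := by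
        rw [le_div_iff₀ hP]; linarith [hNl e he]
      linarith
    calc c e ≤ k^2 * γ / #(cliquesOver G (k+2) e) := by
          apply div_le_div_of_nonneg_right h1 (hTpos e he).le
      _ ≤ k^2 * γ / (P * n^2 / (2 * k^2)) := by
          apply div_le_div_of_nonneg_left (by positivity) (by positivity) (hTl e he)
      _ = _ := by field_simp
  refine ⟨fun K => 1 / P + ∑ S ∈ cliquesOver G (k+2) K, ∑ e ∈ powersetCard 2 S,
      c e * gadget k e K, ?_, ?_⟩
  · intro K hK
    set δ : ℝ := 2 * k^4 * γ / (P * n^2) with hδ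
    have hδ0 : 0 ≤ δ := by positivity
    have hin : ∀ S ∈ cliquesOver G (k+2) K,
        -(2 * k^2 * δ) ≤ ∑ e ∈ powersetCard 2 S, c e * gadget k e K := by
      intro S hS
      rw [mem_cliquesOver] at hS
      have h1 : (#(powersetCard 2 S) : ℝ) * (-δ) ≤ ∑ e ∈ powersetCard 2 S, c e * gadget k e K := by
        rw [← nsmul_eq_mul]
        apply card_nsmul_le_sum
        intro e he
        rw [mem_powersetCard] at he
        have hec : G.IsNClique 2 e := ⟨hS.1.isClique.subset (by exact_mod_cast he.1), he.2⟩
        have := gadget_lower k hk e K he.2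
        nlinarith [hc0 e hec, hc1 e hec]
      rw [card_powersetCard, hS.1.card_eq, Nat.cast_choose_two] at h1
      push_cast at h1
      have h2 : ((k:ℝ)+2) * (k + 2 - 1) / 2 ≤ 2 * k^2 := by nlinarith
      nlinarith
    have hT : (#(cliquesOver G (k+2) K) : ℝ) ≤ n^2/2 := by
      have := cliquesOver_upper G k K hK 2
      simpa using this
    have h1 : (#(cliquesOver G (k+2) K) : ℝ) * (-(2 * k^2 * δ)) ≤
        ∑ S ∈ cliquesOver G (k+2) K, ∑ e ∈ powersetCard 2 S, c e * gadget k e K := by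
      rw [← nsmul_eq_mul]
      exact card_nsmul_le_sum _ _ _ hin
    have h2 : (#(cliquesOver G (k+2) K) : ℝ) * (2 * k^2 * δ) ≤ n^2/2 * (2 * k^2 * δ) := by
      gcongr
    have h3 : n^2/2 * (2 * k^2 * δ) = 2 * ((k:ℝ)^6 * γ) * (1 / P) := by
      rw [hδ]; field_simp
    have h4 : 2 * ((k:ℝ)^6 * γ) * (1 / P) ≤ 1 * (1 / P) := by
      have := hpow 6 (by norm_num)
      gcongr
      linarith
    show 0 ≤ 1 / P + _
    linarith
  · intro f hf
    rw [sum_add_distrib, weight_sum G k hk c f hf.card_eq, sum_const, nsmul_eq_mul, hc]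
    have := (hTpos f hf).ne'
    field_simp
    ring

open Finset in
open scoped Classical in
theorem isCopy_top_iff {V : Type*} [Fintype V] (G : SimpleGraph V) (k : ℕ) (c : G.Subgraph) :
    c.IsCopy (⊤ : SimpleGraph (Fin k)) ↔
      c.verts.toFinset.card = k ∧ ∀ x ∈ c.verts, ∀ y ∈ c.verts, x ≠ y → c.Adj x y := by
  constructor
  · rintro ⟨φ⟩
    constructor
    · rw [Set.toFinset_card, Fintype.card_congr φ.toEquiv, Fintype.card_fin]
    · intro x hx y hy hxy
      have h : (⊤ : SimpleGraph (Fin k)).Adj (φ ⟨x, hx⟩) (φ ⟨y, hy⟩) := by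
        rw [SimpleGraph.top_adj]
        intro h
        exact hxy (congrArg Subtype.val (φ.injective h))
      rw [φ.map_adj_iff] at h
      exact h
  · rintro ⟨h1, h2⟩
    rw [Set.toFinset_card] at h1
    refine ⟨⟨Fintype.equivFinOfCardEq h1, ?_⟩⟩
    intro a b
    rw [SimpleGraph.top_adj, SimpleGraph.Subgraph.coe_adj]
    constructor
    · intro h
      exact h2 _ a.2 _ b.2 (fun h' => h (congrArg _ (Subtype.ext h')))
    · intro h h'
      have := (Equiv.injective _) h'
      exact h.ne (congrArg Subtype.val this)

open Finset in
open scoped Classical in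
theorem decomp_of_weight {V : Type*} [Fintype V] (G : SimpleGraph V) (k : ℕ) (w : Finset V → ℝ)
    (h0 : ∀ K, G.IsNClique k K → 0 ≤ w K)
    (h1 : ∀ f, G.IsNClique 2 f → ∑ K ∈ cliquesOver G k f, w K = 1) :
    ∃ ψ : G.Subgraph → ℝ, IsFracDecomp G (⊤ : SimpleGraph (Fin k)) ψ := by
  have hcl : ∀ c : G.Subgraph, c.IsCopy (⊤ : SimpleGraph (Fin k)) →
      G.IsNClique k c.verts.toFinset := by
    intro c hc
    rw [isCopy_top_iff] at hc
    refine ⟨?_, hc.1⟩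
    intro x hx y hy hxy
    simp only [Set.coe_toFinset] at hx hy
    exact (hc.2 x hx y hy hxy).adj_sub
  refine ⟨fun c => if c.IsCopy (⊤ : SimpleGraph (Fin k)) then w c.verts.toFinset else 0,
    ?_, ?_, ?_⟩
  · intro c
    dsimp only
    split_ifs with h
    · exact h0 _ (hcl c h)
    · exact le_rfl
  · intro c h
    exact if_neg h
  · intro e he
    induction e with
    | h a b =>
    rw [SimpleGraph.mem_edgeSet] at he
    have hf : G.IsNClique 2 {a, b} := by
      refine ⟨?_, card_pair he.ne⟩
      rw [coe_pair, SimpleGraph.isClique_pair]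
      exact fun _ => he
    rw [← h1 _ hf, ← finsum_mem_coe_finset]
    refine finsum_mem_eq_of_bijOn (fun c : G.Subgraph => c.verts.toFinset) ⟨?_, ?_, ?_⟩ ?_
    · rintro c ⟨hc, hab⟩
      rw [SimpleGraph.Subgraph.mem_edgeSet] at hab
      rw [Finset.mem_coe, mem_cliquesOver]
      refine ⟨hcl c hc, ?_⟩
      rw [insert_subset_iff, singleton_subset_iff, Set.mem_toFinset, Set.mem_toFinset]
      exact ⟨hab.fst_mem, hab.snd_mem⟩
    · rintro c ⟨hc, -⟩ c' ⟨hc', -⟩ h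
      rw [isCopy_top_iff] at hc hc'
      have hv : c.verts = c'.verts := Set.toFinset_inj.1 h
      ext x y
      · rw [hv]
      · constructor
        · intro hh
          exact hc'.2 x (hv ▸ hh.fst_mem) y (hv ▸ hh.snd_mem) hh.ne
        · intro hh
          exact hc.2 x (hv ▸ hh.fst_mem) y (hv ▸ hh.snd_mem) hh.ne
    · intro K hK
      rw [Finset.mem_coe, mem_cliquesOver] at hK
      obtain ⟨hK, hsub⟩ := hK
      rw [insert_subset_iff, singleton_subset_iff] at hsub
      refine ⟨(⊤ : G.Subgraph).induce (K : Set V), ⟨?_, ?_⟩, ?_⟩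
      · rw [isCopy_top_iff]
        refine ⟨by simp [hK.card_eq], ?_⟩
        intro x hx y hy hxy
        simp only [SimpleGraph.Subgraph.induce_verts] at hx hy
        simp only [SimpleGraph.Subgraph.induce_adj, SimpleGraph.Subgraph.top_adj]
        exact ⟨hx, hy, hK.isClique hx hy hxy⟩
      · rw [SimpleGraph.Subgraph.mem_edgeSet]
        simp only [SimpleGraph.Subgraph.induce_adj, SimpleGraph.Subgraph.top_adj]
        exact ⟨by simpa using hsub.1, by simpa using hsub.2, he⟩
      · simp
    · rintro c ⟨hc, -⟩
      exact if_pos hc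

/-- For every integer `k ≥ 3` and every `ε > 0` there exists `n₀` such that every graph `G` on
`n ≥ n₀` vertices with minimum degree at least `n·(1 - 1/(9k^10) + ε)` has a fractional
`K_k`-decomposition. -/
theorem frac_kk_decomposition_of_min_degree (k : ℕ) (hk : 3 ≤ k) (ε : ℝ) (hε : 0 < ε) :
    ∃ n₀ : ℕ, ∀ n : ℕ, n₀ ≤ n → ∀ G : SimpleGraph (Fin n),
      (∀ v, (n : ℝ) * (1 - 1 / (9 * (k : ℝ) ^ 10) + ε) ≤ ((G.neighborSet v).ncard : ℝ)) →
      ∃ ψ : G.Subgraph → ℝ, IsFracDecomp G (⊤ : SimpleGraph (Fin k)) ψ := by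
  refine ⟨1, fun n hn G hdeg => ?_⟩
  obtain ⟨w, hw0, hw1⟩ := exists_weight G k hk (by rw [Fintype.card_fin]; omega) (by
    intro v
    refine le_trans ?_ (hdeg v)
    rw [Fintype.card_fin]
    have : (0:ℝ) ≤ n := by positivity
    nlinarith)
  exact decomp_of_weight G k w hw0 hw1
end

section
/- For every integer k ≥ 3, every graph H with k vertices and at least one edge, and every ε > 0, there exists n₀ such that every graph G on n ≥ n₀ vertices with minimum degree at least n·(1 - 1/(9k¹⁰) + ε) has a fractional H-decomposition. -/
open Finset

noncomputable def gad {α : Type*} [DecidableEq α] (k : ℕ) (e S : Finset α) : ℝ :=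
  2 / ((k : ℝ) * (k - 1)) - ((e \ S).card : ℝ) / (k - 1) + if Disjoint e S then 1 else 0

lemma card_pairs_mem {α : Type*} [DecidableEq α] (A : Finset α) (v : α) (hv : v ∈ A) :
    ((A.powersetCard 2).filter (fun p => v ∈ p)).card = A.card - 1 := by
  rw [← card_erase_of_mem hv]
  symm
  apply card_bij (fun w _ => ({v, w} : Finset α))
  · intro w hw
    rw [mem_erase] at hw
    simp only [mem_filter, mem_powersetCard, mem_insert, true_or, and_true]
    refine ⟨?_, card_pair hw.1.symm⟩
    intro z hz
    simp only [mem_insert, mem_singleton] at hz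
    rcases hz with rfl | rfl
    · exact hv
    · exact hw.2
  · intro w hw w' hw' h
    rw [mem_erase] at hw hw'
    have : w ∈ ({v, w'} : Finset α) := by rw [← h]; simp
    simp only [mem_insert, mem_singleton] at this
    tauto
  · intro p hp
    simp only [mem_filter, mem_powersetCard] at hp
    obtain ⟨⟨hpA, hp2⟩, hvp⟩ := hp
    obtain ⟨a, b, hab, rfl⟩ := card_eq_two.mp hp2
    simp only [mem_insert, mem_singleton] at hvp
    rcases hvp with rfl | rfl
    · exact ⟨b, by rw [mem_erase]; exact ⟨hab.symm, hpA (by simp)⟩, rfl⟩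
    · exact ⟨a, by rw [mem_erase]; exact ⟨hab, hpA (by simp)⟩, pair_comm _ _⟩

lemma gad_sum {α : Type*} [DecidableEq α] (k : ℕ) (hk : 2 ≤ k) (Q e f : Finset α)
    (hQ : Q.card = k + 2) (heQ : e ⊆ Q) (hfQ : f ⊆ Q) (he : e.card = 2) (hf : f.card = 2) :
    ∑ S ∈ (Q.powersetCard k).filter (fun S => f ⊆ S), gad k e S = if e = f then 1 else 0 := by
  have hk1 : (k : ℝ) - 1 ≠ 0 := by
    have : (2 : ℝ) ≤ k := by exact_mod_cast hk
    linarith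
  have hk0 : (k : ℝ) ≠ 0 := by
    have : (2 : ℝ) ≤ k := by exact_mod_cast hk
    linarith
  have hA : (Q \ f).card = k := by rw [card_sdiff_of_subset hfQ]; omega
  have h1 : ∑ S ∈ (Q.powersetCard k).filter (fun S => f ⊆ S), gad k e S
      = ∑ p ∈ (Q \ f).powersetCard 2,
        (2 / ((k : ℝ) * (k - 1)) - ((e ∩ p).card : ℝ) / (k - 1) + if p = e then 1 else 0) := by
    apply sum_bij' (fun S _ => Q \ S) (fun p _ => Q \ p)
    · intro S hS
      simp only [mem_filter, mem_powersetCard] at hS ⊢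
      refine ⟨sdiff_subset_sdiff subset_rfl hS.2, ?_⟩
      rw [card_sdiff_of_subset hS.1.1]; omega
    · intro p hp
      simp only [mem_filter, mem_powersetCard] at hp ⊢
      have hpQ : p ⊆ Q := hp.1.trans sdiff_subset
      refine ⟨⟨sdiff_subset, ?_⟩, ?_⟩
      · rw [card_sdiff_of_subset hpQ]; omega
      · intro x hx
        rw [mem_sdiff]
        exact ⟨hfQ hx, fun h => (mem_sdiff.mp (hp.1 h)).2 hx⟩
    · intro S hS
      simp only [mem_filter, mem_powersetCard] at hS
      exact Finset.sdiff_sdiff_eq_self hS.1.1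
    · intro p hp
      simp only [mem_powersetCard] at hp
      exact Finset.sdiff_sdiff_eq_self (hp.1.trans sdiff_subset)
    · intro S hS
      simp only [mem_filter, mem_powersetCard] at hS
      have e1 : e \ S = e ∩ (Q \ S) := by
        ext x; simp only [mem_sdiff, mem_inter]
        exact ⟨fun h => ⟨h.1, heQ h.1, h.2⟩, fun h => ⟨h.1, h.2.2⟩⟩
      have e2 : Disjoint e S ↔ Q \ S = e := by
        constructor
        · intro h
          symm
          apply eq_of_subset_of_card_le
          · intro x hx
            rw [mem_sdiff]
            exact ⟨heQ hx, disjoint_left.mp h hx⟩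
          · rw [card_sdiff_of_subset hS.1.1]; omega
        · intro h
          rw [← h]; exact sdiff_disjoint
      unfold gad
      rw [e1]
      simp only [e2]
  have h2 : ∑ p ∈ (Q \ f).powersetCard 2, ((e ∩ p).card : ℝ) = (e \ f).card * ((k : ℝ) - 1) := by
    have : ∀ p : Finset α, ((e ∩ p).card : ℝ) = ∑ v ∈ e, if v ∈ p then (1 : ℝ) else 0 := by
      intro p
      rw [sum_boole, filter_mem_eq_inter]
    simp_rw [this]
    rw [sum_comm]
    have : ∀ v ∈ e, (∑ p ∈ (Q \ f).powersetCard 2, if v ∈ p then (1 : ℝ) else 0)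
        = if v ∈ f then 0 else ((k : ℝ) - 1) := by
      intro v hv
      rw [sum_boole]
      split_ifs with h
      · rw [Nat.cast_eq_zero, card_eq_zero, filter_eq_empty_iff]
        intro p hp hvp
        exact (mem_sdiff.mp ((mem_powersetCard.mp hp).1 hvp)).2 h
      · rw [card_pairs_mem _ _ (mem_sdiff.mpr ⟨heQ hv, h⟩), hA, Nat.cast_sub (by omega)]
        simp
    rw [sum_congr rfl this, sum_ite, sum_const_zero, zero_add, sum_const, nsmul_eq_mul,
      filter_notMem_eq_sdiff]
  have h3 : ∑ p ∈ (Q \ f).powersetCard 2, (if p = e then (1 : ℝ) else 0)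
      = if Disjoint e f then 1 else 0 := by
    rw [sum_ite_eq']
    have : e ∈ (Q \ f).powersetCard 2 ↔ Disjoint e f := by
      rw [mem_powersetCard, subset_sdiff]
      tauto
    simp only [this]
  rw [h1, sum_add_distrib, sum_sub_distrib, h3, sum_const, ← sum_div, h2, card_powersetCard, hA,
    nsmul_eq_mul, Nat.cast_choose_two]
  have hs : (e \ f).card ≤ 2 := by rw [← he]; exact card_le_card sdiff_subset
  have hef : (e \ f).card = 0 ↔ e = f := by
    rw [card_eq_zero, sdiff_eq_empty_iff_subset]
    exact ⟨fun h => eq_of_subset_of_card_le h (by omega), fun h => h.subset⟩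
  have hd : (e \ f).card = 2 ↔ Disjoint e f := by
    rw [← Finset.sdiff_eq_self_iff_disjoint]
    exact ⟨fun h => eq_of_subset_of_card_le sdiff_subset (by omega), fun h => by rw [h, he]⟩
  simp only [← hef, ← hd]
  interval_cases h : (e \ f).card <;> simp <;> field_simp <;> norm_num

lemma abs_gad_le {α : Type*} [DecidableEq α] (k : ℕ) (hk : 3 ≤ k) (e S : Finset α)
    (he : e.card = 2) : |gad k e S| ≤ 1 := by
  have hk' : (3 : ℝ) ≤ k := by exact_mod_cast hk
  have hs : (e \ S).card ≤ 2 := by rw [← he]; exact card_le_card sdiff_subset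
  have hd : (e \ S).card = 2 ↔ Disjoint e S := by
    rw [← Finset.sdiff_eq_self_iff_disjoint]
    exact ⟨fun h => eq_of_subset_of_card_le sdiff_subset (by omega), fun h => by rw [h, he]⟩
  have hp : (0 : ℝ) < k * (k - 1) := by nlinarith
  have hk1 : (k : ℝ) - 1 ≠ 0 := by linarith
  have hk0 : (k : ℝ) ≠ 0 := by linarith
  unfold gad
  simp only [← hd]
  have key : ∀ x : ℝ, 2 / ((k : ℝ) * (k - 1)) - x / (k - 1) = (2 - x * k) / (k * (k-1)) := by
    intro x; field_simp
  rw [key, abs_le]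
  interval_cases h : (e \ S).card <;> simp <;> constructor
  · exact le_trans (by norm_num) (div_nonneg (by norm_num) hp.le)
  · rw [div_le_one hp]; nlinarith
  · rw [le_div_iff₀ hp]; nlinarith
  · rw [div_le_one hp]; nlinarith
  · have : -1 ≤ (2 - 2 * (k : ℝ)) / (k * (k-1)) := by rw [le_div_iff₀ hp]; nlinarith
    linarith
  · have : (2 - 2 * (k : ℝ)) / (k * (k-1)) ≤ 0 := div_nonpos_of_nonpos_of_nonneg (by linarith) hp.le
    linarith

open Classical in
/-- The number of `m`-cliques containing `e`. -/
noncomputable def cliqueCount {α : Type*} [Fintype α] (G : SimpleGraph α) (m : ℕ)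
    (e : Finset α) : ℕ := ((G.cliqueFinset m).filter (fun S => e ⊆ S)).card

open Classical in
lemma cliqueCount_succ_eq {α : Type*} [Fintype α] (G : SimpleGraph α) (m : ℕ)
    (S : Finset α) (hS : S ∈ G.cliqueFinset m) :
    cliqueCount G (m + 1) S = (univ.filter (fun v => ∀ u ∈ S, G.Adj v u)).card := by
  unfold cliqueCount
  rw [SimpleGraph.mem_cliqueFinset_iff] at hS
  symm
  apply card_bij (fun v _ => insert v S)
  · intro v hv
    simp only [mem_filter, mem_univ, true_and] at hv
    simp only [mem_filter, SimpleGraph.mem_cliqueFinset_iff]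
    exact ⟨hS.insert hv, subset_insert _ _⟩
  · intro v hv w hw h
    simp only [mem_filter, mem_univ, true_and] at hv hw
    have h1 : v ∉ S := fun h => (hv v h).ne rfl
    have : v ∈ insert w S := by rw [← h]; simp
    rw [mem_insert] at this
    tauto
  · intro T hT
    simp only [mem_filter, SimpleGraph.mem_cliqueFinset_iff] at hT
    obtain ⟨hT, hST⟩ := hT
    have hc : (T \ S).card = 1 := by
      rw [card_sdiff_of_subset hST, hT.card_eq, hS.card_eq]; omega
    obtain ⟨v, hv⟩ := card_eq_one.mp hc
    have hvT : v ∈ T \ S := by rw [hv]; simp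
    rw [mem_sdiff] at hvT
    refine ⟨v, ?_, ?_⟩
    · simp only [mem_filter, mem_univ, true_and]
      intro u hu
      exact hT.isClique hvT.1 (hST hu) (fun h => hvT.2 (h ▸ hu))
    · rw [insert_eq, ← hv, sdiff_union_of_subset hST]

open Classical in
lemma cliqueCount_succ_bounds {α : Type*} [Fintype α] (G : SimpleGraph α) (δ : ℝ)
    (hdeg : ∀ v, ((univ.filter (fun u => ¬ G.Adj u v)).card : ℝ) ≤ δ * Fintype.card α)
    (m : ℕ) (S : Finset α) (hS : S ∈ G.cliqueFinset m) :
    (Fintype.card α : ℝ) * (1 - m * δ) ≤ cliqueCount G (m + 1) S ∧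
      (cliqueCount G (m + 1) S : ℝ) ≤ Fintype.card α := by
  rw [cliqueCount_succ_eq G m S hS]
  constructor
  · have h1 := card_filter_add_card_filter_not (s := (univ : Finset α))
      (fun v => ∀ u ∈ S, G.Adj v u)
    have h2 : ((univ.filter (fun v => ¬ ∀ u ∈ S, G.Adj v u)).card : ℝ)
        ≤ m * (δ * Fintype.card α) := by
      have : univ.filter (fun v => ¬ ∀ u ∈ S, G.Adj v u)
          ⊆ S.biUnion (fun u => univ.filter (fun v => ¬ G.Adj v u)) := by
        intro v hv
        simpa using hv
      calc ((univ.filter (fun v => ¬ ∀ u ∈ S, G.Adj v u)).card : ℝ)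
          ≤ ((∑ u ∈ S, (univ.filter (fun v => ¬ G.Adj v u)).card : ℕ) : ℝ) := by
            exact_mod_cast (card_le_card this).trans card_biUnion_le
        _ = ∑ u ∈ S, ((univ.filter (fun v => ¬ G.Adj v u)).card : ℝ) := by push_cast; rfl
        _ ≤ ∑ u ∈ S, δ * Fintype.card α := sum_le_sum fun u _ => hdeg u
        _ = m * (δ * Fintype.card α) := by
            rw [sum_const, nsmul_eq_mul, (SimpleGraph.mem_cliqueFinset_iff.mp hS).card_eq]
    rw [card_univ] at h1
    have h3 : ((univ.filter (fun v => ∀ u ∈ S, G.Adj v u)).card : ℝ) +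
      ((univ.filter (fun v => ¬ ∀ u ∈ S, G.Adj v u)).card : ℝ) = Fintype.card α := by
      exact_mod_cast h1
    linarith
  · exact_mod_cast card_le_univ _

open Classical in
lemma cliqueCount_double {α : Type*} [Fintype α] (G : SimpleGraph α) (m : ℕ)
    (e : Finset α) (he : e.card = 2) :
    ∑ S ∈ (G.cliqueFinset m).filter (fun S => e ⊆ S), cliqueCount G (m + 1) S
      = cliqueCount G (m + 1) e * (m - 1) := by
  have h1 : ∀ S ∈ (G.cliqueFinset m).filter (fun S => e ⊆ S), cliqueCount G (m + 1) S
      = (bipartiteAbove (fun S T => S ⊆ T)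
        ((G.cliqueFinset (m + 1)).filter (fun S => e ⊆ S)) S).card := by
    intro S hS
    rw [mem_filter] at hS
    unfold cliqueCount bipartiteAbove
    congr 1
    ext T
    simp only [mem_filter]
    exact ⟨fun h => ⟨⟨h.1, hS.2.trans h.2⟩, h.2⟩, fun h => ⟨h.1.1, h.2⟩⟩
  rw [sum_congr rfl h1, sum_card_bipartiteAbove_eq_sum_card_bipartiteBelow]
  unfold cliqueCount
  rw [← smul_eq_mul, ← sum_const]
  apply sum_congr rfl
  intro T hT
  rw [mem_filter, SimpleGraph.mem_cliqueFinset_iff] at hT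
  obtain ⟨hT, heT⟩ := hT
  have hc : (T \ e).card = m - 1 := by
    rw [card_sdiff_of_subset heT, hT.card_eq]; omega
  rw [← hc]
  symm
  apply card_bij (fun v _ => T.erase v)
  · intro v hv
    rw [mem_sdiff] at hv
    simp only [bipartiteBelow, mem_filter, SimpleGraph.mem_cliqueFinset_iff]
    refine ⟨⟨⟨hT.isClique.subset (by exact_mod_cast erase_subset _ _), ?_⟩, ?_⟩, erase_subset _ _⟩
    · rw [card_erase_of_mem hv.1, hT.card_eq]; omega
    · exact subset_erase.mpr ⟨heT, hv.2⟩
  · intro v hv w hw h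
    rw [mem_sdiff] at hv hw
    exact erase_injOn T hv.1 hw.1 h
  · intro S hS
    simp only [bipartiteBelow, mem_filter, SimpleGraph.mem_cliqueFinset_iff] at hS
    obtain ⟨⟨hS, heS⟩, hST⟩ := hS
    have hc : (T \ S).card = 1 := by
      rw [card_sdiff_of_subset hST, hT.card_eq, hS.card_eq]; omega
    obtain ⟨v, hv⟩ := card_eq_one.mp hc
    have hvT : v ∈ T \ S := by rw [hv]; simp
    rw [mem_sdiff] at hvT
    refine ⟨v, mem_sdiff.mpr ⟨hvT.1, fun h => hvT.2 (heS h)⟩, ?_⟩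
    rw [erase_eq, ← hv, Finset.sdiff_sdiff_eq_self hST]

open Classical in
lemma cliqueCount_step {α : Type*} [Fintype α] (G : SimpleGraph α) (δ : ℝ)
    (hdeg : ∀ v, (((univ : Finset α).filter (fun u => ¬ G.Adj u v)).card : ℝ)
      ≤ δ * Fintype.card α)
    (m : ℕ) (hm : 2 ≤ m) (e : Finset α) (he : e.card = 2) :
    (Fintype.card α : ℝ) * (1 - m * δ) * cliqueCount G m e
        ≤ (m - 1) * cliqueCount G (m + 1) e ∧
      ((m : ℝ) - 1) * cliqueCount G (m + 1) e ≤ Fintype.card α * cliqueCount G m e := by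
  have h := cliqueCount_double G m e he
  have h' : ∑ S ∈ (G.cliqueFinset m).filter (fun S => e ⊆ S), (cliqueCount G (m + 1) S : ℝ)
      = ((m : ℝ) - 1) * cliqueCount G (m + 1) e := by
    rw [← Nat.cast_sum]
    convert congrArg (Nat.cast : ℕ → ℝ) h using 1
    rw [Nat.cast_mul, Nat.cast_sub (by omega)]
    push_cast; ring
  have hb := fun S hS => cliqueCount_succ_bounds G δ hdeg m S hS
  have hM : (cliqueCount G m e : ℝ) = ((G.cliqueFinset m).filter (fun S => e ⊆ S)).card := by
    rfl
  rw [← h', hM]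
  constructor
  · rw [mul_comm, ← nsmul_eq_mul]
    apply card_nsmul_le_sum
    intro S hS
    exact (hb S (mem_filter.mp hS).1).1
  · rw [mul_comm, ← nsmul_eq_mul]
    apply sum_le_card_nsmul
    intro S hS
    exact (hb S (mem_filter.mp hS).1).2

open Classical in
lemma cliqueCount_bounds {α : Type*} [Fintype α] (G : SimpleGraph α) (δ : ℝ) (hδ : 0 ≤ δ)
    (hdeg : ∀ v, (((univ : Finset α).filter (fun u => ¬ G.Adj u v)).card : ℝ)
      ≤ δ * Fintype.card α)
    (e : Finset α) (he : G.IsNClique 2 e) (m : ℕ) (hm : (m + 2) * δ ≤ 1) :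
    (Fintype.card α : ℝ) ^ m * (1 - (m + 2) ^ 2 * δ) ≤ m.factorial * cliqueCount G (m + 2) e ∧
      (m.factorial * cliqueCount G (m + 2) e : ℝ) ≤ (Fintype.card α : ℝ) ^ m := by
  induction m with
  | zero =>
    have : cliqueCount G 2 e = 1 := by
      unfold cliqueCount
      rw [card_eq_one]
      refine ⟨e, ?_⟩
      ext S
      simp only [mem_filter, SimpleGraph.mem_cliqueFinset_iff, mem_singleton]
      constructor
      · rintro ⟨h1, h2⟩
        exact (eq_of_subset_of_card_le h2 (by rw [h1.card_eq, he.card_eq])).symm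
      · rintro rfl
        exact ⟨he, subset_rfl⟩
    simp only [zero_add, this]
    norm_num
    exact hδ
  | succ m ih =>
    push_cast at hm
    obtain ⟨ih1, ih2⟩ := ih (by nlinarith)
    obtain ⟨s1, s2⟩ := cliqueCount_step G δ hdeg (m + 2) (by omega) e he.card_eq
    have e1 : ((m + 1).factorial * cliqueCount G (m + 1 + 2) e : ℝ)
        = m.factorial * (((m + 2 : ℕ) : ℝ) - 1) * cliqueCount G (m + 2 + 1) e := by
      rw [Nat.factorial_succ]
      have : m + 1 + 2 = m + 2 + 1 := by omega
      rw [this]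
      push_cast; ring
    have hf : (0 : ℝ) ≤ m.factorial := by positivity
    set n : ℝ := (Fintype.card α : ℝ)
    have hn : 0 ≤ n := by positivity
    have hm0 : (0 : ℝ) ≤ m := by positivity
    rw [e1, mul_assoc]
    constructor
    · refine le_trans ?_ (mul_le_mul_of_nonneg_left s1 hf)
      have hq : 0 ≤ n * (1 - ((m + 2 : ℕ) : ℝ) * δ) := by
        apply mul_nonneg hn; push_cast; nlinarith
      have := mul_le_mul_of_nonneg_left ih1 hq
      refine le_trans ?_ (le_trans this (le_of_eq (by ring)))
      push_cast
      have : n * (1 - (m + 2) * δ) * (n ^ m * (1 - (m + 2) ^ 2 * δ))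
        = n ^ (m + 1) * ((1 - (m + 2) * δ) * (1 - (m + 2) ^ 2 * δ)) := by ring
      rw [this]
      apply mul_le_mul_of_nonneg_left _ (by positivity)
      have : 0 ≤ (m + 2 : ℝ) ^ 3 * δ ^ 2 := by positivity
      nlinarith [mul_nonneg hm0 hδ]
    · refine le_trans (mul_le_mul_of_nonneg_left s2 hf) ?_
      have := mul_le_mul_of_nonneg_left ih2 hn
      refine le_trans (le_of_eq (by ring)) (le_trans this (le_of_eq (by ring)))

open Classical in
lemma exists_psi_of_copies {α β ι : Type*} [Finite α] [Fintype ι] (G : SimpleGraph α)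
    (H : SimpleGraph β) (φ : ι → SimpleGraph.Copy H G) (w : ι → ℝ) (hw : ∀ i, 0 ≤ w i)
    (h : ∀ e ∈ G.edgeSet, ∑ i, (if e ∈ (φ i).toSubgraph.edgeSet then w i else 0) = 1) :
    ∃ ψ : G.Subgraph → ℝ, IsFracDecomp G H ψ := by
  have hcopy : ∀ i, (φ i).toSubgraph.IsCopy H := fun i => ⟨(φ i).isoToSubgraph.symm⟩
  have : Fintype G.Subgraph := Fintype.ofFinite _
  refine ⟨fun c => ∑ i, if (φ i).toSubgraph = c then w i else 0, ?_, ?_, ?_⟩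
  · intro c
    exact sum_nonneg fun i _ => by split_ifs; exacts [hw i, le_rfl]
  · intro c hc
    apply sum_eq_zero
    intro i _
    rw [if_neg]
    rintro rfl
    exact hc (hcopy i)
  · intro e he
    rw [finsum_mem_eq_toFinset_sum, sum_comm, ← h e he]
    apply sum_congr rfl
    intro i _
    rw [sum_ite_eq]
    simp [hcopy i]

open Classical in
lemma exists_psi_of_cliques {α : Type*} [Fintype α] (G : SimpleGraph α) (k : ℕ)
    (H : SimpleGraph (Fin k)) (hH : H.edgeSet.Nonempty) (W : Finset α → ℝ)
    (hW : ∀ S ∈ G.cliqueFinset k, 0 ≤ W S)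
    (h : ∀ x y, G.Adj x y →
      ∑ S ∈ (G.cliqueFinset k).filter (fun S => {x, y} ⊆ S), W S = 1) :
    ∃ ψ : G.Subgraph → ℝ, IsFracDecomp G H ψ := by
  obtain ⟨e0, he0⟩ := hH
  induction e0 with | _ a0 b0 =>
  rw [SimpleGraph.mem_edgeSet] at he0
  have hab0 := he0.ne
  set N := (univ.filter (fun σ : Equiv.Perm (Fin k) => H.Adj (σ a0) (σ b0))).card with hN
  have hNpos : 0 < N := card_pos.mpr ⟨1, by simp [he0]⟩
  have hNpos' : (0 : ℝ) < N := by exact_mod_cast hNpos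
  have htrans : ∀ a b : Fin k, a ≠ b →
      (univ.filter (fun σ : Equiv.Perm (Fin k) => H.Adj (σ a) (σ b))).card = N := by
    intro a b hab
    obtain ⟨τ, hτa, hτb⟩ : ∃ τ : Equiv.Perm (Fin k), τ a0 = a ∧ τ b0 = b := by
      refine ⟨(Equiv.swap a0 a).trans (Equiv.swap (Equiv.swap a0 a b0) b), ?_, ?_⟩
      · simp only [Equiv.trans_apply, Equiv.swap_apply_left]
        apply Equiv.swap_apply_of_ne_of_ne _ hab
        intro h
        have : Equiv.swap a0 a a0 = Equiv.swap a0 a b0 := by rw [← h, Equiv.swap_apply_left]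
        exact hab0 ((Equiv.swap a0 a).injective this)
      · simp
    apply card_equiv (Equiv.mulRight τ)
    intro σ
    simp [hτa, hτb]
  have hcl : ∀ S : {S // S ∈ G.cliqueFinset k}, G.IsNClique k S.1 := fun S =>
    (SimpleGraph.mem_cliqueFinset_iff).mp S.2
  let b : ∀ S : {S // S ∈ G.cliqueFinset k}, S.1 ≃ Fin k := fun S =>
    S.1.equivFinOfCardEq (hcl S).card_eq
  let φ : {S // S ∈ G.cliqueFinset k} × Equiv.Perm (Fin k) → SimpleGraph.Copy H G := fun p =>
    ⟨⟨fun i => ((b p.1).symm (p.2.symm i)).1, by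
      intro i j hij
      apply (hcl p.1).isClique
      · exact ((b p.1).symm _).2
      · exact ((b p.1).symm _).2
      · intro h
        exact hij.ne (p.2.symm.injective ((b p.1).symm.injective (Subtype.ext h)))⟩, by
      intro i j h
      exact (p.2.symm.injective ((b p.1).symm.injective (Subtype.ext h)))⟩
  apply exists_psi_of_copies G H φ (fun p => W p.1 / N)
    (fun p => div_nonneg (hW _ p.1.2) hNpos'.le)
  intro e he
  induction e with | _ x y =>
  rw [SimpleGraph.mem_edgeSet] at he
  rw [Fintype.sum_prod_type, ← h x y he, sum_filter, ← sum_coe_sort (G.cliqueFinset k)]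
  apply sum_congr rfl
  intro S _
  have hmem : ∀ σ, s(x, y) ∈ (φ (S, σ)).toSubgraph.edgeSet ↔
      ∃ i j, H.Adj i j ∧ ((b S).symm (σ.symm i)).1 = x ∧ ((b S).symm (σ.symm j)).1 = y := by
    intro σ
    rw [SimpleGraph.Subgraph.mem_edgeSet]
    simp [φ, SimpleGraph.Copy.toSubgraph, Relation.Map]
  simp only [hmem]
  split_ifs with hxy
  · have hx : x ∈ S.1 := hxy (by simp)
    have hy : y ∈ S.1 := hxy (by simp)
    have : ∀ σ : Equiv.Perm (Fin k), (∃ i j, H.Adj i j ∧ ((b S).symm (σ.symm i)).1 = x ∧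
        ((b S).symm (σ.symm j)).1 = y) ↔ H.Adj (σ (b S ⟨x, hx⟩)) (σ (b S ⟨y, hy⟩)) := by
      intro σ
      constructor
      · rintro ⟨i, j, hij, rfl, rfl⟩
        simpa using hij
      · intro h
        exact ⟨_, _, h, by simp, by simp⟩
    simp only [this]
    rw [← sum_filter, sum_const, htrans, nsmul_eq_mul]
    · field_simp
    · intro h
      have := (b S).injective h
      exact he.ne (congrArg Subtype.val this)
  · apply sum_eq_zero
    intro σ _
    rw [if_neg]
    rintro ⟨i, j, hij, rfl, rfl⟩
    apply hxy
    intro z hz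
    simp only [mem_insert, mem_singleton] at hz
    rcases hz with rfl | rfl <;> exact ((b S).symm _).2

open Classical in
lemma exists_clique_weights {α : Type*} [Fintype α] (G : SimpleGraph α) (k : ℕ) (hk : 3 ≤ k)
    (hn : 0 < Fintype.card α) (δ : ℝ) (hδ : δ = 1 / (9 * (k : ℝ) ^ 10))
    (hdeg : ∀ v, (((univ : Finset α).filter (fun u => ¬ G.Adj u v)).card : ℝ)
      ≤ δ * Fintype.card α) :
    ∃ W : Finset α → ℝ, (∀ S ∈ G.cliqueFinset k, 0 ≤ W S) ∧
      ∀ f, G.IsNClique 2 f → ∑ S ∈ (G.cliqueFinset k).filter (fun S => f ⊆ S), W S = 1 := by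
  have hk' : (3 : ℝ) ≤ k := by exact_mod_cast hk
  have hδ0 : 0 ≤ δ := by rw [hδ]; positivity
  have hk2 : (9 : ℝ) ≤ (k : ℝ) ^ 2 := by nlinarith
  have hk6 : 9 * (k : ℝ) ^ 6 * δ ≤ 1 / 81 := by
    rw [hδ]
    have : 9 * (k : ℝ) ^ 6 * (1 / (9 * (k : ℝ) ^ 10)) = 1 / (k : ℝ) ^ 4 := by
      field_simp
    rw [this]
    apply one_div_le_one_div_of_le (by norm_num)
    nlinarith
  have hk6' : (k : ℝ) ^ 2 * 81 ≤ (k : ℝ) ^ 6 := by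
    have : (81 : ℝ) ≤ (k : ℝ) ^ 4 := by nlinarith
    nlinarith
  have hk2δ : (k : ℝ) ^ 2 * δ ≤ 1 / 2 := by
    nlinarith [mul_le_mul_of_nonneg_right hk6' hδ0]
  have hkδ : ((k : ℝ) + 1) * δ ≤ 1 / 2 :=
    le_trans (mul_le_mul_of_nonneg_right (by nlinarith) hδ0) hk2δ
  set n : ℝ := (Fintype.card α : ℝ) with hndef
  have hn0 : 0 < n := by rw [hndef]; exact_mod_cast hn
  set t : ℝ := (k - 2).factorial / n ^ (k - 2) with ht
  have ht0 : 0 < t := by positivity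
  have hMk : ∀ e, G.IsNClique 2 e → 1 - (k : ℝ) ^ 2 * δ ≤ t * cliqueCount G k e ∧
      t * cliqueCount G k e ≤ 1 := by
    intro e he
    have hc : ((k - 2 : ℕ) : ℝ) + 2 = k := by
      rw [Nat.cast_sub (by omega)]; norm_num
    have := cliqueCount_bounds G δ hδ0 hdeg e he (k - 2) (by rw [hc]; nlinarith)
    rw [hc, show k - 2 + 2 = k by omega, ← hndef] at this
    have hp : 0 < n ^ (k - 2) := by positivity
    rw [ht, div_mul_eq_mul_div, le_div_iff₀ hp, div_le_one hp]
    exact ⟨by linarith [this.1], this.2⟩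
  have hMk2 : ∀ e, G.IsNClique 2 e →
      n ^ 2 * cliqueCount G k e ≤ 4 * (k : ℝ) ^ 2 * cliqueCount G (k + 2) e := by
    intro e he
    have s1 := (cliqueCount_step G δ hdeg k (by omega) e he.card_eq).1
    have s2 := (cliqueCount_step G δ hdeg (k + 1) (by omega) e he.card_eq).1
    rw [← hndef] at s1 s2
    push_cast at s2
    have m0 : (0 : ℝ) ≤ cliqueCount G k e := by positivity
    have m1 : (0 : ℝ) ≤ cliqueCount G (k + 1) e := by positivity
    have m2 : (0 : ℝ) ≤ cliqueCount G (k + 2) e := by positivity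
    have a1 : n * cliqueCount G k e ≤ 2 * (k * cliqueCount G (k + 1) e) := by
      have : n * cliqueCount G k e * (1 / 2) ≤ n * cliqueCount G k e * (1 - k * δ) :=
        mul_le_mul_of_nonneg_left (by nlinarith) (by positivity)
      nlinarith
    have a2 : n * cliqueCount G (k + 1) e ≤ 2 * (k * cliqueCount G (k + 2) e) := by
      have : n * cliqueCount G (k + 1) e * (1 / 2)
          ≤ n * cliqueCount G (k + 1) e * (1 - (k + 1) * δ) :=
        mul_le_mul_of_nonneg_left (by nlinarith) (by positivity)
      have s2' : n * (1 - (k + 1) * δ) * cliqueCount G (k + 1) e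
        ≤ (k + 1 - 1) * cliqueCount G (k + 2) e := s2
      nlinarith
    calc n ^ 2 * cliqueCount G k e = n * (n * cliqueCount G k e) := by ring
      _ ≤ n * (2 * (k * cliqueCount G (k + 1) e)) := mul_le_mul_of_nonneg_left a1 hn0.le
      _ = 2 * k * (n * cliqueCount G (k + 1) e) := by ring
      _ ≤ 2 * k * (2 * (k * cliqueCount G (k + 2) e)) :=
          mul_le_mul_of_nonneg_left a2 (by positivity)
      _ = _ := by ring
  have hMkpos : ∀ e, G.IsNClique 2 e → 0 < (cliqueCount G k e : ℝ) := by
    intro e he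
    have := (hMk e he).1
    by_contra h
    have h0 : (cliqueCount G k e : ℝ) = 0 := le_antisymm (not_lt.mp h) (by positivity)
    rw [h0] at this
    linarith
  have hMk2pos : ∀ e, G.IsNClique 2 e → 0 < (cliqueCount G (k + 2) e : ℝ) := by
    intro e he
    have h1 := hMk2 e he
    have h2 : 0 < n ^ 2 * cliqueCount G k e := mul_pos (by positivity) (hMkpos e he)
    by_contra h
    have h0 : (cliqueCount G (k + 2) e : ℝ) = 0 := le_antisymm (not_lt.mp h) (by positivity)
    rw [h0] at h1
    linarith
  let c : Finset α → ℝ := fun e => (1 - t * cliqueCount G k e) / cliqueCount G (k + 2) e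
  have hc : ∀ e, G.IsNClique 2 e → |c e| ≤ 8 * (k : ℝ) ^ 4 * δ * t / n ^ 2 := by
    intro e he
    have h1 := hMk e he
    have h2 := hMk2 e he
    have h3 := hMkpos e he
    have h4 := hMk2pos e he
    have hnn : 0 ≤ c e := div_nonneg (by linarith) h4.le
    rw [abs_of_nonneg hnn]
    simp only [c]
    rw [div_le_div_iff₀ h4 (by positivity)]
    have h5 : n ^ 2 ≤ 8 * (k : ℝ) ^ 2 * t * cliqueCount G (k + 2) e := by
      have := mul_le_mul_of_nonneg_left h2 ht0.le
      have h6 : n ^ 2 * (1 / 2) ≤ n ^ 2 * (t * cliqueCount G k e) :=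
        mul_le_mul_of_nonneg_left (by linarith) (by positivity)
      linarith
    calc (1 - t * cliqueCount G k e) * n ^ 2 ≤ ((k : ℝ) ^ 2 * δ) * n ^ 2 :=
          mul_le_mul_of_nonneg_right (by linarith) (by positivity)
      _ ≤ ((k : ℝ) ^ 2 * δ) * (8 * (k : ℝ) ^ 2 * t * cliqueCount G (k + 2) e) :=
          mul_le_mul_of_nonneg_left h5 (by positivity)
      _ = _ := by ring
  have hsub : ∀ Q ∈ G.cliqueFinset (k + 2), ∀ e ∈ Q.powersetCard 2, G.IsNClique 2 e := by
    intro Q hQ e he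
    rw [SimpleGraph.mem_cliqueFinset_iff] at hQ
    rw [mem_powersetCard] at he
    exact ⟨hQ.isClique.subset (by exact_mod_cast he.1), he.2⟩
  refine ⟨fun S => t + ∑ Q ∈ (G.cliqueFinset (k + 2)).filter (fun Q => S ⊆ Q),
    ∑ e ∈ Q.powersetCard 2, c e * gad k e S, ?_, ?_⟩
  · intro S hS
    rw [SimpleGraph.mem_cliqueFinset_iff] at hS
    have hcardQ : (((G.cliqueFinset (k + 2)).filter (fun Q => S ⊆ Q)).card : ℝ) ≤ n ^ 2 := by
      have : ((G.cliqueFinset (k + 2)).filter (fun Q => S ⊆ Q)).card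
          ≤ ((univ : Finset α).powersetCard 2).card := by
        apply card_le_card_of_injOn (fun Q => Q \ S)
        · intro Q hQ
          simp only [coe_filter, SimpleGraph.mem_cliqueFinset_iff, Set.mem_ofPred_eq] at hQ
          simp only [mem_coe, mem_powersetCard, subset_univ, true_and]
          rw [card_sdiff_of_subset hQ.2, hQ.1.card_eq, hS.card_eq]; omega
        · intro Q hQ Q' hQ' h
          simp only [coe_filter, Set.mem_ofPred_eq] at hQ hQ'
          simp only at h
          rw [← sdiff_union_of_subset hQ.2, h, sdiff_union_of_subset hQ'.2]
      rw [card_powersetCard, card_univ] at this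
      have h2 := this.trans (Nat.choose_le_pow (Fintype.card α) 2)
      rw [hndef]
      exact_mod_cast h2
    have hbound : |∑ Q ∈ (G.cliqueFinset (k + 2)).filter (fun Q => S ⊆ Q),
        ∑ e ∈ Q.powersetCard 2, c e * gad k e S| ≤ t := by
      set B := 8 * (k : ℝ) ^ 4 * δ * t / n ^ 2 with hB
      have hB0 : 0 ≤ B := by positivity
      calc _ ≤ ∑ Q ∈ (G.cliqueFinset (k + 2)).filter (fun Q => S ⊆ Q),
            |∑ e ∈ Q.powersetCard 2, c e * gad k e S| := abs_sum_le_sum_abs _ _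
        _ ≤ ∑ Q ∈ (G.cliqueFinset (k + 2)).filter (fun Q => S ⊆ Q),
            (((k + 2).choose 2 : ℕ) : ℝ) * B := by
            apply sum_le_sum
            intro Q hQ
            have hQ' := (mem_filter.mp hQ).1
            refine (abs_sum_le_sum_abs _ _).trans ?_
            have hcard : (Q.powersetCard 2).card = (k + 2).choose 2 := by
              rw [card_powersetCard, (SimpleGraph.mem_cliqueFinset_iff.mp hQ').card_eq]
            rw [← hcard, ← nsmul_eq_mul]
            apply sum_le_card_nsmul
            intro e he
            rw [abs_mul]
            have hg := abs_gad_le k hk e S (mem_powersetCard.mp he).2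
            have hce := hc e (hsub Q hQ' e he)
            calc |c e| * |gad k e S| ≤ B * 1 :=
                  mul_le_mul hce hg (abs_nonneg _) hB0
              _ = B := mul_one _
        _ = (((G.cliqueFinset (k + 2)).filter (fun Q => S ⊆ Q)).card : ℝ)
            * ((((k + 2).choose 2 : ℕ) : ℝ) * B) := by rw [sum_const, nsmul_eq_mul]
        _ ≤ n ^ 2 * ((((k + 2).choose 2 : ℕ) : ℝ) * B) :=
            mul_le_mul_of_nonneg_right hcardQ (by positivity)
        _ = ((((k + 2).choose 2 : ℕ) : ℝ)) * (8 * (k : ℝ) ^ 4 * δ) * t := by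
            rw [hB]; field_simp
        _ ≤ 1 * t := by
            apply mul_le_mul_of_nonneg_right _ ht0.le
            rw [Nat.cast_choose_two]
            push_cast
            have : ((k : ℝ) + 2) * (k + 2 - 1) / 2 ≤ 2 * (k : ℝ) ^ 2 := by nlinarith
            calc _ ≤ 2 * (k : ℝ) ^ 2 * (8 * (k : ℝ) ^ 4 * δ) :=
                  mul_le_mul_of_nonneg_right this (by positivity)
              _ = 16 / 9 * (9 * (k : ℝ) ^ 6 * δ) := by ring
              _ ≤ 1 := by linarith
        _ = t := one_mul t
    have := (abs_le.mp hbound).1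
    linarith
  · intro f hf
    rw [sum_add_distrib, sum_const, nsmul_eq_mul]
    have hswap : ∑ S ∈ (G.cliqueFinset k).filter (fun S => f ⊆ S),
        ∑ Q ∈ (G.cliqueFinset (k + 2)).filter (fun Q => S ⊆ Q),
          ∑ e ∈ Q.powersetCard 2, c e * gad k e S
        = ∑ Q ∈ (G.cliqueFinset (k + 2)).filter (fun Q => f ⊆ Q),
          ∑ S ∈ (Q.powersetCard k).filter (fun S => f ⊆ S),
          ∑ e ∈ Q.powersetCard 2, c e * gad k e S := by
      apply sum_comm'
      intro S Q
      simp only [mem_filter, SimpleGraph.mem_cliqueFinset_iff, mem_powersetCard]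
      constructor
      · rintro ⟨⟨h1, h2⟩, h3, h4⟩
        exact ⟨⟨⟨h4, h1.card_eq⟩, h2⟩, h3, h2.trans h4⟩
      · rintro ⟨⟨⟨h4, h1⟩, h2⟩, h3, h5⟩
        exact ⟨⟨⟨h3.isClique.subset (by exact_mod_cast h4), h1⟩, h2⟩, h3, h4⟩
    have hin : ∀ Q ∈ (G.cliqueFinset (k + 2)).filter (fun Q => f ⊆ Q),
          ∑ S ∈ (Q.powersetCard k).filter (fun S => f ⊆ S),
          ∑ e ∈ Q.powersetCard 2, c e * gad k e S = c f := by
      intro Q hQ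
      rw [mem_filter, SimpleGraph.mem_cliqueFinset_iff] at hQ
      rw [sum_comm]
      have : ∀ e ∈ Q.powersetCard 2, ∑ S ∈ (Q.powersetCard k).filter (fun S => f ⊆ S),
          c e * gad k e S = if e = f then c e else 0 := by
        intro e he
        rw [mem_powersetCard] at he
        rw [← mul_sum, gad_sum k (by omega) Q e f hQ.1.card_eq he.1 hQ.2 he.2 hf.card_eq]
        simp
      rw [sum_congr rfl this, sum_ite_eq', if_pos]
      exact mem_powersetCard.mpr ⟨hQ.2, hf.card_eq⟩
    rw [hswap, sum_congr rfl hin, sum_const, nsmul_eq_mul]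
    change (cliqueCount G k f : ℝ) * t + (cliqueCount G (k + 2) f : ℝ) * c f = 1
    have := (hMk2pos f hf).ne'
    simp only [c]
    field_simp
    ring

/-- For every integer `k ≥ 3`, every graph `H` with `k` vertices and at least one edge, and every
`ε > 0`, there exists `n₀` such that every graph `G` on `n ≥ n₀` vertices with minimum degree at
least `n·(1 - 1/(9k^10) + ε)` has a fractional `H`-decomposition. -/
theorem frac_h_decomposition_of_min_degree (k : ℕ) (hk : 3 ≤ k) (H : SimpleGraph (Fin k))
    (hH : H.edgeSet.Nonempty) (ε : ℝ) (hε : 0 < ε) :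
    ∃ n₀ : ℕ, ∀ n : ℕ, n₀ ≤ n → ∀ G : SimpleGraph (Fin n),
      (∀ v, (n : ℝ) * (1 - 1 / (9 * (k : ℝ) ^ 10) + ε) ≤ ((G.neighborSet v).ncard : ℝ)) →
      ∃ ψ : G.Subgraph → ℝ, IsFracDecomp G H ψ := by
  classical
  refine ⟨1, fun n hn G hG => ?_⟩
  obtain ⟨W, hW0, hW1⟩ := exists_clique_weights G k hk (by rw [Fintype.card_fin]; omega) _ rfl (by
    intro v
    have h1 := hG v
    have h2 : (G.neighborSet v).ncard
        = ((univ : Finset (Fin n)).filter (fun u => G.Adj u v)).card := by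
      rw [← Set.ncard_coe_finset]
      congr 1
      ext u
      simp [G.adj_comm]
    have h3 := card_filter_add_card_filter_not (s := (univ : Finset (Fin n)))
      (fun u => G.Adj u v)
    rw [card_univ, Fintype.card_fin, ← h2] at h3
    have h4 : ((G.neighborSet v).ncard : ℝ)
      + (((univ : Finset (Fin n)).filter (fun u => ¬ G.Adj u v)).card : ℝ) = n := by
      exact_mod_cast h3
    have h5 : 0 ≤ (n : ℝ) * ε := by positivity
    rw [Fintype.card_fin]
    convert (by linarith : (((univ : Finset (Fin n)).filter (fun u => ¬ G.Adj u v)).card : ℝ)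
      ≤ 1 / (9 * (k : ℝ) ^ 10) * n))
  apply exists_psi_of_cliques G k H hH W (by convert hW0)
  intro x y hxy
  convert hW1 {x, y} (by
    refine ⟨?_, card_pair hxy.ne⟩
    rw [coe_pair, SimpleGraph.isClique_pair]
    exact fun _ => hxy)
end

section
/- For every fixed graph H with at least one edge and every ε > 0 there exists n₀ such that every graph G on n ≥ n₀ vertices satisfies ν*_H(G) - ν_H(G) ≤ ε·n². (Theorem of Haxell and Rödl.) -/
/-- A fractional `H`-packing of `G`: a function `ψ` from the copies of `H` in `G` to `[0,1]`
such that for each edge `e` of `G`, the sum of `ψ` over the copies of `H` containing `e`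
is at most `1`. -/
def IsFracPacking {α β : Type*} (G : SimpleGraph α) (H : SimpleGraph β)
    (ψ : G.Subgraph → ℝ) : Prop :=
  (∀ c, 0 ≤ ψ c ∧ ψ c ≤ 1) ∧ (∀ c, ¬ c.IsCopy H → ψ c = 0) ∧
  ∀ e ∈ G.edgeSet, (∑ᶠ c ∈ {c : G.Subgraph | c.IsCopy H ∧ e ∈ c.edgeSet}, ψ c) ≤ 1

namespace HR
open Finset

/-- weighted degree -/
noncomputable def wdeg {ι V : Type*} [Fintype ι] [DecidableEq V] (e : ι → Finset V) (w : ι → ℝ)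
    (v : V) : ℝ := ∑ c, if v ∈ e c then w c else 0

lemma trim {ι V : Type*} [Fintype ι] [DecidableEq V] [Fintype V]
    (e : ι → Finset V) (w : ι → ℝ) (hw : ∀ c, 0 ≤ w c) :
    ∃ w' : ι → ℝ, (∀ c, 0 ≤ w' c) ∧ (∀ c, w' c ≤ w c) ∧ (∀ v, wdeg e w' v ≤ 1) ∧
      ∑ c, w c - ∑ v, max 0 (wdeg e w v - 1) ≤ ∑ c, w' c := by
  have hD : ∀ v, 0 ≤ wdeg e w v := fun v => Finset.sum_nonneg fun c _ => by
    split_ifs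
    · exact hw c
    · exact le_rfl
  set g : V → ℝ := fun v => max 0 (1 - 1 / wdeg e w v) with hg
  have hg0 : ∀ v, 0 ≤ g v := fun v => le_max_left _ _
  have hg1 : ∀ v, g v ≤ 1 := fun v => max_le zero_le_one (by
    have : 0 ≤ 1 / wdeg e w v := by have := hD v; positivity
    linarith)
  refine ⟨fun c => w c * max 0 (1 - ∑ v ∈ e c, g v), fun c => mul_nonneg (hw c) (le_max_left _ _),
    fun c => ?_, fun v => ?_, ?_⟩
  · have : max 0 (1 - ∑ v ∈ e c, g v) ≤ 1 := max_le zero_le_one (by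
      have := Finset.sum_nonneg (s := e c) fun v _ => hg0 v
      linarith)
    nlinarith [hw c]
  · have h1 : wdeg e (fun c => w c * max 0 (1 - ∑ v ∈ e c, g v)) v ≤ wdeg e w v * (1 - g v) := by
      unfold wdeg
      rw [Finset.sum_mul]
      refine Finset.sum_le_sum fun c _ => ?_
      split_ifs with h
      · refine mul_le_mul_of_nonneg_left (max_le (by linarith [hg1 v]) ?_) (hw c)
        have := Finset.single_le_sum (f := g) (s := e c) (fun v _ => hg0 v) h
        linarith
      · simp
    refine h1.trans ?_
    by_cases h : wdeg e w v ≤ 1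
    · nlinarith [hD v, hg0 v]
    · push Not at h
      have h2 : 1 - 1 / wdeg e w v ≤ g v := le_max_right _ _
      calc wdeg e w v * (1 - g v) ≤ wdeg e w v * (1 / wdeg e w v) :=
            mul_le_mul_of_nonneg_left (by linarith) (hD v)
        _ = 1 := by field_simp
  · have h1 : ∀ c, w c - w c * max 0 (1 - ∑ v ∈ e c, g v) ≤ ∑ v, if v ∈ e c then w c * g v else 0 := by
      intro c
      have : ∑ v, (if v ∈ e c then w c * g v else 0) = w c * ∑ v ∈ e c, g v := by
        rw [Finset.mul_sum, ← Finset.sum_filter]; simp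
      rw [this]
      nlinarith [hw c, le_max_right 0 (1 - ∑ v ∈ e c, g v)]
    have h2 : ∑ c, (w c - w c * max 0 (1 - ∑ v ∈ e c, g v)) ≤ ∑ v, max 0 (wdeg e w v - 1) := by
      refine (Finset.sum_le_sum fun c _ => h1 c).trans ?_
      rw [Finset.sum_comm]
      refine Finset.sum_le_sum fun v _ => ?_
      have : ∑ c, (if v ∈ e c then w c * g v else 0) = wdeg e w v * g v := by
        unfold wdeg; rw [Finset.sum_mul]; exact Finset.sum_congr rfl fun c _ => by split_ifs <;> simp
      rw [this]
      rcases (hD v).eq_or_lt with h | h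
      · rw [← h]; simp
      · rw [hg]
        simp only
        rw [mul_max_of_nonneg _ _ h.le, mul_zero]
        apply max_le_max le_rfl
        rw [mul_sub, mul_one_div_cancel h.ne', mul_one]
    rw [Finset.sum_sub_distrib] at h2
    linarith

/-! expectation -/
section ex
variable {κ : Type*} [Fintype κ] [DecidableEq κ]

noncomputable def wt (π : κ → ℝ) (X : Finset κ) : ℝ := (∏ i ∈ X, π i) * ∏ i ∈ univ \ X, (1 - π i)

noncomputable def Ex (π : κ → ℝ) (f : Finset κ → ℝ) : ℝ := ∑ X : Finset κ, wt π X * f X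

lemma Ex_add (π : κ → ℝ) (f g : Finset κ → ℝ) : Ex π (fun X => f X + g X) = Ex π f + Ex π g := by
  simp [Ex, mul_add, Finset.sum_add_distrib]

lemma Ex_sub (π : κ → ℝ) (f g : Finset κ → ℝ) : Ex π (fun X => f X - g X) = Ex π f - Ex π g := by
  simp [Ex, mul_sub, Finset.sum_sub_distrib]

lemma Ex_const_mul (π : κ → ℝ) (a : ℝ) (f : Finset κ → ℝ) :
    Ex π (fun X => a * f X) = a * Ex π f := by
  simp only [Ex, Finset.mul_sum]; exact Finset.sum_congr rfl fun X _ => by ring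

lemma Ex_sum {α : Type*} (π : κ → ℝ) (s : Finset α) (f : α → Finset κ → ℝ) :
    Ex π (fun X => ∑ a ∈ s, f a X) = ∑ a ∈ s, Ex π (f a) := by
  simp only [Ex, Finset.mul_sum]; exact Finset.sum_comm

lemma wt_nonneg {π : κ → ℝ} (h0 : ∀ i, 0 ≤ π i) (h1 : ∀ i, π i ≤ 1) (X : Finset κ) :
    0 ≤ wt π X :=
  mul_nonneg (Finset.prod_nonneg fun i _ => h0 i) (Finset.prod_nonneg fun i _ => by linarith [h1 i])

lemma Ex_mono {π : κ → ℝ} (h0 : ∀ i, 0 ≤ π i) (h1 : ∀ i, π i ≤ 1) {f g : Finset κ → ℝ}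
    (h : ∀ X, f X ≤ g X) : Ex π f ≤ Ex π g :=
  Finset.sum_le_sum fun X _ => mul_le_mul_of_nonneg_left (h X) (wt_nonneg h0 h1 X)

lemma Ex_disj (π : κ → ℝ) (A : Finset κ) :
    Ex π (fun X => if Disjoint X A then 1 else 0) = ∏ i ∈ A, (1 - π i) := by
  have h := Finset.prod_add (fun i => if i ∈ A then 0 else π i) (fun i => 1 - π i) (univ : Finset κ)
  have h2 : ∏ i, ((if i ∈ A then 0 else π i) + (1 - π i)) = ∏ i ∈ A, (1 - π i) := by
    rw [← Finset.prod_subset (Finset.subset_univ A)]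
    · exact Finset.prod_congr rfl fun i hi => by simp [hi]
    · intro i _ hi; simp [hi]
  rw [← h2, h, Finset.powerset_univ]
  refine Finset.sum_congr rfl fun X _ => ?_
  unfold wt
  change _ * (if Disjoint X A then (1 : ℝ) else 0) = _
  split_ifs with hd
  · rw [mul_one]
    congr 1
    exact Finset.prod_congr rfl fun i hi => by
      rw [if_neg]; exact Finset.disjoint_left.mp hd hi
  · rw [Finset.not_disjoint_iff] at hd
    obtain ⟨i, hi, hA⟩ := hd
    have hz : (∏ i ∈ X, if i ∈ A then 0 else π i) = 0 := Finset.prod_eq_zero hi (if_pos hA)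
    rw [hz]; simp

lemma Ex_const (π : κ → ℝ) (a : ℝ) : Ex π (fun _ => a) = a := by
  have := Ex_disj π ∅
  simp only [Finset.disjoint_empty_right, if_true, Finset.prod_empty] at this
  have h2 := Ex_const_mul π a (fun _ => 1)
  rw [this] at h2
  simpa using h2

lemma Ex_mem_disj (π : κ → ℝ) (A : Finset κ) (k : κ) (hk : k ∉ A) :
    Ex π (fun X => if k ∈ X ∧ Disjoint X A then 1 else 0) = π k * ∏ i ∈ A, (1 - π i) := by
  have h1 := Ex_disj π A
  have h2 := Ex_disj π (insert k A)
  rw [Finset.prod_insert hk] at h2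
  have h3 := Ex_sub π (fun X => if Disjoint X A then 1 else 0)
    (fun X => if Disjoint X (insert k A) then 1 else 0)
  rw [h1, h2] at h3
  have : π k * ∏ i ∈ A, (1 - π i) = ∏ i ∈ A, (1 - π i) - (1 - π k) * ∏ i ∈ A, (1 - π i) := by ring
  rw [this, ← h3]
  congr 1
  funext X
  simp only [Finset.disjoint_insert_right]
  by_cases ha : k ∈ X <;> by_cases hb : Disjoint X A <;> simp [ha, hb]

lemma Ex_exists {π : κ → ℝ} (h0 : ∀ i, 0 ≤ π i) (h1 : ∀ i, π i ≤ 1) (f : Finset κ → ℝ) :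
    ∃ X, Ex π f ≤ f X := by
  by_contra! h
  obtain ⟨X0, _, hX0⟩ := Finset.exists_max_image (univ : Finset (Finset κ)) f ⟨∅, mem_univ _⟩
  have := Ex_mono h0 h1 (f := f) (g := fun _ => f X0) (fun X => hX0 X (mem_univ _))
  rw [Ex_const] at this
  linarith [h X0]

end ex

lemma prod_one_sub_ge {α : Type*} [DecidableEq α] (s : Finset α) (π : α → ℝ) (h0 : ∀ i, 0 ≤ π i)
    (h1 : ∀ i, π i ≤ 1) : 1 - ∑ i ∈ s, π i ≤ ∏ i ∈ s, (1 - π i) := by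
  induction s using Finset.induction_on with
  | empty => simp
  | insert a s ha ih =>
    rw [Finset.sum_insert ha, Finset.prod_insert ha]
    have h2 : ∏ i ∈ s, (1 - π i) ≤ 1 := Finset.prod_le_one (fun i _ => by linarith [h1 i])
      (fun i _ => by linarith [h0 i])
    nlinarith [h0 a, h1 a]

end HR

namespace HR
open Finset

structure Sys {ι V : Type*} [Fintype ι] [DecidableEq V] (e : ι → Finset V) (r : ℕ) (δ : ℝ)
    (S : Finset V) (w : ι → ℝ) : Prop where
  nonneg : ∀ c, 0 ≤ w c
  supp : ∀ c, w c ≠ 0 → e c ⊆ S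
  card : ∀ c, w c ≠ 0 → (e c).card = r
  deg : ∀ v, wdeg e w v ≤ 1
  codeg : ∀ u v, u ≠ v → (∑ c, if u ∈ e c ∧ v ∈ e c then w c else 0) ≤ δ

section nibble
variable {ι V : Type*} [Fintype ι] [DecidableEq ι] [Fintype V] [DecidableEq V]

/-- killers of a vertex -/
def Kl (e : ι → Finset V) (v : V) : Finset (ι ⊕ V) := (univ.filter fun c => v ∈ e c).disjSum {v}

/-- coin probabilities -/
noncomputable def pr (e : ι → Finset V) (w : ι → ℝ) (η : ℝ) : ι ⊕ V → ℝ :=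
  Sum.elim (fun c => η * w c)
    (fun v => 1 - (1 - η) / ∏ c ∈ univ.filter (fun c => v ∈ e c), (1 - η * w c))

variable {e : ι → Finset V} {r : ℕ} {δ : ℝ} {S : Finset V} {w : ι → ℝ} {η : ℝ}

lemma Sys.w_le_one (h : Sys e r δ S w) (hr : 1 ≤ r) (c : ι) : w c ≤ 1 := by
  by_cases hc : w c = 0
  · rw [hc]; exact zero_le_one
  · have h1 := h.card c hc
    obtain ⟨v, hv⟩ : (e c).Nonempty := by rw [← Finset.card_pos]; omega
    refine le_trans ?_ (h.deg v)
    have := Finset.single_le_sum (f := fun c => if v ∈ e c then w c else 0) (s := univ)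
      (fun c _ => by split_ifs; exacts [h.nonneg c, le_rfl]) (mem_univ c)
    unfold wdeg; simpa [hv] using this

lemma Sys.prod_ge (h : Sys e r δ S w) (hr : 1 ≤ r) (h0 : 0 < η) (h1 : η ≤ 1 / 2) (v : V) :
    1 - η ≤ ∏ c ∈ univ.filter (fun c => v ∈ e c), (1 - η * w c) := by
  refine le_trans ?_ (prod_one_sub_ge _ (fun c => η * w c)
    (fun c => mul_nonneg h0.le (h.nonneg c)) (fun c => ?_))
  · rw [← Finset.mul_sum]
    have := h.deg v
    unfold wdeg at this
    rw [← Finset.sum_filter] at this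
    nlinarith
  · nlinarith [h.nonneg c, h.w_le_one hr c]

lemma Sys.pr_nonneg (h : Sys e r δ S w) (hr : 1 ≤ r) (h0 : 0 < η) (h1 : η ≤ 1 / 2) (k : ι ⊕ V) :
    0 ≤ pr e w η k := by
  rcases k with c | v
  · exact mul_nonneg h0.le (h.nonneg c)
  · have := h.prod_ge hr h0 h1 v
    simp only [pr, Sum.elim_inr]
    have h2 : (1 - η) / ∏ c ∈ univ.filter (fun c => v ∈ e c), (1 - η * w c) ≤ 1 := by
      apply div_le_one_of_le₀ this; linarith
    linarith

lemma Sys.pr_le_one (h : Sys e r δ S w) (hr : 1 ≤ r) (h0 : 0 < η) (h1 : η ≤ 1 / 2) (k : ι ⊕ V) :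
    pr e w η k ≤ 1 := by
  rcases k with c | v
  · simp only [pr, Sum.elim_inl]; nlinarith [h.nonneg c, h.w_le_one hr c]
  · have := h.prod_ge hr h0 h1 v
    simp only [pr, Sum.elim_inr]
    have h2 : 0 ≤ (1 - η) / ∏ c ∈ univ.filter (fun c => v ∈ e c), (1 - η * w c) := by
      apply div_nonneg <;> linarith
    linarith

lemma Sys.prod_Kl (h : Sys e r δ S w) (hr : 1 ≤ r) (h0 : 0 < η) (h1 : η ≤ 1 / 2) (v : V) :
    ∏ k ∈ Kl e v, (1 - pr e w η k) = 1 - η := by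
  have := h.prod_ge hr h0 h1 v
  rw [Kl, Finset.prod_disjSum]
  simp only [pr, Sum.elim_inl, Sum.elim_inr, Finset.prod_singleton, sub_sub_cancel]
  rw [mul_div_cancel₀]
  intro hh; rw [hh] at this; linarith

noncomputable def PU (e : ι → Finset V) (w : ι → ℝ) (η : ℝ) (U : Finset V) : ℝ :=
  ∏ k ∈ U.biUnion (Kl e), (1 - pr e w η k)

lemma Sys.PU_le_one (h : Sys e r δ S w) (hr : 1 ≤ r) (h0 : 0 < η) (h1 : η ≤ 1 / 2) (U : Finset V) :
    PU e w η U ≤ 1 :=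
  Finset.prod_le_one (fun i _ => by linarith [h.pr_le_one hr h0 h1 i])
    (fun i _ => by linarith [h.pr_nonneg hr h0 h1 i])

lemma Sys.PU_nonneg (h : Sys e r δ S w) (hr : 1 ≤ r) (h0 : 0 < η) (h1 : η ≤ 1 / 2) (U : Finset V) :
    0 ≤ PU e w η U :=
  Finset.prod_nonneg (fun i _ => by linarith [h.pr_le_one hr h0 h1 i])

lemma Sys.PU_insert (h : Sys e r δ S w) (hr : 1 ≤ r) (h0 : 0 < η) (h1 : η ≤ 1 / 2) (U : Finset V)
    (v : V) (hv : v ∉ U) (hδ : 0 ≤ δ) :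
    (1 - η) * PU e w η U ≤ PU e w η (insert v U) ∧
    PU e w η (insert v U) ≤ (1 - η) * PU e w η U + U.card * δ := by
  have hI := Finset.prod_union_inter (s₁ := Kl e v) (s₂ := U.biUnion (Kl e))
    (f := fun k => 1 - pr e w η k)
  rw [h.prod_Kl hr h0 h1 v, ← Finset.biUnion_insert] at hI
  change PU e w η (insert v U) * _ = (1 - η) * PU e w η U at hI
  have hp0 := h.pr_nonneg hr h0 h1
  have hp1 := h.pr_le_one hr h0 h1
  have h3 := prod_one_sub_ge (Kl e v ∩ U.biUnion (Kl e)) (pr e w η) hp0 hp1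
  have h4 : ∏ x ∈ Kl e v ∩ U.biUnion (Kl e), (1 - pr e w η x) ≤ 1 :=
    Finset.prod_le_one (fun i _ => by linarith [hp1 i]) (fun i _ => by linarith [hp0 i])
  have h5 : ∑ k ∈ Kl e v ∩ U.biUnion (Kl e), pr e w η k ≤ U.card * δ := by
    have hsub : Kl e v ∩ U.biUnion (Kl e) ⊆
        (univ.filter fun c => v ∈ e c ∧ ∃ u ∈ U, u ∈ e c).disjSum ∅ := by
      intro k hk
      rw [Finset.mem_inter, Finset.mem_biUnion] at hk
      obtain ⟨hk1, u, hu, hk2⟩ := hk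
      rcases k with c | x
      · simp only [Kl, Finset.inl_mem_disjSum, Finset.mem_filter, mem_univ, true_and] at *
        exact ⟨hk1, u, hu, hk2⟩
      · simp only [Kl, Finset.inr_mem_disjSum, Finset.mem_singleton] at *
        subst hk1; subst hk2; exact absurd hu hv
    refine (Finset.sum_le_sum_of_subset_of_nonneg hsub (fun i _ _ => hp0 i)).trans ?_
    rw [Finset.sum_disjSum, Finset.sum_empty, add_zero, Finset.sum_filter]
    have : ∀ c, (if v ∈ e c ∧ ∃ u ∈ U, u ∈ e c then pr e w η (Sum.inl c) else 0) ≤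
        ∑ u ∈ U, if u ∈ e c ∧ v ∈ e c then w c else 0 := by
      intro c
      have hnn : ∀ u ∈ U, 0 ≤ if u ∈ e c ∧ v ∈ e c then w c else 0 := fun u _ => by
        split_ifs; exacts [h.nonneg c, le_rfl]
      split_ifs with hc
      · obtain ⟨hvc, u, hu, huc⟩ := hc
        refine le_trans ?_ (Finset.single_le_sum hnn hu)
        rw [if_pos ⟨huc, hvc⟩]
        simp only [pr, Sum.elim_inl]
        nlinarith [h.nonneg c]
      · exact Finset.sum_nonneg hnn
    refine (Finset.sum_le_sum fun c _ => this c).trans ?_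
    rw [Finset.sum_comm, ← nsmul_eq_mul]
    refine Finset.sum_le_card_nsmul _ _ _ fun u hu => h.codeg u v ?_
    rintro rfl; exact hv hu
  have h6 := h.PU_nonneg hr h0 h1 (insert v U)
  have h7 := h.PU_le_one hr h0 h1 (insert v U)
  constructor <;> nlinarith

lemma Sys.PU_lower (h : Sys e r δ S w) (hr : 1 ≤ r) (h0 : 0 < η) (h1 : η ≤ 1 / 2) (hδ : 0 ≤ δ)
    (U : Finset V) : (1 - η) ^ U.card ≤ PU e w η U := by
  induction U using Finset.induction_on with
  | empty => simp [PU]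
  | insert v U hv ih =>
    rw [Finset.card_insert_of_notMem hv, pow_succ]
    have := (h.PU_insert hr h0 h1 U v hv hδ).1
    nlinarith

lemma Sys.PU_upper (h : Sys e r δ S w) (hr : 1 ≤ r) (h0 : 0 < η) (h1 : η ≤ 1 / 2) (hδ : 0 ≤ δ)
    (k : ℕ) (U : Finset V) (hU : U.card ≤ k) :
    PU e w η U ≤ (1 - η) ^ U.card + U.card * k * δ := by
  induction U using Finset.induction_on with
  | empty => simp [PU]
  | insert v U hv ih =>
    rw [Finset.card_insert_of_notMem hv] at *
    have ih := ih (by omega)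
    have h3 := (h.PU_insert hr h0 h1 U v hv hδ).2
    have h4 : (U.card : ℝ) * δ ≤ k * δ := by
      apply mul_le_mul_of_nonneg_right _ hδ
      exact_mod_cast (by omega : U.card ≤ k)
    have h5 : 0 ≤ (U.card : ℝ) * k * δ := by positivity
    rw [pow_succ]
    push_cast
    nlinarith

lemma Sys.PU_single (h : Sys e r δ S w) (hr : 1 ≤ r) (h0 : 0 < η) (h1 : η ≤ 1 / 2) (v : V) :
    PU e w η {v} = 1 - η := by
  rw [PU, Finset.singleton_biUnion, h.prod_Kl hr h0 h1]

/-- indicator that a set of vertices is alive -/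
noncomputable def al (e : ι → Finset V) (U : Finset V) (X : Finset (ι ⊕ V)) : ℝ :=
  if Disjoint X (U.biUnion (Kl e)) then 1 else 0

lemma al_mul (U U' : Finset V) (X : Finset (ι ⊕ V)) :
    al e U X * al e U' X = al e (U ∪ U') X := by
  unfold al
  simp only [Finset.union_biUnion, Finset.disjoint_union_right]
  by_cases h : Disjoint X (U.biUnion (Kl e)) <;>
    by_cases h' : Disjoint X (U'.biUnion (Kl e)) <;> simp [h, h']

lemma Ex_al (U : Finset V) : Ex (pr e w η) (al e U) = PU e w η U := Ex_disj _ _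

/-- the second moment bound -/
lemma Sys.second (h : Sys e r δ S w) (hr : 1 ≤ r) (h0 : 0 < η) (h1 : η ≤ 1 / 2) (hδ : 0 ≤ δ)
    (s : ℝ) (hs : s * (1 - η) ^ (r - 1) = 1) (hs1 : 1 ≤ s) (v : V) :
    Ex (pr e w η) (fun X => al e {v} X *
      (wdeg e (fun c => w c * (s * al e (e c) X)) v - wdeg e w v) ^ 2) ≤ s ^ 2 * (5 * r ^ 2 * δ) := by
  have hp : 0 < 1 - η := by linarith
  have hsp : s * (1 - η) ^ r = 1 - η := by
    obtain ⟨q, rfl⟩ : ∃ q, r = q + 1 := ⟨r - 1, by omega⟩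
    rw [pow_succ, ← mul_assoc]; simp only [Nat.add_sub_cancel] at hs; rw [hs, one_mul]
  -- expand
  have hexp : ∀ X, al e {v} X * (wdeg e (fun c => w c * (s * al e (e c) X)) v - wdeg e w v) ^ 2 =
      ∑ c, ∑ c', (if v ∈ e c then w c else 0) * (if v ∈ e c' then w c' else 0) *
        (s ^ 2 * al e (e c ∪ e c') X - s * al e (e c) X - s * al e (e c') X + al e {v} X) := by
    intro X
    have h3 : wdeg e (fun c => w c * (s * al e (e c) X)) v - wdeg e w v =
        ∑ c, (if v ∈ e c then w c else 0) * (s * al e (e c) X - 1) := by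
      unfold wdeg; rw [← Finset.sum_sub_distrib]
      exact Finset.sum_congr rfl fun c _ => by split_ifs <;> ring
    rw [h3, pow_two, Finset.sum_mul_sum, Finset.mul_sum]
    refine Finset.sum_congr rfl fun c _ => ?_
    rw [Finset.mul_sum]
    refine Finset.sum_congr rfl fun c' _ => ?_
    split_ifs with hc hc'
    · have e1 : al e {v} X * al e (e c) X = al e (e c) X := by
        rw [al_mul, Finset.singleton_union, Finset.insert_eq_of_mem hc]
      have e2 : al e {v} X * al e (e c') X = al e (e c') X := by
        rw [al_mul, Finset.singleton_union, Finset.insert_eq_of_mem hc']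
      rw [← al_mul]
      linear_combination (w c * w c' * s ^ 2 * al e (e c') X - w c * w c' * s) * e1
        - (w c * w c' * s) * e2
    all_goals ring
  simp_rw [hexp]
  rw [Ex_sum]
  simp_rw [Ex_sum, Ex_const_mul, Ex_add, Ex_sub, Ex_const_mul, Ex_al, h.PU_single hr h0 h1]
  have hB : ∀ c c', (if v ∈ e c then w c else 0) * (if v ∈ e c' then w c' else 0) *
      (s ^ 2 * PU e w η (e c ∪ e c') - s * PU e w η (e c) - s * PU e w η (e c') + (1 - η)) ≤
      (if v ∈ e c then w c else 0) * (if v ∈ e c' then w c' else 0) *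
      (s ^ 2 * (4 * r ^ 2 * δ) + s ^ 2 * ∑ u ∈ (e c).erase v, if u ∈ e c' then 1 else 0) := by
    intro c c'
    by_cases hc : v ∈ e c; swap
    · simp [hc]
    by_cases hc' : v ∈ e c'; swap
    · simp [hc']
    by_cases hw : w c = 0
    · simp [hw]
    by_cases hw' : w c' = 0
    · simp [hw']
    rw [if_pos hc, if_pos hc']
    refine mul_le_mul_of_nonneg_left ?_ (mul_nonneg (h.nonneg c) (h.nonneg c'))
    have a1 := h.PU_lower hr h0 h1 hδ (e c)
    have a2 := h.PU_lower hr h0 h1 hδ (e c')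
    rw [h.card c hw] at a1
    rw [h.card c' hw'] at a2
    have a3 : 1 - η ≤ s * PU e w η (e c) := by rw [← hsp]; gcongr
    have a4 : 1 - η ≤ s * PU e w η (e c') := by rw [← hsp]; gcongr
    by_cases hu : ∃ u ∈ (e c).erase v, u ∈ e c'
    · obtain ⟨u, hu, hu'⟩ := hu
      have b1 : (1 : ℝ) ≤ ∑ u ∈ (e c).erase v, if u ∈ e c' then 1 else 0 := by
        refine le_trans ?_ (Finset.single_le_sum (f := fun u => if u ∈ e c' then (1 : ℝ) else 0)
          (fun u _ => by split_ifs <;> norm_num) hu)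
        simp [hu']
      have b2 := h.PU_le_one hr h0 h1 (e c ∪ e c')
      have b3 : s ^ 2 * PU e w η (e c ∪ e c') ≤ s ^ 2 * 1 := by gcongr
      have b4 : s ^ 2 * 1 ≤ s ^ 2 * ∑ u ∈ (e c).erase v, if u ∈ e c' then (1 : ℝ) else 0 := by gcongr
      have b5 : 0 ≤ s ^ 2 * (4 * r ^ 2 * δ) := by positivity
      linarith
    · push Not at hu
      have hcap : e c ∩ e c' = {v} := by
        ext u
        simp only [Finset.mem_inter, Finset.mem_singleton]
        constructor
        · rintro ⟨q1, q2⟩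
          by_contra hne
          exact hu u (Finset.mem_erase.mpr ⟨hne, q1⟩) q2
        · rintro rfl; exact ⟨hc, hc'⟩
      have hcard : (e c ∪ e c').card = r + (r - 1) := by
        have := Finset.card_union_add_card_inter (e c) (e c')
        rw [hcap, h.card c hw, h.card c' hw', Finset.card_singleton] at this
        omega
      have b1 := h.PU_upper hr h0 h1 hδ (2 * r) (e c ∪ e c') (by omega)
      have b2 : s ^ 2 * (1 - η) ^ (e c ∪ e c').card = 1 - η := by
        rw [hcard, pow_add]
        linear_combination s * (1 - η) ^ (r - 1) * hsp + (1 - η) * hs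
      have b3 : ((e c ∪ e c').card : ℝ) * ((2 * r : ℕ) : ℝ) * δ ≤ 4 * r ^ 2 * δ := by
        apply mul_le_mul_of_nonneg_right _ hδ
        have : ((e c ∪ e c').card : ℝ) ≤ 2 * r := by
          exact_mod_cast (by omega : (e c ∪ e c').card ≤ 2 * r)
        push_cast
        nlinarith [(Nat.cast_nonneg r : (0 : ℝ) ≤ r)]
      have b4 : s ^ 2 * PU e w η (e c ∪ e c') ≤ s ^ 2 * ((1 - η) ^ (e c ∪ e c').card + 4 * r ^ 2 * δ) := by
        gcongr; linarith
      have b5 : 0 ≤ s ^ 2 * ∑ u ∈ (e c).erase v, if u ∈ e c' then (1 : ℝ) else 0 :=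
        mul_nonneg (by positivity) (Finset.sum_nonneg fun u _ => by split_ifs <;> norm_num)
      rw [mul_add, b2] at b4
      linarith
  refine (Finset.sum_le_sum fun c _ => Finset.sum_le_sum fun c' _ => hB c c').trans ?_
  have hd1 := h.deg v
  have hd0 : 0 ≤ wdeg e w v := Finset.sum_nonneg fun c _ => by split_ifs; exacts [h.nonneg c, le_rfl]
  have hin : ∀ c, ∑ c', (if v ∈ e c then w c else 0) * (if v ∈ e c' then w c' else 0) *
      (s ^ 2 * (4 * r ^ 2 * δ) + s ^ 2 * ∑ u ∈ (e c).erase v, if u ∈ e c' then 1 else 0) ≤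
      (if v ∈ e c then w c else 0) * (s ^ 2 * (5 * r ^ 2 * δ)) := by
    intro c
    simp_rw [mul_assoc]
    rw [← Finset.mul_sum]
    by_cases hc : v ∈ e c; swap
    · simp [hc]
    by_cases hw : w c = 0
    · simp [hw]
    rw [if_pos hc]
    refine mul_le_mul_of_nonneg_left ?_ (h.nonneg c)
    simp_rw [mul_add]
    rw [Finset.sum_add_distrib, ← Finset.sum_mul]
    have c1 : (∑ c', if v ∈ e c' then w c' else 0) * (s ^ 2 * (4 * (r ^ 2 * δ))) ≤
        1 * (s ^ 2 * (4 * (r ^ 2 * δ))) := by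
      gcongr; exact hd1
    have c2 : ∑ c', (if v ∈ e c' then w c' else 0) *
        (s ^ 2 * ∑ u ∈ (e c).erase v, if u ∈ e c' then 1 else 0) ≤ s ^ 2 * (r * δ) := by
      have : ∑ c', (if v ∈ e c' then w c' else 0) *
        (s ^ 2 * ∑ u ∈ (e c).erase v, if u ∈ e c' then 1 else 0) =
        s ^ 2 * ∑ u ∈ (e c).erase v, ∑ c', if u ∈ e c' ∧ v ∈ e c' then w c' else 0 := by
        rw [Finset.sum_comm, Finset.mul_sum]
        refine Finset.sum_congr rfl fun c' _ => ?_
        rw [mul_left_comm, Finset.mul_sum]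
        congr 1
        refine Finset.sum_congr rfl fun u _ => ?_
        by_cases q1 : v ∈ e c' <;> by_cases q2 : u ∈ e c' <;> simp [q1, q2]
      rw [this]
      gcongr
      refine (Finset.sum_le_card_nsmul _ _ δ fun u hu => h.codeg u v (Finset.ne_of_mem_erase hu)).trans ?_
      rw [nsmul_eq_mul]
      gcongr
      rw [← h.card c hw]; exact Finset.card_erase_le
    have c3 : (r : ℝ) * δ ≤ r ^ 2 * δ := by
      gcongr
      have : (1 : ℝ) ≤ r := by exact_mod_cast hr
      nlinarith
    have c4 : s ^ 2 * (r * δ) ≤ s ^ 2 * (r ^ 2 * δ) := by gcongr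
    linarith
  refine (Finset.sum_le_sum fun c _ => hin c).trans ?_
  rw [← Finset.sum_mul]
  have : (∑ c, if v ∈ e c then w c else 0) * (s ^ 2 * (5 * r ^ 2 * δ)) ≤
      1 * (s ^ 2 * (5 * r ^ 2 * δ)) := by gcongr; exact hd1
  linarith

end nibble
end HR

namespace HR
open Finset

section nibble3
variable {ι V : Type*} [Fintype ι] [DecidableEq ι] [Fintype V] [DecidableEq V]
variable {e : ι → Finset V} {r : ℕ} {δ : ℝ} {S : Finset V} {w : ι → ℝ} {η : ℝ}

/-- matchings in the support of `w` -/
def IsM (e : ι → Finset V) (w : ι → ℝ) (M : Finset ι) : Prop :=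
  (∀ c ∈ M, w c ≠ 0) ∧ (M : Set ι).Pairwise fun c d => Disjoint (e c) (e d)

/-- conflicting hyperedges -/
def Nb (e : ι → Finset V) (c : ι) : Finset (ι ⊕ V) :=
  (univ.filter fun c' => c' ≠ c ∧ ¬ Disjoint (e c) (e c')).disjSum ∅

lemma Sys.M_prob (h : Sys e r δ S w) (hr : 1 ≤ r) (h0 : 0 < η) (h1 : η ≤ 1 / 2) (c : ι)
    (hc : w c ≠ 0) : η * w c * (1 - η * r) ≤
      Ex (pr e w η) (fun X => if Sum.inl c ∈ X ∧ Disjoint X (Nb e c) then 1 else 0) := by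
  rw [Ex_mem_disj _ _ _ (by simp [Nb])]
  change _ ≤ η * w c * _
  refine mul_le_mul_of_nonneg_left ?_ (mul_nonneg h0.le (h.nonneg c))
  refine le_trans ?_ (prod_one_sub_ge _ _ (h.pr_nonneg hr h0 h1) (h.pr_le_one hr h0 h1))
  rw [Nb, Finset.sum_disjSum, Finset.sum_empty, add_zero]
  simp only [pr, Sum.elim_inl]
  rw [← Finset.mul_sum]
  have : ∑ c' ∈ univ.filter (fun c' => c' ≠ c ∧ ¬ Disjoint (e c) (e c')), w c' ≤ r := by
    rw [Finset.sum_filter]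
    have h2 : ∀ c', (if c' ≠ c ∧ ¬ Disjoint (e c) (e c') then w c' else 0) ≤
        ∑ v ∈ e c, if v ∈ e c' then w c' else 0 := by
      intro c'
      have hnn : ∀ v ∈ e c, 0 ≤ if v ∈ e c' then w c' else 0 := fun u _ => by
        split_ifs; exacts [h.nonneg c', le_rfl]
      split_ifs with hq
      · obtain ⟨v, hv, hv'⟩ := Finset.not_disjoint_iff.mp hq.2
        refine le_trans ?_ (Finset.single_le_sum hnn hv)
        rw [if_pos hv']
      · exact Finset.sum_nonneg hnn
    refine (Finset.sum_le_sum fun c' _ => h2 c').trans ?_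
    rw [Finset.sum_comm, ← h.card c hc]
    refine (Finset.sum_le_card_nsmul _ _ 1 fun v _ => h.deg v).trans ?_
    simp
  nlinarith

lemma Sys.sum_le (h : Sys e r δ S w) (hr : 1 ≤ r) : ∑ c, w c ≤ S.card := by
  have h2 : ∀ c, w c ≤ ∑ v ∈ S, if v ∈ e c then w c else 0 := by
    intro c
    by_cases hc : w c = 0
    · simp [hc]
    have h1 := h.card c hc
    obtain ⟨v, hv⟩ : (e c).Nonempty := by rw [← Finset.card_pos]; omega
    have := Finset.single_le_sum (f := fun v => if v ∈ e c then w c else 0) (s := S)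
      (fun v _ => by split_ifs; exacts [h.nonneg c, le_rfl]) (h.supp c hc hv)
    simpa [hv] using this
  refine (Finset.sum_le_sum fun c _ => h2 c).trans ?_
  rw [Finset.sum_comm]
  refine (Finset.sum_le_card_nsmul _ _ 1 fun v _ => h.deg v).trans ?_
  simp

lemma nibble_step (hr : 1 ≤ r) (h0 : 0 < η) (h1 : η ≤ 1 / 2) {θ : ℝ} (hθ : 0 < θ) (hδ : 0 ≤ δ)
    (a b : ℝ) (ha : 0 ≤ a) (ha1 : a ≤ 1)
    (IH : ∀ S' w', Sys e r (2 ^ r * δ) S' w' →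
      ∃ M, IsM e w' M ∧ a * ∑ c, w' c - b * S'.card ≤ M.card)
    (h : Sys e r δ S w) :
    ∃ M, IsM e w M ∧ ((1 - η) * a + η - r * η ^ 2) * ∑ c, w c
      - ((1 - η) * b + (θ + 4 ^ r * (5 * r ^ 2 * δ) / θ)) * S.card ≤ M.card := by
  have hp : 0 < 1 - η := by linarith
  obtain ⟨s, hs⟩ : ∃ s, s * (1 - η) ^ (r - 1) = 1 :=
    ⟨((1 - η) ^ (r - 1))⁻¹, inv_mul_cancel₀ (by positivity)⟩
  have hpow1 : (1 - η) ^ (r - 1) ≤ 1 := pow_le_one₀ hp.le (by linarith)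
  have hs0 : 0 < s := by
    by_contra hh
    push Not at hh
    have : 0 < (1 - η) ^ (r - 1) := by positivity
    nlinarith
  have hs1 : 1 ≤ s := by nlinarith
  have hs2 : s ≤ 2 ^ r := by
    have h3 : (1 / 2 : ℝ) ^ (r - 1) ≤ (1 - η) ^ (r - 1) := by gcongr; linarith
    have h4 : (2 : ℝ) ^ (r - 1) * (1 / 2) ^ (r - 1) = 1 := by rw [← mul_pow]; norm_num
    have h5 : (2 : ℝ) ^ (r - 1) ≤ 2 ^ r := pow_le_pow_right₀ (by norm_num) (by omega)
    have h6 : s ≤ 2 ^ (r - 1) := by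
      have h7 : (0 : ℝ) < (1 / 2 : ℝ) ^ (r - 1) := by positivity
      have h8 : s * (1 / 2 : ℝ) ^ (r - 1) ≤ s * (1 - η) ^ (r - 1) := by gcongr
      exact le_of_mul_le_mul_right (h8.trans (by rw [hs, h4])) h7
    linarith
  have hs4 : s ^ 2 ≤ 4 ^ r := by
    have : s ^ 2 ≤ (2 ^ r) ^ 2 := by gcongr
    rw [← pow_mul, mul_comm, pow_mul] at this; norm_num at this; exact this
  have hsp : s * (1 - η) ^ r = 1 - η := by
    obtain ⟨q, rfl⟩ : ∃ q, r = q + 1 := ⟨r - 1, by omega⟩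
    rw [pow_succ, ← mul_assoc]; simp only [Nat.add_sub_cancel] at hs; rw [hs, one_mul]
  have hal0 : ∀ U X, 0 ≤ al e U X := fun U X => by unfold al; split_ifs <;> norm_num
  have hal1 : ∀ U X, al e U X ≤ 1 := fun U X => by unfold al; split_ifs <;> norm_num
  have hpr0 := h.pr_nonneg hr h0 h1
  have hpr1 := h.pr_le_one hr h0 h1
  set Q : V → Finset (ι ⊕ V) → ℝ := fun v X => al e {v} X *
      (wdeg e (fun c => w c * (s * al e (e c) X)) v - wdeg e w v) ^ 2 with hQ
  set f : Finset (ι ⊕ V) → ℝ := fun X =>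
    ∑ c ∈ univ.filter (fun c => w c ≠ 0),
      (if Sum.inl c ∈ X ∧ Disjoint X (Nb e c) then (1 : ℝ) else 0)
    + (a * (∑ c, w c * s * al e (e c) X - ∑ v ∈ S, (θ + θ⁻¹ * Q v X))
    - b * ∑ v ∈ S, al e {v} X) with hf
  obtain ⟨X, hX⟩ := Ex_exists hpr0 hpr1 f
  -- lower bound on the expectation
  have hE : ((1 - η) * a + η - r * η ^ 2) * ∑ c, w c
      - ((1 - η) * b + (θ + 4 ^ r * (5 * r ^ 2 * δ) / θ)) * S.card ≤ Ex (pr e w η) f := by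
    rw [hf, Ex_add, Ex_sub, Ex_const_mul, Ex_const_mul, Ex_sub, Ex_sum, Ex_sum, Ex_sum, Ex_sum]
    simp_rw [Ex_add, Ex_const_mul, Ex_const, Ex_al, h.PU_single hr h0 h1]
    have g1 : η * (1 - η * r) * ∑ c, w c ≤ ∑ c ∈ univ.filter (fun c => w c ≠ 0), Ex (pr e w η)
        (fun X => if Sum.inl c ∈ X ∧ Disjoint X (Nb e c) then (1 : ℝ) else 0) := by
      rw [← Finset.sum_filter_ne_zero, Finset.mul_sum]
      refine Finset.sum_le_sum fun c hc => ?_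
      refine le_trans (le_of_eq (by ring)) (h.M_prob hr h0 h1 c (Finset.mem_filter.mp hc).2)
    have g2 : (1 - η) * ∑ c, w c ≤ ∑ c, w c * s * PU e w η (e c) := by
      rw [Finset.mul_sum]
      refine Finset.sum_le_sum fun c _ => ?_
      by_cases hc : w c = 0
      · simp [hc]
      have := h.PU_lower hr h0 h1 hδ (e c)
      rw [h.card c hc] at this
      calc (1 - η) * w c = w c * s * (1 - η) ^ r := by linear_combination (-w c) * hsp
        _ ≤ _ := mul_le_mul_of_nonneg_left this (mul_nonneg (h.nonneg c) hs0.le)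
    have g3 : ∑ v ∈ S, (θ + θ⁻¹ * Ex (pr e w η) (Q v)) ≤
        (θ + 4 ^ r * (5 * r ^ 2 * δ) / θ) * S.card := by
      rw [mul_comm, ← nsmul_eq_mul]
      refine Finset.sum_le_card_nsmul _ _ _ fun v _ => ?_
      have := h.second hr h0 h1 hδ s hs hs1 v
      rw [div_eq_inv_mul]
      gcongr
      refine this.trans ?_
      gcongr
    rw [Finset.sum_const, nsmul_eq_mul]
    have g4 : a * ((1 - η) * ∑ c, w c - (θ + 4 ^ r * (5 * r ^ 2 * δ) / θ) * S.card) ≤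
      a * (∑ c, w c * s * PU e w η (e c) - ∑ v ∈ S, (θ + θ⁻¹ * Ex (pr e w η) (Q v))) :=
      mul_le_mul_of_nonneg_left (by linarith) ha
    have g5 : a * ((θ + 4 ^ r * (5 * r ^ 2 * δ) / θ) * S.card) ≤
        1 * ((θ + 4 ^ r * (5 * r ^ 2 * δ) / θ) * S.card) :=
      mul_le_mul_of_nonneg_right ha1 (by positivity)
    nlinarith
  -- construct the matching for X
  set wX : ι → ℝ := fun c => w c * (s * al e (e c) X) with hwX
  have hwX0 : ∀ c, 0 ≤ wX c := fun c => mul_nonneg (h.nonneg c) (mul_nonneg hs0.le (hal0 _ _))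
  obtain ⟨w', hw0, hw1, hw2, hw3⟩ := trim e wX hwX0
  have hw'ne : ∀ c, w' c ≠ 0 → w c ≠ 0 ∧ Disjoint X ((e c).biUnion (Kl e)) := by
    intro c hc
    have h3 : wX c ≠ 0 := fun h4 => hc (le_antisymm (h4 ▸ hw1 c) (hw0 c))
    rw [hwX] at h3
    simp only [mul_ne_zero_iff] at h3
    refine ⟨h3.1, ?_⟩
    by_contra h5
    exact h3.2.2 (if_neg h5)
  set S' := S.filter (fun v => Disjoint X (Kl e v)) with hS'
  have hSys : Sys e r (2 ^ r * δ) S' w' := by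
    refine ⟨hw0, fun c hc v hv => ?_, fun c hc => h.card c (hw'ne c hc).1, hw2, fun u v huv => ?_⟩
    · rw [hS', Finset.mem_filter]
      exact ⟨h.supp c (hw'ne c hc).1 hv,
        (hw'ne c hc).2.mono_right (Finset.subset_biUnion_of_mem (Kl e) hv)⟩
    · have h3 : (∑ c, if u ∈ e c ∧ v ∈ e c then w' c else 0) ≤
          ∑ c, 2 ^ r * (if u ∈ e c ∧ v ∈ e c then w c else 0) := by
        refine Finset.sum_le_sum fun c _ => ?_
        split_ifs
        · refine (hw1 c).trans ?_
          change w c * (s * al e (e c) X) ≤ _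
          rw [mul_comm]
          refine mul_le_mul_of_nonneg_right ?_ (h.nonneg c)
          calc s * al e (e c) X ≤ s * 1 := by gcongr; exact hal1 _ _
            _ ≤ 2 ^ r := by linarith
        · simp
      rw [← Finset.mul_sum] at h3
      refine h3.trans ?_
      gcongr
      exact h.codeg u v huv
  obtain ⟨M', hM', hM'c⟩ := IH S' w' hSys
  set M0 := univ.filter (fun c => w c ≠ 0 ∧ (Sum.inl c ∈ X ∧ Disjoint X (Nb e c))) with hM0
  -- disjointness between the two matchings
  have hcross : ∀ c ∈ M0, ∀ d ∈ M', Disjoint (e c) (e d) := by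
    intro c hc d hd
    rw [Finset.disjoint_left]
    intro v hv hv'
    have h3 := (hw'ne d (hM'.1 d hd)).2
    have h4 : Sum.inl c ∈ (e d).biUnion (Kl e) := by
      rw [Finset.mem_biUnion]; exact ⟨v, hv', by simp [Kl, hv]⟩
    exact Finset.disjoint_left.mp h3 (Finset.mem_filter.mp hc).2.2.1 h4
  have hdisj : Disjoint M0 M' := by
    rw [Finset.disjoint_left]
    intro c hc hc'
    have h3 := hcross c hc c hc'
    rw [Finset.disjoint_self_iff_empty] at h3
    have h4 := h.card c (Finset.mem_filter.mp hc).2.1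
    rw [h3, Finset.card_empty] at h4
    omega
  refine ⟨M0 ∪ M', ⟨?_, ?_⟩, ?_⟩
  · intro c hc
    rcases Finset.mem_union.mp hc with hc | hc
    · exact (Finset.mem_filter.mp hc).2.1
    · exact (hw'ne c (hM'.1 c hc)).1
  · intro c hc d hd hcd
    rw [Finset.mem_coe, Finset.mem_union] at hc hd
    rcases hc with hc | hc <;> rcases hd with hd | hd
    · by_contra hnd
      have h3 := (Finset.mem_filter.mp hc).2.2.2
      refine Finset.disjoint_left.mp h3 (Finset.mem_filter.mp hd).2.2.1 ?_
      simp only [Nb, Finset.inl_mem_disjSum, Finset.mem_filter, mem_univ, true_and]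
      exact ⟨hcd.symm, hnd⟩
    · exact hcross c hc d hd
    · exact (hcross d hd c hc).symm
    · exact hM'.2 hc hd hcd
  · refine (hE.trans hX).trans ?_
    rw [Finset.card_union_of_disjoint hdisj]
    push_cast
    have k1 : ∑ c ∈ univ.filter (fun c => w c ≠ 0),
        (if Sum.inl c ∈ X ∧ Disjoint X (Nb e c) then (1 : ℝ) else 0) = M0.card := by
      rw [← Finset.sum_filter, Finset.filter_filter, Finset.sum_const, nsmul_eq_mul, mul_one]
    have k2 : ∑ v ∈ S, al e {v} X = S'.card := by
      simp only [al, Finset.singleton_biUnion]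
      rw [← Finset.sum_filter, Finset.sum_const, nsmul_eq_mul, mul_one]
    have k3 : ∑ v, max 0 (wdeg e wX v - 1) ≤ ∑ v ∈ S, (θ + θ⁻¹ * Q v X) := by
      rw [← Finset.sum_subset (Finset.subset_univ S)]
      · refine Finset.sum_le_sum fun v _ => ?_
        have hd := h.deg v
        have hQ0 : 0 ≤ Q v X := mul_nonneg (hal0 _ _) (sq_nonneg _)
        have hpos : 0 ≤ θ + θ⁻¹ * Q v X := by positivity
        refine max_le hpos ?_
        by_cases hv : Disjoint X (Kl e v)
        · have : al e {v} X = 1 := by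
            rw [al, if_pos]; rwa [Finset.singleton_biUnion]
          have hQv : Q v X = (wdeg e wX v - wdeg e w v) ^ 2 := by rw [hQ]; simp only [this, one_mul, hwX]
          rw [hQv]
          have h9 : wdeg e wX v - wdeg e w v ≤ θ + θ⁻¹ * (wdeg e wX v - wdeg e w v) ^ 2 := by
            generalize wdeg e wX v - wdeg e w v = x
            rw [← sub_nonneg]
            have : θ + θ⁻¹ * x ^ 2 - x = θ⁻¹ * (θ ^ 2 + x ^ 2 - θ * x) := by field_simp
            rw [this]
            have : 0 ≤ θ ^ 2 + x ^ 2 - θ * x := by nlinarith [sq_nonneg (θ - x), sq_nonneg θ, sq_nonneg x]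
            positivity
          linarith
        · have : wdeg e wX v = 0 := by
            refine Finset.sum_eq_zero fun c _ => ?_
            split_ifs with hc
            · rw [hwX]
              simp only [al]
              rw [if_neg]
              · simp
              · intro hh
                exact hv (hh.mono_right (Finset.subset_biUnion_of_mem (Kl e) hc))
            · rfl
          rw [this]; linarith
      · intro v _ hv
        have : wdeg e wX v = 0 := by
          refine Finset.sum_eq_zero fun c _ => ?_
          split_ifs with hc
          · rw [hwX]
            by_cases hwc : w c = 0
            · simp [hwc]
            · exact absurd (h.supp c hwc hc) hv
          · rfl
        rw [this]; norm_num
    have k4 : ∑ c, w c * s * al e (e c) X = ∑ c, wX c :=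
      Finset.sum_congr rfl fun c _ => by rw [hwX]; ring
    rw [hf]
    simp only [k1, k2, k4]
    have k5 : a * (∑ c, wX c - ∑ v ∈ S, (θ + θ⁻¹ * Q v X)) ≤ a * ∑ c, w' c :=
      mul_le_mul_of_nonneg_left (by linarith) ha
    linarith

end nibble3

lemma nibble_iter {ι V : Type*} [Fintype ι] [DecidableEq ι] [Fintype V] [DecidableEq V]
    (e : ι → Finset V) (r : ℕ) (hr : 1 ≤ r) (η : ℝ) (h0 : 0 < η) (h1 : η ≤ 1 / 2)
    (θ : ℝ) (hθ : 0 < θ) (δm : ℝ) (t : ℕ) :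
    ∀ (δ : ℝ), 0 ≤ δ → (2 ^ r) ^ t * δ ≤ δm → ∀ S w, Sys e r δ S w →
      ∃ M, IsM e w M ∧ (1 - (1 - η) ^ t) * ∑ c, w c
        - (r * η + (θ + 4 ^ r * (5 * r ^ 2 * δm) / θ) / η) * S.card ≤ M.card := by
  induction t with
  | zero =>
    intro δ hδ hδm S w h
    have : 0 ≤ δm := by simpa using hδ.trans (by simpa using hδm)
    refine ⟨∅, ⟨by simp, by simp⟩, ?_⟩
    have : 0 ≤ (r * η + (θ + 4 ^ r * (5 * r ^ 2 * δm) / θ) / η) * S.card := by positivity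
    simp only [pow_zero, sub_self, zero_mul, Finset.card_empty, Nat.cast_zero]
    linarith
  | succ t ih =>
    intro δ hδ hδm S w h
    have h2 : (1 : ℝ) ≤ 2 ^ r := one_le_pow₀ (by norm_num)
    have h3 : (1 : ℝ) ≤ (2 ^ r) ^ (t + 1) := one_le_pow₀ h2
    have hδle : δ ≤ δm := by nlinarith
    have hpt0 : 0 ≤ (1 - η) ^ t := by apply pow_nonneg; linarith
    have hpt : (1 - η) ^ t ≤ 1 := by apply pow_le_one₀ <;> linarith
    obtain ⟨M, hM, hMc⟩ := nibble_step (e := e) hr h0 h1 hθ hδ (1 - (1 - η) ^ t)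
      (r * η + (θ + 4 ^ r * (5 * r ^ 2 * δm) / θ) / η) (by linarith) (by linarith)
      (fun S' w' h' => ih (2 ^ r * δ) (by positivity) (by rw [pow_succ] at hδm; linarith) S' w' h') h
    refine ⟨M, hM, le_trans ?_ hMc⟩
    have hs := h.sum_le hr
    have hE : (θ + 4 ^ r * (5 * r ^ 2 * δ) / θ) ≤ (θ + 4 ^ r * (5 * r ^ 2 * δm) / θ) := by gcongr
    set E := (θ + 4 ^ r * (5 * r ^ 2 * δm) / θ) with hEdef
    have hE1 : E / η * η = E := div_mul_cancel₀ _ h0.ne'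
    have hE2 : (θ + 4 ^ r * (5 * r ^ 2 * δ) / θ) * S.card ≤ E * S.card := by gcongr
    have hs2 : r * η ^ 2 * ∑ c, w c ≤ r * η ^ 2 * S.card := by gcongr
    rw [pow_succ]
    have key : ((1 - η) * (r * η + E / η)) * S.card + r * η ^ 2 * S.card + E * S.card =
        (r * η + E / η) * S.card := by
      rw [← hE1]; field_simp; ring
    nlinarith

/-- The weighted nibble. -/
theorem nibble (r : ℕ) (hr : 1 ≤ r) (ε : ℝ) (hε : 0 < ε) : ∃ δ : ℝ, 0 < δ ∧
    ∀ {ι V : Type} [Fintype ι] [DecidableEq ι] [Fintype V] [DecidableEq V]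
    (e : ι → Finset V) (S : Finset V) (w : ι → ℝ), Sys e r δ S w →
      ∃ M, IsM e w M ∧ ∑ c, w c - ε * S.card ≤ M.card := by
  have hr' : (1 : ℝ) ≤ r := by exact_mod_cast hr
  obtain ⟨η, h0, h1, h2⟩ : ∃ η : ℝ, 0 < η ∧ η ≤ 1 / 2 ∧ r * η ≤ ε / 4 := by
    refine ⟨min (1 / 2) (ε / (4 * r)), by positivity, min_le_left _ _, ?_⟩
    calc r * min (1 / 2) (ε / (4 * r)) ≤ r * (ε / (4 * r)) := by gcongr; exact min_le_right _ _
      _ = ε / 4 := by field_simp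
  obtain ⟨t, ht⟩ := exists_pow_lt_of_lt_one (show 0 < ε / 4 by positivity)
    (show 1 - η < 1 by linarith)
  set θ := η * (ε / 4) with hθ
  have hθ0 : 0 < θ := by positivity
  set δm := θ * (η * (ε / 4)) / (4 ^ r * (5 * r ^ 2)) with hδm
  have hδm0 : 0 < δm := by positivity
  refine ⟨δm / (2 ^ r) ^ t, by positivity, ?_⟩
  intro ι V _ _ _ _ e S w h
  obtain ⟨M, hM, hMc⟩ := nibble_iter e r hr η h0 h1 θ hθ0 δm t (δm / (2 ^ r) ^ t) (by positivity)
    (by rw [mul_div_cancel₀]; positivity) S w h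
  refine ⟨M, hM, le_trans ?_ hMc⟩
  have e1 : 4 ^ r * (5 * r ^ 2 * δm) / θ = η * (ε / 4) := by
    rw [hδm]; field_simp
  have e2 : (θ + 4 ^ r * (5 * r ^ 2 * δm) / θ) / η = ε / 2 := by
    rw [e1, hθ]; field_simp; ring
  rw [e2]
  have hs := h.sum_le hr
  have hs0 : 0 ≤ ∑ c, w c := Finset.sum_nonneg fun c _ => h.nonneg c
  have f1 : (1 - η) ^ t * ∑ c, w c ≤ ε / 4 * S.card := by
    gcongr
  have f2 : r * η * S.card ≤ ε / 4 * S.card := by gcongr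
  nlinarith

end HR

namespace HR
open Finset

section counting
variable {κ V : Type*} [Fintype κ] [DecidableEq κ]

lemma sum_update (A : κ → Finset V) (i : κ) (Φ : (κ → V) → ℝ) :
    ∑ z ∈ Fintype.piFinset A, ∑ u ∈ A i, Φ (Function.update z i u) =
      (A i).card * ∑ z ∈ Fintype.piFinset A, Φ z := by
  have h1 : (A i).card * ∑ z ∈ Fintype.piFinset A, Φ z =
      ∑ z ∈ Fintype.piFinset A, ∑ u ∈ A i, Φ z := by
    rw [Finset.mul_sum]; exact Finset.sum_congr rfl fun z _ => by rw [Finset.sum_const, nsmul_eq_mul]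
  rw [h1, ← Finset.sum_product', ← Finset.sum_product']
  have hm : ∀ x ∈ Fintype.piFinset A ×ˢ A i,
      (Function.update x.1 i x.2, x.1 i) ∈ Fintype.piFinset A ×ˢ A i := by
    intro x hx
    rw [Finset.mem_product, Fintype.mem_piFinset] at *
    refine ⟨fun j => ?_, hx.1 i⟩
    by_cases h : j = i
    · subst h; simpa using hx.2
    · simpa [Function.update_of_ne h] using hx.1 j
  refine Finset.sum_nbij' (fun x => (Function.update x.1 i x.2, x.1 i))
    (fun x => (Function.update x.1 i x.2, x.1 i)) hm hm ?_ ?_ ?_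
  · intro x _; simp
  · intro x _; simp
  · intro x _; rfl

lemma abs_sum_le_two {A : Finset V} {h P : V → ℝ} {K : ℝ} (hP : ∀ u, |P u| ≤ 1)
    (hK : ∀ A' ⊆ A, |∑ u ∈ A', h u| ≤ K) : |∑ u ∈ A, P u * h u| ≤ 2 * K := by
  have h1 : |∑ u ∈ A, P u * h u| ≤ ∑ u ∈ A, |h u| := by
    refine (Finset.abs_sum_le_sum_abs _ _).trans (Finset.sum_le_sum fun u _ => ?_)
    rw [abs_mul]
    nlinarith [hP u, abs_nonneg (h u)]
  refine h1.trans ?_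
  rw [← Finset.sum_filter_add_sum_filter_not A (fun u => 0 ≤ h u)]
  have h2 : ∑ u ∈ A.filter (fun u => 0 ≤ h u), |h u| ≤ K := by
    refine le_trans ?_ (hK _ (Finset.filter_subset (fun u => 0 ≤ h u) A))
    refine le_trans (le_of_eq (Finset.sum_congr rfl fun u hu => ?_)) (le_abs_self _)
    exact abs_of_nonneg (Finset.mem_filter.mp hu).2
  have h3 : ∑ u ∈ A.filter (fun u => ¬ 0 ≤ h u), |h u| ≤ K := by
    refine le_trans ?_ (hK _ (Finset.filter_subset (fun u => ¬ 0 ≤ h u) A))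
    refine le_trans (le_of_eq ?_) (neg_le_abs _)
    rw [← Finset.sum_neg_distrib]
    exact Finset.sum_congr rfl fun u hu => abs_of_nonpos (not_le.mp (Finset.mem_filter.mp hu).2).le
  linarith

lemma bilin {A B : Finset V} {f : V → V → ℝ} {P Q : V → ℝ} {K : ℝ} (hP : ∀ u, |P u| ≤ 1)
    (hQ : ∀ u, |Q u| ≤ 1) (hK : ∀ A' ⊆ A, ∀ B' ⊆ B, |∑ u ∈ A', ∑ v ∈ B', f u v| ≤ K) :
    |∑ u ∈ A, ∑ v ∈ B, P u * Q v * f u v| ≤ 4 * K := by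
  have h1 : ∀ A' ⊆ A, |∑ u ∈ A', ∑ v ∈ B, Q v * f u v| ≤ 2 * K := by
    intro A' hA'
    rw [Finset.sum_comm]
    simp_rw [← Finset.mul_sum]
    refine abs_sum_le_two hQ fun B' hB' => ?_
    rw [Finset.sum_comm]
    exact hK A' hA' B' hB'
  have h2 := abs_sum_le_two hP h1
  simp_rw [Finset.mul_sum, ← mul_assoc] at h2
  linarith

/-- separability of `W` with respect to two coordinates -/
def Sep (i j : κ) (W : (κ → V) → ℝ) : Prop :=
  ∀ z, ∃ P Q : V → ℝ, (∀ u, |P u| ≤ 1) ∧ (∀ v, |Q v| ≤ 1) ∧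
    ∀ u v, W (Function.update (Function.update z i u) j v) = P u * Q v

lemma Sep.one (i j : κ) : Sep i j (fun _ : κ → V => (1 : ℝ)) := fun _ =>
  ⟨fun _ => 1, fun _ => 1, by simp, by simp, by simp⟩

lemma Sep.mul {i j : κ} {W W' : (κ → V) → ℝ} (h : Sep i j W) (h' : Sep i j W') :
    Sep i j (fun z => W z * W' z) := by
  intro z
  obtain ⟨P, Q, hP, hQ, hW⟩ := h z
  obtain ⟨P', Q', hP', hQ', hW'⟩ := h' z
  refine ⟨fun u => P u * P' u, fun u => Q u * Q' u, fun u => ?_, fun u => ?_, fun u v => ?_⟩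
  · rw [abs_mul]; exact mul_le_one₀ (hP u) (abs_nonneg _) (hP' u)
  · rw [abs_mul]; exact mul_le_one₀ (hQ u) (abs_nonneg _) (hQ' u)
  · change W _ * W' _ = P u * P' u * (Q v * Q' v)
    rw [hW, hW']; ring

lemma Sep.pair {i j a b : κ} (hij : i ≠ j) (h : ¬ (a = i ∧ b = j)) (h' : ¬ (a = j ∧ b = i))
    (hab : a ≠ b) {τ : V → V → ℝ} (hτ : ∀ u v, |τ u v| ≤ 1) :
    Sep i j (fun z => τ (z a) (z b)) := by
  intro z
  by_cases hj : a = j ∨ b = j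
  · -- does not depend on i
    refine ⟨fun _ => 1, fun v => τ (Function.update z j v a) (Function.update z j v b), by simp,
      fun v => hτ _ _, fun u v => ?_⟩
    have ha : a ≠ i := by rintro rfl; rcases hj with rfl | rfl <;> simp_all
    have hb : b ≠ i := by rintro rfl; rcases hj with rfl | rfl <;> simp_all
    rw [Function.update_comm hij]
    simp [Function.update_of_ne ha, Function.update_of_ne hb]
  · push Not at hj
    refine ⟨fun u => τ (Function.update z i u a) (Function.update z i u b), fun _ => 1,
      fun v => hτ _ _, by simp, fun u v => ?_⟩
    simp [Function.update_of_ne hj.1, Function.update_of_ne hj.2]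

lemma Sep.prod {i j : κ} {α : Type*} [DecidableEq α] (F : Finset α) (W : α → (κ → V) → ℝ)
    (h : ∀ p ∈ F, Sep i j (W p)) : Sep i j (fun z => ∏ p ∈ F, W p z) := by
  induction F using Finset.induction_on with
  | empty => simpa using Sep.one i j
  | insert a s ha ih =>
    simp_rw [Finset.prod_insert ha]
    exact (h a (Finset.mem_insert_self _ _)).mul
      (ih fun p hp => h p (Finset.mem_insert_of_mem hp))

lemma count_step (A : κ → Finset V) (hA : ∀ i, (A i).Nonempty) {i j : κ} (hij : i ≠ j)
    {W : (κ → V) → ℝ} (hW : Sep i j W) {f : V → V → ℝ} {ε : ℝ}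
    (hf : ∀ A' ⊆ A i, ∀ B' ⊆ A j, |∑ u ∈ A', ∑ v ∈ B', f u v| ≤ ε * ((A i).card * (A j).card)) :
    |∑ z ∈ Fintype.piFinset A, W z * f (z i) (z j)| ≤ 4 * ε * ∏ k, ((A k).card : ℝ) := by
  have hi : (0 : ℝ) < (A i).card := by exact_mod_cast (hA i).card_pos
  have hj : (0 : ℝ) < (A j).card := by exact_mod_cast (hA j).card_pos
  set Φ : (κ → V) → ℝ := fun z => W z * f (z i) (z j) with hΦ
  have h1 := sum_update A j Φ
  have h2 := sum_update A i (fun z => ∑ v ∈ A j, Φ (Function.update z j v))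
  rw [h1] at h2
  have h3 : |∑ z ∈ Fintype.piFinset A, ∑ u ∈ A i, ∑ v ∈ A j,
      Φ (Function.update (Function.update z i u) j v)| ≤
      ∑ z ∈ Fintype.piFinset A, 4 * (ε * ((A i).card * (A j).card)) := by
    refine (Finset.abs_sum_le_sum_abs _ _).trans (Finset.sum_le_sum fun z _ => ?_)
    obtain ⟨P, Q, hP, hQ, hPQ⟩ := hW z
    have := bilin hP hQ hf
    refine le_trans (le_of_eq (congrArg _ ?_)) this
    refine Finset.sum_congr rfl fun u _ => Finset.sum_congr rfl fun v _ => ?_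
    change W _ * f _ _ = _
    rw [hPQ, Function.update_of_ne hij, Function.update_self, Function.update_self]
  rw [h2, Finset.sum_const, Fintype.card_piFinset, nsmul_eq_mul, abs_mul, abs_mul,
    abs_of_pos hi, abs_of_pos hj] at h3
  push_cast at h3
  have h4 : (0 : ℝ) < (A i).card * (A j).card := by positivity
  refine le_of_mul_le_mul_left ?_ h4
  linarith

lemma telescoping (A : κ → Finset V) (hA : ∀ i, (A i).Nonempty) (F : Finset (κ × κ))
    (hne : ∀ p ∈ F, p.1 ≠ p.2) (hsw : ∀ p ∈ F, ∀ q ∈ F, ¬ (p.1 = q.2 ∧ p.2 = q.1))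
    {g : V → V → ℝ} (hg0 : ∀ u v, 0 ≤ g u v) (hg1 : ∀ u v, g u v ≤ 1) {d : κ × κ → ℝ}
    (hd0 : ∀ p, 0 ≤ d p) (hd1 : ∀ p, d p ≤ 1) {ε : ℝ}
    (hf : ∀ p ∈ F, ∀ A' ⊆ A p.1, ∀ B' ⊆ A p.2, |∑ u ∈ A', ∑ v ∈ B', (g u v - d p)| ≤
      ε * ((A p.1).card * (A p.2).card))
    {W : (κ → V) → ℝ} (hW : ∀ p ∈ F, Sep p.1 p.2 W) :
    |∑ z ∈ Fintype.piFinset A, W z * ∏ p ∈ F, g (z p.1) (z p.2) -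
      (∏ p ∈ F, d p) * ∑ z ∈ Fintype.piFinset A, W z| ≤
      F.card * (4 * ε * ∏ k, ((A k).card : ℝ)) := by
  induction F using Finset.induction_on with
  | empty => simp
  | insert p F hp ih =>
    have ih := ih (fun q hq => hne q (mem_insert_of_mem hq))
      (fun q hq q' hq' => hsw q (mem_insert_of_mem hq) q' (mem_insert_of_mem hq'))
      (fun q hq => hf q (mem_insert_of_mem hq)) (fun q hq => hW q (mem_insert_of_mem hq))
    have hpm := mem_insert_self p F
    have hs := count_step A hA (hne p hpm) (W := fun z => W z * ∏ q ∈ F, g (z q.1) (z q.2))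
      ((hW p hpm).mul (Sep.prod F _ fun q hq => Sep.pair (hne p hpm) (by
          rintro ⟨h1, h2⟩; exact hp ((Prod.ext h1 h2 : q = p) ▸ hq)) (by
          rintro ⟨h1, h2⟩; exact hsw q (mem_insert_of_mem hq) p hpm ⟨h1, h2⟩)
        (hne q (mem_insert_of_mem hq)) (fun u v => by
          rw [abs_of_nonneg (hg0 _ _)]; exact hg1 _ _))) (hf p hpm)
    simp_rw [Finset.prod_insert hp]
    rw [Finset.card_insert_of_notMem hp]
    set C := ∑ z ∈ Fintype.piFinset A, W z * ∏ q ∈ F, g (z q.1) (z q.2)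
    have e1 : ∑ z ∈ Fintype.piFinset A, W z * (g (z p.1) (z p.2) * ∏ q ∈ F, g (z q.1) (z q.2)) =
        ∑ z ∈ Fintype.piFinset A, W z * (∏ q ∈ F, g (z q.1) (z q.2)) * (g (z p.1) (z p.2) - d p)
        + d p * C := by
      rw [Finset.mul_sum, ← Finset.sum_add_distrib]
      exact Finset.sum_congr rfl fun z _ => by ring
    rw [e1]
    set B := ∑ z ∈ Fintype.piFinset A, W z * (∏ q ∈ F, g (z q.1) (z q.2)) * (g (z p.1) (z p.2) - d p)
    have e2 : B + d p * C - d p * (∏ q ∈ F, d q) * ∑ z ∈ Fintype.piFinset A, W z =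
      B + d p * (C - (∏ q ∈ F, d q) * ∑ z ∈ Fintype.piFinset A, W z) := by ring
    rw [e2]
    refine (abs_add_le _ _).trans ?_
    rw [abs_mul, abs_of_nonneg (hd0 p)]
    push_cast
    have := mul_le_mul_of_nonneg_right (hd1 p)
      (abs_nonneg (C - (∏ q ∈ F, d q) * ∑ z ∈ Fintype.piFinset A, W z))
    linarith

end counting

lemma uniform_sets {V : Type*} [DecidableEq V] {G : SimpleGraph V} [DecidableRel G.Adj] {ε : ℝ}
    {A B : Finset V} (h : G.IsUniform ε A B) (A' : Finset V) (hA : A' ⊆ A) (B' : Finset V)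
    (hB : B' ⊆ B) : |∑ u ∈ A', ∑ v ∈ B', ((if G.Adj u v then (1 : ℝ) else 0) -
      (G.edgeDensity A B : ℝ))| ≤ ε * (A.card * B.card) := by
  have hε := h.pos
  have hcA : (A'.card : ℝ) ≤ A.card := by exact_mod_cast card_le_card hA
  have hcB : (B'.card : ℝ) ≤ B.card := by exact_mod_cast card_le_card hB
  have h1 : ∑ u ∈ A', ∑ v ∈ B', (if G.Adj u v then (1 : ℝ) else 0) =
      (G.edgeDensity A' B' : ℝ) * (A'.card * B'.card) := by
    have : ∑ u ∈ A', ∑ v ∈ B', (if G.Adj u v then (1 : ℝ) else 0) = ((G.interedges A' B').card : ℝ) := by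
      rw [← Finset.sum_product', SimpleGraph.interedges, Rel.interedges]
      simp
    rw [this, SimpleGraph.edgeDensity_def]
    by_cases hz : (A'.card : ℝ) * B'.card = 0
    · rw [hz]
      have h3 := G.card_interedges_le_mul A' B'
      have h4 : ((G.interedges A' B').card : ℝ) ≤ A'.card * B'.card := by exact_mod_cast h3
      rw [hz] at h4
      have h5 : (0 : ℝ) ≤ (G.interedges A' B').card := Nat.cast_nonneg _
      linarith
    · push_cast
      rw [div_mul_cancel₀ _ hz]
  have h2 : ∑ u ∈ A', ∑ v ∈ B', ((if G.Adj u v then (1 : ℝ) else 0) - (G.edgeDensity A B : ℝ)) =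
      ((G.edgeDensity A' B' : ℝ) - G.edgeDensity A B) * (A'.card * B'.card) := by
    simp_rw [Finset.sum_sub_distrib]
    rw [h1]
    simp only [Finset.sum_const, nsmul_eq_mul]
    ring
  rw [h2, abs_mul, abs_of_nonneg (show (0 : ℝ) ≤ A'.card * B'.card by positivity)]
  have d0 : (0 : ℝ) ≤ G.edgeDensity A B := by exact_mod_cast G.edgeDensity_nonneg A B
  have d1 : (G.edgeDensity A B : ℝ) ≤ 1 := by exact_mod_cast G.edgeDensity_le_one A B
  have d0' : (0 : ℝ) ≤ G.edgeDensity A' B' := by exact_mod_cast G.edgeDensity_nonneg A' B'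
  have d1' : (G.edgeDensity A' B' : ℝ) ≤ 1 := by exact_mod_cast G.edgeDensity_le_one A' B'
  have habs : |(G.edgeDensity A' B' : ℝ) - G.edgeDensity A B| ≤ 1 := by
    rw [abs_le]; constructor <;> linarith
  by_cases hA' : A.card * ε ≤ A'.card
  · by_cases hB' : B.card * ε ≤ B'.card
    · have := (h hA hB hA' hB').le
      gcongr
    · push Not at hB'
      calc _ ≤ 1 * ((A.card : ℝ) * (B.card * ε)) := by gcongr
        _ = _ := by ring
  · push Not at hA'
    calc _ ≤ 1 * ((A.card * ε : ℝ) * B.card) := by gcongr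
      _ = _ := by ring

end HR

namespace HR
open Finset

section tv
variable {m : ℕ} {V : Type*} [DecidableEq V] (G : SimpleGraph V) [DecidableRel G.Adj]

/-- homomorphisms respecting a partition -/
def homs (EH : Finset (Fin m × Fin m)) (A : Fin m → Finset V) : Finset (Fin m → V) :=
  (Fintype.piFinset A).filter fun z => ∀ p ∈ EH, G.Adj (z p.1) (z p.2)

lemma prod_ind {F : Finset (Fin m × Fin m)} (z : Fin m → V) :
    ∏ p ∈ F, (if G.Adj (z p.1) (z p.2) then (1 : ℝ) else 0) =
      if ∀ p ∈ F, G.Adj (z p.1) (z p.2) then 1 else 0 := by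
  rw [Finset.prod_ite_zero]; simp

lemma homs_card (EH : Finset (Fin m × Fin m)) (hlt : ∀ p ∈ EH, p.1 < p.2)
    (A : Fin m → Finset V) (hA : ∀ i, (A i).Nonempty) {ε d0 : ℝ} (hd : 0 ≤ d0)
    (hu : ∀ p ∈ EH, G.IsUniform ε (A p.1) (A p.2))
    (hdens : ∀ p ∈ EH, d0 ≤ G.edgeDensity (A p.1) (A p.2)) :
    (d0 ^ EH.card - 4 * EH.card * ε) * ∏ k, ((A k).card : ℝ) ≤ (homs G EH A).card := by
  have h := telescoping A hA EH (fun p hp => (hlt p hp).ne)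
    (fun p hp q hq => by
      rintro ⟨h1, h2⟩
      have := hlt p hp
      have h' := hlt q hq
      rw [h1, h2] at this
      exact absurd this h'.asymm)
    (g := fun u v => if G.Adj u v then (1 : ℝ) else 0) (fun u v => by positivity)
    (fun u v => by split_ifs <;> norm_num)
    (d := fun p => (G.edgeDensity (A p.1) (A p.2) : ℝ))
    (fun p => by exact_mod_cast G.edgeDensity_nonneg _ _)
    (fun p => by exact_mod_cast G.edgeDensity_le_one _ _)
    (fun p hp A' hA' B' hB' => uniform_sets (hu p hp) A' hA' B' hB')
    (W := fun _ => 1) (fun p _ => Sep.one _ _)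
  simp only [prod_ind, one_mul, sum_boole, sum_const, nsmul_eq_mul, mul_one,
    Fintype.card_piFinset] at h
  have h1 : d0 ^ EH.card ≤ ∏ p ∈ EH, (G.edgeDensity (A p.1) (A p.2) : ℝ) := by
    rw [← Finset.prod_const]
    exact Finset.prod_le_prod (fun _ _ => hd) hdens
  have h2 := (abs_le.mp h).1
  have h3 : (0 : ℝ) ≤ ∏ k, ((A k).card : ℝ) := by positivity
  push_cast at h2
  have := mul_le_mul_of_nonneg_right h1 h3
  change _ ≤ ((filter _ _).card : ℝ)
  linarith

lemma sum_two (A : Fin m → Finset V) {a b : Fin m} (hab : a ≠ b) (τ : V → V → ℝ) :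
    (A a).card * (A b).card * ∑ z ∈ Fintype.piFinset A, τ (z a) (z b) =
      (∏ k, ((A k).card : ℝ)) * ∑ u ∈ A a, ∑ v ∈ A b, τ u v := by
  have h1 := sum_update A b (fun z => τ (z a) (z b))
  have h2 := sum_update A a (fun z => ∑ v ∈ A b, τ (Function.update z b v a) (Function.update z b v b))
  rw [h1] at h2
  rw [mul_assoc, ← h2]
  simp [Function.update_of_ne hab, Fintype.card_piFinset]

lemma tv_prod (EH : Finset (Fin m × Fin m)) (hlt : ∀ p ∈ EH, p.1 < p.2)
    (A : Fin m → Finset V) (hA : ∀ i, (A i).Nonempty) {ε : ℝ}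
    (hu : ∀ p ∈ EH, G.IsUniform ε (A p.1) (A p.2))
    (q : Fin m × Fin m) (hq : q ∈ EH) (σ : V → V → ℝ) (hσ : ∀ u v, |σ u v| ≤ 1) :
    |(∑ z ∈ homs G EH A, σ (z q.1) (z q.2)) * (G.interedges (A q.1) (A q.2)).card -
      (homs G EH A).card * ∑ p ∈ G.interedges (A q.1) (A q.2), σ p.1 p.2| ≤
      8 * EH.card * ε * (∏ k, ((A k).card : ℝ)) * (G.interedges (A q.1) (A q.2)).card := by
  have hε : 0 < ε := (hu q hq).pos
  set F := EH.erase q with hF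
  have hFE : ∀ p ∈ F, p ∈ EH := fun p hp => Finset.mem_of_mem_erase hp
  set D := ∏ p ∈ F, (G.edgeDensity (A p.1) (A p.2) : ℝ)
  set Pi := ∏ k, ((A k).card : ℝ) with hPi
  have hPi0 : 0 ≤ Pi := Finset.prod_nonneg fun k _ => Nat.cast_nonneg _
  have key : ∀ σ : V → V → ℝ, (∀ u v, |σ u v| ≤ 1) →
      |∑ z ∈ homs G EH A, σ (z q.1) (z q.2) - D * ∑ z ∈ Fintype.piFinset A,
        (if G.Adj (z q.1) (z q.2) then σ (z q.1) (z q.2) else 0)| ≤ EH.card * (4 * ε * Pi) := by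
    intro σ hσ
    have h := telescoping A hA F (fun p hp => (hlt p (hFE p hp)).ne)
      (fun p hp q hq => by
        rintro ⟨h1, h2⟩
        have := hlt p (hFE p hp)
        have h' := hlt q (hFE q hq)
        rw [h1, h2] at this
        exact absurd this h'.asymm)
      (g := fun u v => if G.Adj u v then (1 : ℝ) else 0) (fun u v => by positivity)
      (fun u v => by split_ifs <;> norm_num)
      (d := fun p => (G.edgeDensity (A p.1) (A p.2) : ℝ))
      (fun p => by exact_mod_cast G.edgeDensity_nonneg _ _)
      (fun p => by exact_mod_cast G.edgeDensity_le_one _ _)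
      (fun p hp A' hA' B' hB' => uniform_sets (hu p (hFE p hp)) A' hA' B' hB')
      (W := fun z => if G.Adj (z q.1) (z q.2) then σ (z q.1) (z q.2) else 0)
      (fun p hp => by
        refine Sep.pair (hlt p (hFE p hp)).ne ?_ ?_ (hlt q hq).ne
          (τ := fun u v => if G.Adj u v then σ u v else 0) ?_
        · rintro ⟨h1, h2⟩
          exact (Finset.ne_of_mem_erase hp) (Prod.ext h1.symm h2.symm)
        · rintro ⟨h1, h2⟩
          have := hlt p (hFE p hp)
          have h' := hlt q hq
          rw [h1, h2] at h'
          exact absurd this h'.asymm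
        · intro u v
          split_ifs
          · exact hσ u v
          · simp)
    have e1 : ∑ z ∈ homs G EH A, σ (z q.1) (z q.2) = ∑ z ∈ Fintype.piFinset A,
        (if G.Adj (z q.1) (z q.2) then σ (z q.1) (z q.2) else 0) *
          ∏ p ∈ F, (if G.Adj (z p.1) (z p.2) then (1 : ℝ) else 0) := by
      rw [homs, Finset.sum_filter]
      refine Finset.sum_congr rfl fun z _ => ?_
      rw [prod_ind, ← Finset.insert_erase hq]
      simp only [Finset.forall_mem_insert, ← hF]
      by_cases h1 : G.Adj (z q.1) (z q.2) <;> by_cases h2 : ∀ p ∈ F, G.Adj (z p.1) (z p.2) <;>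
        simp [h1, h2]
    rw [e1]
    refine h.trans ?_
    refine mul_le_mul_of_nonneg_right ?_ (mul_nonneg (mul_nonneg (by norm_num) hε.le) hPi0)
    exact_mod_cast Finset.card_le_card (Finset.erase_subset _ _)
  have hS : ∀ σ : V → V → ℝ, ∑ p ∈ G.interedges (A q.1) (A q.2), σ p.1 p.2 =
      ∑ u ∈ A q.1, ∑ v ∈ A q.2, if G.Adj u v then σ u v else 0 := by
    intro σ
    rw [SimpleGraph.interedges, Rel.interedges, Finset.sum_filter, Finset.sum_product]
  have k1 := key σ hσ
  have k2 := key (fun _ _ => 1) (by simp)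
  have s1 := sum_two A (hlt q hq).ne (fun u v => if G.Adj u v then σ u v else 0)
  have s2 := sum_two A (hlt q hq).ne (fun u v => if G.Adj u v then 1 else 0)
  rw [← hS σ] at s1
  rw [← hS (fun _ _ => 1)] at s2
  simp only [sum_const, nsmul_eq_mul, mul_one] at k2 s2
  set X := ∑ z ∈ homs G EH A, σ (z q.1) (z q.2)
  set S := ∑ p ∈ G.interedges (A q.1) (A q.2), σ p.1 p.2 with hSd
  set Y := ∑ z ∈ Fintype.piFinset A, (if G.Adj (z q.1) (z q.2) then σ (z q.1) (z q.2) else 0)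
  set Y1 := ∑ z ∈ Fintype.piFinset A, (if G.Adj (z q.1) (z q.2) then (1 : ℝ) else 0)
  have hSe : |S| ≤ (G.interedges (A q.1) (A q.2)).card := by
    refine (Finset.abs_sum_le_sum_abs _ _).trans ?_
    refine (Finset.sum_le_sum fun p _ => hσ p.1 p.2).trans ?_
    simp
  set e := ((G.interedges (A q.1) (A q.2)).card : ℝ)
  set T := ((homs G EH A).card : ℝ)
  rw [← hPi] at s1 s2
  have ha : (0 : ℝ) < (A q.1).card * (A q.2).card := by
    have := (hA q.1).card_pos
    have := (hA q.2).card_pos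
    positivity
  have hYe : Y * e = Y1 * S := by
    refine mul_left_cancel₀ ha.ne' ?_
    linear_combination e * s1 - S * s2
  have : X * e - T * S = (X - D * Y) * e - (T - D * Y1) * S := by
    linear_combination D * hYe
  rw [this]
  refine (abs_sub _ _).trans ?_
  rw [abs_mul, abs_mul]
  have he : 0 ≤ e := Nat.cast_nonneg _
  rw [abs_of_nonneg he]
  have i1 := mul_le_mul_of_nonneg_right k1 he
  have i2 := mul_le_mul k2 hSe (abs_nonneg _) ((abs_nonneg _).trans k2)
  linarith

lemma tv (EH : Finset (Fin m × Fin m)) (hlt : ∀ p ∈ EH, p.1 < p.2)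
    (A : Fin m → Finset V) (hA : ∀ i, (A i).Nonempty) {ε c : ℝ} (hc : 0 < c)
    (hu : ∀ p ∈ EH, G.IsUniform ε (A p.1) (A p.2))
    (hT : c * ∏ k, ((A k).card : ℝ) ≤ (homs G EH A).card)
    (q : Fin m × Fin m) (hq : q ∈ EH) (σ : V → V → ℝ) (hσ : ∀ u v, |σ u v| ≤ 1) :
    |(∑ z ∈ homs G EH A, σ (z q.1) (z q.2)) / (homs G EH A).card -
      (∑ p ∈ G.interedges (A q.1) (A q.2), σ p.1 p.2) / (G.interedges (A q.1) (A q.2)).card| ≤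
      8 * EH.card * ε / c := by
  have hε : 0 < ε := (hu q hq).pos
  have h := tv_prod G EH hlt A hA hu q hq σ hσ
  have hPi : 0 < ∏ k, ((A k).card : ℝ) := Finset.prod_pos fun k _ => by
    exact_mod_cast (hA k).card_pos
  have hTp : (0 : ℝ) < (homs G EH A).card := lt_of_lt_of_le (mul_pos hc hPi) hT
  have hep : (0 : ℝ) < (G.interedges (A q.1) (A q.2)).card := by
    have : 0 < (homs G EH A).card := by exact_mod_cast hTp
    obtain ⟨z, hz⟩ := Finset.card_pos.mp this
    rw [homs, Finset.mem_filter, Fintype.mem_piFinset] at hz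
    have : (z q.1, z q.2) ∈ G.interedges (A q.1) (A q.2) := by
      rw [SimpleGraph.mem_interedges_iff]
      exact ⟨hz.1 _, hz.1 _, hz.2 q hq⟩
    exact_mod_cast Finset.card_pos.mpr ⟨_, this⟩
  set T := ((homs G EH A).card : ℝ)
  set e := ((G.interedges (A q.1) (A q.2)).card : ℝ)
  rw [div_sub_div _ _ hTp.ne' hep.ne', abs_div, abs_of_pos (mul_pos hTp hep), div_le_div_iff₀
    (mul_pos hTp hep) hc]
  have := mul_le_mul_of_nonneg_right h hc.le
  refine this.trans ?_
  have h3 : (0 : ℝ) ≤ 8 * EH.card * ε * e := by positivity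
  have := mul_le_mul_of_nonneg_left hT h3
  linarith
end tv
end HR

namespace HR
open Finset SzemerediRegularity

lemma nat_aux {n k : ℕ} (hk : 0 < k) (hn : k ≤ n) : n < 2 * k * (n / k) := by
  rw [mul_assoc, two_mul, ← add_lt_add_iff_right (n % k), add_right_comm, add_assoc,
    Nat.mod_add_div n k, add_comm, add_lt_add_iff_right]
  apply (Nat.mod_lt n hk).trans_le
  simpa using Nat.mul_le_mul_left k ((Nat.one_le_div_iff hk).2 hn)

/-- the good pairs of parts -/
def Good {V : Type*} [DecidableEq V] (G : SimpleGraph V) [DecidableRel G.Adj] (pt : V → Finset V)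
    (ε₁ d0 : ℝ) (x y : V) : Prop :=
  pt x ≠ pt y ∧ G.IsUniform ε₁ (pt x) (pt y) ∧ d0 ≤ G.edgeDensity (pt x) (pt y)

open Classical in
lemma reg (ε₁ d0 : ℝ) (h1 : 0 < ε₁) (hd : 0 < d0) :
    ∃ N K : ℕ, 0 < K ∧ ∀ n : ℕ, N ≤ n → ∀ G : SimpleGraph (Fin n),
      ∃ pt : Fin n → Finset (Fin n), (∀ x, x ∈ pt x) ∧ (∀ x y, y ∈ pt x → pt y = pt x) ∧
        (∀ x, (n : ℝ) / K ≤ (pt x).card) ∧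
        ((univ.filter fun p : Fin n × Fin n => G.Adj p.1 p.2 ∧ ¬ Good G pt ε₁ d0 p.1 p.2).card : ℝ)
          ≤ (4 * ε₁ + 5 * d0) * (n : ℝ) ^ 2 := by
  set l := ⌈4 / (2 * d0)⌉₊ with hl
  refine ⟨l + 1, 2 * bound ε₁ l, by have := bound_pos (ε := ε₁) (l := l); omega, ?_⟩
  intro n hn G
  have : Nonempty (Fin n) := ⟨⟨0, by omega⟩⟩
  obtain ⟨P, hP, hPl, hPb, hPu⟩ := szemeredi_regularity G h1 (l := l) (by simp; omega)
  refine ⟨P.part, fun x => P.mem_part (mem_univ x), fun x y hy => ?_, fun x => ?_, ?_⟩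
  · exact P.part_eq_of_mem (P.part_mem.mpr (mem_univ x)) hy
  · have hX := P.part_mem.mpr (mem_univ x)
    have := Finset.Nonempty.card_pos ⟨_, hX⟩
    have hcp := P.card_parts_le_card
    have hav := hP.average_le_card_part hX
    rw [Finset.card_univ, Fintype.card_fin] at hcp hav
    calc (n : ℝ) / ((2 * bound ε₁ l : ℕ) : ℝ) ≤ n / (2 * #P.parts : ℝ) := by
          push_cast
          gcongr
      _ ≤ ((n / #P.parts : ℕ) : ℝ) :=
        (div_le_iff₀' (by positivity)).2 <| mod_cast (nat_aux ‹_› hcp).le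
      _ ≤ _ := mod_cast hav
  · let A := (P.nonUniforms G ε₁).biUnion fun (U, V) ↦ U ×ˢ V
    let B := P.parts.biUnion offDiag
    let C := (P.sparsePairs G d0).biUnion fun (U, V) ↦ G.interedges U V
    have hsub : (univ.filter fun p : Fin n × Fin n => G.Adj p.1 p.2 ∧
        ¬ Good G P.part ε₁ d0 p.1 p.2) ⊆ A ∪ B ∪ C := by
      rintro ⟨x, y⟩
      simp only [A, B, C, mem_filter, mem_univ, true_and, Good, not_and,
        not_le, mem_biUnion, mem_union, mem_product, Prod.exists, mem_offDiag, and_imp,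
        or_assoc, and_assoc, P.mk_mem_nonUniforms, Finpartition.mk_mem_sparsePairs,
        SimpleGraph.mem_interedges_iff]
      intro h h'
      have hU := P.part_mem.mpr (mem_univ x)
      have hV := P.part_mem.mpr (mem_univ y)
      have hx := P.mem_part (mem_univ x)
      have hy := P.mem_part (mem_univ y)
      by_cases hUV : P.part x = P.part y
      · exact Or.inr (Or.inl ⟨_, hU, hx, hUV ▸ hy, G.ne_of_adj h⟩)
      by_cases h₂ : G.IsUniform ε₁ (P.part x) (P.part y)
      · exact Or.inr <| Or.inr ⟨_, _, hU, hV, hUV, h' hUV h₂, hx, hy, h⟩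
      · exact Or.inl ⟨_, _, hU, hV, hUV, h₂, hx, hy⟩
    have a1 : (#A : ℝ) ≤ _ := (hP.sum_nonUniforms_lt univ_nonempty h1 hPu).le
    have a2 : (#B : ℝ) ≤ _ := hP.card_biUnion_offDiag_le (ε := 2 * d0) (by positivity)
      ((Nat.le_ceil _).trans (by exact_mod_cast hPl))
    have a3 : (#C : ℝ) ≤ _ := hP.card_interedges_sparsePairs_le (G := G) (ε := d0) hd.le
    have a4 : (#(A ∪ B ∪ C) : ℝ) ≤ #A + #B + #C := by
      have h1 := card_union_le (A ∪ B) C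
      have h2 := card_union_le A B
      exact_mod_cast (by omega : #(A ∪ B ∪ C) ≤ #A + #B + #C)
    have a5 : ((univ.filter fun p : Fin n × Fin n => G.Adj p.1 p.2 ∧
        ¬ Good G P.part ε₁ d0 p.1 p.2).card : ℝ) ≤ #(A ∪ B ∪ C) := by
      exact_mod_cast card_le_card hsub
    rw [Finset.card_univ, Fintype.card_fin] at a1 a2 a3
    linarith
end HR

namespace HR
open Finset

section ed
variable {m n : ℕ}

/-- the edges of the image of a map -/
def Ed (EH : Finset (Fin m × Fin m)) (x : Fin m → Fin n) : Finset (Sym2 (Fin n)) :=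
  EH.image fun p => s(x p.1, x p.2)

lemma Ed_inj {EH : Finset (Fin m × Fin m)} (hlt : ∀ p ∈ EH, p.1 < p.2) {x : Fin m → Fin n}
    (hx : Function.Injective x) {p q : Fin m × Fin m} (hp : p ∈ EH) (hq : q ∈ EH)
    (h : s(x p.1, x p.2) = s(x q.1, x q.2)) : p = q := by
  rw [Sym2.eq_iff] at h
  rcases h with ⟨h1, h2⟩ | ⟨h1, h2⟩
  · exact Prod.ext (hx h1) (hx h2)
  · have h3 := hlt p hp
    rw [hx h1, hx h2] at h3
    exact absurd h3 (hlt q hq).asymm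

lemma Ed_card {EH : Finset (Fin m × Fin m)} (hlt : ∀ p ∈ EH, p.1 < p.2) {x : Fin m → Fin n}
    (hx : Function.Injective x) : (Ed EH x).card = EH.card :=
  Finset.card_image_of_injOn fun _ hp _ hq h => Ed_inj hlt hx hp hq h

lemma sum_ind_Ed {EH : Finset (Fin m × Fin m)} (hlt : ∀ p ∈ EH, p.1 < p.2) {x : Fin m → Fin n}
    (hx : Function.Injective x) (e : Sym2 (Fin n)) :
    ∑ p ∈ EH, (if s(x p.1, x p.2) = e then (1 : ℝ) else 0) = if e ∈ Ed EH x then 1 else 0 := by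
  have h := Finset.sum_image (s := EH) (g := fun p => s(x p.1, x p.2))
    (f := fun e' => if e' = e then (1 : ℝ) else 0) (fun _ hp _ hq h => Ed_inj hlt hx hp hq h)
  rw [← h]
  simp [Ed]

lemma ind_Ed_le (EH : Finset (Fin m × Fin m)) (x : Fin m → Fin n) (e : Sym2 (Fin n)) :
    (if e ∈ Ed EH x then (1 : ℝ) else 0) ≤ ∑ p ∈ EH, (if s(x p.1, x p.2) = e then (1 : ℝ) else 0) := by
  split_ifs with h
  · obtain ⟨p, hp, h⟩ := Finset.mem_image.mp h
    have := Finset.single_le_sum (f := fun p : Fin m × Fin m =>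
      if s(x p.1, x p.2) = e then (1 : ℝ) else 0) (fun p _ => by positivity) hp
    simpa [h] using this
  · exact Finset.sum_nonneg fun p _ => by positivity

lemma card_sym2_le : ((univ : Finset (Sym2 (Fin n))).card : ℝ) ≤ (n : ℝ) ^ 2 := by
  have : (univ : Finset (Sym2 (Fin n))) = (univ : Finset (Fin n × Fin n)).image (fun p => s(p.1, p.2)) := by
    ext e
    simp only [mem_univ, mem_image, true_and, true_iff]
    induction e with | _ a b => exact ⟨(a, b), rfl⟩
  have h : (univ : Finset (Sym2 (Fin n))).card ≤ n ^ 2 := by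
    rw [this]
    refine card_image_le.trans ?_
    simp [sq]
  exact_mod_cast h

lemma total_le {EH : Finset (Fin m × Fin m)} (hne : EH.Nonempty) (φ : (Fin m → Fin n) → ℝ)
    (h0 : ∀ x, 0 ≤ φ x) (hl : ∀ e, wdeg (Ed EH) φ e ≤ 1) : ∑ x, φ x ≤ (n : ℝ) ^ 2 := by
  refine le_trans ?_ card_sym2_le
  have h1 : ∑ e, wdeg (Ed EH) φ e ≤ (univ : Finset (Sym2 (Fin n))).card := by
    refine (Finset.sum_le_sum fun e _ => hl e).trans ?_
    simp
  refine le_trans ?_ h1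
  unfold wdeg
  rw [Finset.sum_comm]
  refine Finset.sum_le_sum fun x _ => ?_
  obtain ⟨p, hp⟩ := hne
  have hm : s(x p.1, x p.2) ∈ Ed EH x := Finset.mem_image.mpr ⟨p, hp, rfl⟩
  have := Finset.single_le_sum (f := fun e => if e ∈ Ed EH x then φ x else 0)
    (fun e _ => by split_ifs; exacts [h0 x, le_rfl]) (mem_univ (s(x p.1, x p.2)))
  simpa [hm] using this

open Classical in
lemma drop {EH : Finset (Fin m × Fin m)} (φ : (Fin m → Fin n) → ℝ)
    (h0 : ∀ x, 0 ≤ φ x) (hl : ∀ e, wdeg (Ed EH) φ e ≤ 1) (B : Finset (Fin n × Fin n)) :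
    ∑ x, φ x - B.card ≤ ∑ x, if ∀ p ∈ EH, (x p.1, x p.2) ∉ B then φ x else 0 := by
  have h1 : ∑ q ∈ B, wdeg (Ed EH) φ s(q.1, q.2) ≤ B.card := by
    refine (Finset.sum_le_sum fun e _ => hl _).trans ?_
    simp
  have h2 : ∑ x, φ x ≤ ∑ q ∈ B, wdeg (Ed EH) φ s(q.1, q.2) +
      ∑ x, if ∀ p ∈ EH, (x p.1, x p.2) ∉ B then φ x else 0 := by
    unfold wdeg
    rw [Finset.sum_comm, ← Finset.sum_add_distrib]
    refine Finset.sum_le_sum fun x _ => ?_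
    have hnn : 0 ≤ ∑ q ∈ B, if s(q.1, q.2) ∈ Ed EH x then φ x else 0 :=
      Finset.sum_nonneg fun q _ => by split_ifs; exacts [h0 x, le_rfl]
    split_ifs with h
    · linarith
    · push Not at h
      obtain ⟨p, hp, hB⟩ := h
      have hm : s(x p.1, x p.2) ∈ Ed EH x := Finset.mem_image.mpr ⟨p, hp, rfl⟩
      have := Finset.single_le_sum (f := fun q : Fin n × Fin n =>
        if s(q.1, q.2) ∈ Ed EH x then φ x else 0)
        (fun e _ => by split_ifs; exacts [h0 x, le_rfl]) hB
      simpa [hm] using this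
  linarith

lemma card_pair_eq {i j : Fin m} (hij : i ≠ j) :
    (univ.filter fun z : Fin m → Fin n => z i = z j).card * n ≤ n ^ m := by
  have h : ((univ.filter fun z : Fin m → Fin n => z i = z j) ×ˢ (univ : Finset (Fin n))).card ≤
      (univ : Finset (Fin m → Fin n)).card := by
    refine Finset.card_le_card_of_injOn (fun q => Function.update q.1 i q.2) (by simp) ?_
    rintro ⟨z, u⟩ hz ⟨z', u'⟩ hz' h
    simp only [coe_product, coe_filter, mem_univ, true_and, coe_univ, Set.mem_prod, Set.mem_setOf_eq,
      Set.mem_univ, and_true] at hz hz' h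
    have hu : u = u' := by simpa using congrFun h i
    have hne : ∀ k, k ≠ i → z k = z' k := fun k hk => by
      simpa [Function.update_of_ne hk] using congrFun h k
    have : z = z' := by
      funext k
      by_cases hk : k = i
      · subst hk; rw [hz, hz', hne j hij.symm]
      · exact hne k hk
    rw [this, hu]
  simpa [card_product] using h

open Classical in
lemma card_noninj : ((univ.filter fun z : Fin m → Fin n => ¬ Function.Injective z).card : ℝ) * n ≤
    (m : ℝ) ^ 2 * (n : ℝ) ^ m := by
  have h1 : (univ.filter fun z : Fin m → Fin n => ¬ Function.Injective z) ⊆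
      ((univ : Finset (Fin m × Fin m)).filter fun p => p.1 ≠ p.2).biUnion
        fun p => univ.filter fun z : Fin m → Fin n => z p.1 = z p.2 := by
    intro z hz
    have hz := (mem_filter.mp hz).2
    unfold Function.Injective at hz
    push Not at hz
    obtain ⟨i, j, h, hij⟩ := hz
    simp only [mem_biUnion, mem_filter, mem_univ, true_and]
    exact ⟨(i, j), hij, h⟩
  have h2 := (card_le_card h1).trans card_biUnion_le
  have h3 := Nat.mul_le_mul_right n h2
  rw [Finset.sum_mul] at h3
  have h4 : ∑ p ∈ ((univ : Finset (Fin m × Fin m)).filter fun p => p.1 ≠ p.2),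
      (univ.filter fun z : Fin m → Fin n => z p.1 = z p.2).card * n ≤ m ^ 2 * n ^ m := by
    refine (Finset.sum_le_sum fun p hp => card_pair_eq (mem_filter.mp hp).2).trans ?_
    rw [Finset.sum_const, smul_eq_mul]
    refine Nat.mul_le_mul_right _ ((card_filter_le _ _).trans ?_)
    simp [sq]
  exact_mod_cast h3.trans h4

open Classical in
lemma card_three (W : Finset (Fin n)) (hW : W.card ≤ 4) :
    ((univ.filter fun z : Fin m → Fin n => ∃ I : Finset (Fin m), I.card = 3 ∧ ∀ l ∈ I, z l ∈ W).card : ℝ)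
      * (n : ℝ) ^ 3 ≤ 64 * 2 ^ m * (n : ℝ) ^ m := by
  have h1 : (univ.filter fun z : Fin m → Fin n => ∃ I : Finset (Fin m), I.card = 3 ∧
      ∀ l ∈ I, z l ∈ W) ⊆ (univ.filter fun I : Finset (Fin m) => I.card = 3).biUnion
        fun I => Fintype.piFinset fun l => if l ∈ I then W else univ := by
    intro z hz
    simp only [mem_filter, mem_univ, true_and] at hz
    obtain ⟨I, hI, h⟩ := hz
    simp only [mem_biUnion, mem_filter, mem_univ, true_and, Fintype.mem_piFinset]
    refine ⟨I, hI, fun l => ?_⟩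
    split_ifs with hl
    · exact h l hl
    · exact mem_univ _
  have h2 := (card_le_card h1).trans card_biUnion_le
  have h3 := Nat.mul_le_mul_right (n ^ 3) h2
  rw [Finset.sum_mul] at h3
  have h4 : ∀ I ∈ (univ.filter fun I : Finset (Fin m) => I.card = 3),
      (Fintype.piFinset fun l => if l ∈ I then W else (univ : Finset (Fin n))).card * n ^ 3 ≤
        64 * n ^ m := by
    intro I hI
    have hI := (mem_filter.mp hI).2
    rw [Fintype.card_piFinset]
    have e1 : ∏ l, (if l ∈ I then W else (univ : Finset (Fin n))).card = W.card ^ 3 * n ^ (m - 3) := by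
      have : ∀ l, (if l ∈ I then W else (univ : Finset (Fin n))).card =
        if l ∈ I then W.card else n := fun l => by split_ifs <;> simp
      simp_rw [this]
      rw [Finset.prod_ite, Finset.prod_const, Finset.prod_const]
      have e2 : (univ.filter fun l => l ∈ I) = I := by ext; simp
      have e3 : (univ.filter fun l => l ∉ I) = Iᶜ := by ext; simp
      rw [e2, e3, card_compl, hI, Fintype.card_fin]
    have hm : 3 ≤ m := by
      have := card_le_univ I
      rw [Fintype.card_fin] at this; omega
    rw [e1, mul_assoc, ← pow_add, Nat.sub_add_cancel hm]
    refine Nat.mul_le_mul_right _ ?_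
    calc W.card ^ 3 ≤ 4 ^ 3 := Nat.pow_le_pow_left hW 3
      _ = 64 := by norm_num
  have h5 : ∑ I ∈ (univ.filter fun I : Finset (Fin m) => I.card = 3),
      (Fintype.piFinset fun l => if l ∈ I then W else (univ : Finset (Fin n))).card * n ^ 3 ≤
        64 * 2 ^ m * n ^ m := by
    refine (Finset.sum_le_sum h4).trans ?_
    rw [Finset.sum_const, smul_eq_mul]
    have : (univ.filter fun I : Finset (Fin m) => I.card = 3).card ≤ 2 ^ m := by
      refine (card_filter_le _ _).trans ?_
      simp
    calc _ ≤ 2 ^ m * (64 * n ^ m) := Nat.mul_le_mul_right _ this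
      _ = _ := by ring
  exact_mod_cast h3.trans h5

open Classical in
lemma card_codeg {EH : Finset (Fin m × Fin m)} (hlt : ∀ p ∈ EH, p.1 < p.2) {e e' : Sym2 (Fin n)}
    (hee : e ≠ e') :
    ((univ.filter fun z : Fin m → Fin n => e ∈ Ed EH z ∧ e' ∈ Ed EH z).card : ℝ)
      * (n : ℝ) ^ 3 ≤ 64 * 2 ^ m * (n : ℝ) ^ m := by
  induction e with | _ a b =>
  induction e' with | _ c d =>
  refine le_trans ?_ (card_three (m := m) ({a, b, c, d} : Finset (Fin n)) card_le_four)
  refine mul_le_mul_of_nonneg_right ?_ (by positivity)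
  norm_cast
  refine card_le_card fun z hz => ?_
  simp only [mem_filter, mem_univ, true_and] at hz ⊢
  obtain ⟨h1, h2⟩ := hz
  obtain ⟨p, hp, h1⟩ := mem_image.mp h1
  obtain ⟨q, hq, h2⟩ := mem_image.mp h2
  have hpq : p ≠ q := by rintro rfl; exact hee (h1.symm.trans h2)
  have hpl := hlt p hp
  have hql := hlt q hq
  have hW : ∀ l ∈ ({p.1, p.2, q.1, q.2} : Finset (Fin m)), z l ∈ ({a, b, c, d} : Finset (Fin n)) := by
    intro l hl
    rw [Sym2.eq_iff] at h1 h2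
    simp only [mem_insert, mem_singleton] at hl ⊢
    rcases hl with rfl | rfl | rfl | rfl <;> rcases h1 with h1 | h1 <;> rcases h2 with h2 | h2 <;>
      simp [h1.1, h1.2, h2.1, h2.2]
  have h3 : 3 ≤ ({p.1, p.2, q.1, q.2} : Finset (Fin m)).card := by
    have hk : ∃ k ∈ ({q.1, q.2} : Finset (Fin m)), k ≠ p.1 ∧ k ≠ p.2 := by
      by_contra hcon
      push Not at hcon
      have k1 := hcon q.1 (by simp)
      have k2 := hcon q.2 (by simp)
      by_cases e1 : q.1 = p.1
      · by_cases e2 : q.2 = p.1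
        · omega
        · exact hpq (Prod.ext e1.symm (k2 e2).symm)
      · have e3 := k1 e1
        by_cases e2 : q.2 = p.1
        · omega
        · have := k2 e2; omega
    obtain ⟨k, hk, hk1, hk2⟩ := hk
    have : ({p.1, p.2, k} : Finset (Fin m)) ⊆ {p.1, p.2, q.1, q.2} := by
      intro l hl
      simp only [mem_insert, mem_singleton] at hl hk ⊢
      rcases hl with rfl | rfl | rfl
      · simp
      · simp
      · rcases hk with rfl | rfl <;> simp
    refine le_trans (le_of_eq ?_) (card_le_card this)
    rw [Finset.card_eq_three.mpr ⟨p.1, p.2, k, hpl.ne, hk1.symm, hk2.symm, rfl⟩]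
  obtain ⟨I, hI, hIc⟩ := Finset.exists_subset_card_eq h3
  exact ⟨I, hIc, fun l hl => hW l (hI hl)⟩
end ed
end HR

namespace HR
open Finset

lemma swap {α β ζ E : Type*} [Fintype α] [Fintype E] [DecidableEq E] (φ : α → ℝ)
    (F : Finset β) (Z : α → β → Finset ζ) (N : α → β → ℝ) (f : β → ζ → E) (σ : E → ℝ) :
    ∑ e, σ e * ∑ x, φ x * ∑ p ∈ F, (∑ z ∈ Z x p, if f p z = e then (1 : ℝ) else 0) / N x p =
      ∑ x, φ x * ∑ p ∈ F, (∑ z ∈ Z x p, σ (f p z)) / N x p := by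
  simp_rw [Finset.mul_sum, Finset.sum_div, Finset.mul_sum]
  rw [Finset.sum_comm]
  refine Finset.sum_congr rfl fun x _ => ?_
  rw [Finset.sum_comm]
  refine Finset.sum_congr rfl fun p _ => ?_
  rw [Finset.sum_comm]
  refine Finset.sum_congr rfl fun z _ => ?_
  rw [Finset.sum_eq_single (f p z)]
  · simp; ring
  · intro e _ he
    rw [if_neg (Ne.symm he)]; simp
  · simp

section spread
variable {m n : ℕ} (G : SimpleGraph (Fin n)) [DecidableRel G.Adj]

lemma pair_le {pt : Fin n → Finset (Fin n)} (hpt : ∀ x, x ∈ pt x)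
    (hpe : ∀ x y, y ∈ pt x → pt y = pt x) {a b u v : Fin n} (hab : G.Adj a b) (hne : pt a ≠ pt b) :
    (∑ q ∈ G.interedges (pt a) (pt b), if s(q.1, q.2) = s(u, v) then (1 : ℝ) else 0) /
        (G.interedges (pt a) (pt b)).card ≤
      (∑ q ∈ G.interedges (pt u) (pt v), if s(a, b) = s(q.1, q.2) then (1 : ℝ) else 0) /
        (G.interedges (pt u) (pt v)).card := by
  simp only [sum_boole]
  by_cases hem : (filter (fun q : Fin n × Fin n => s(q.1, q.2) = s(u, v))
      (G.interedges (pt a) (pt b))) = ∅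
  · rw [hem]; simp; positivity
  obtain ⟨q, hq⟩ := Finset.nonempty_iff_ne_empty.mpr hem
  rw [mem_filter, SimpleGraph.mem_interedges_iff] at hq
  obtain ⟨⟨hq1, hq2, hadj⟩, hqs⟩ := hq
  have c1 : (filter (fun q : Fin n × Fin n => s(q.1, q.2) = s(u, v))
      (G.interedges (pt a) (pt b))).card ≤ 1 := by
    rw [Finset.card_le_one]
    intro q hq q' hq'
    rw [mem_filter, SimpleGraph.mem_interedges_iff] at hq hq'
    have := hq.2.trans hq'.2.symm
    rw [Sym2.eq_iff] at this
    rcases this with ⟨h1, h2⟩ | ⟨h1, h2⟩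
    · exact Prod.ext h1 h2
    · exfalso
      have h3 := hq.1.1
      rw [h1] at h3
      exact hne ((hpe _ _ h3).symm.trans (hpe _ _ hq'.1.2.1))
  have c1' : ((filter (fun q : Fin n × Fin n => s(q.1, q.2) = s(u, v))
      (G.interedges (pt a) (pt b))).card : ℝ) ≤ 1 := by exact_mod_cast c1
  have key : G.interedges (pt u) (pt v) = G.interedges (pt a) (pt b) ∧
      (a, b) ∈ G.interedges (pt u) (pt v) ∨
      (G.interedges (pt u) (pt v)).card = (G.interedges (pt a) (pt b)).card ∧
      (b, a) ∈ G.interedges (pt u) (pt v) := by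
    rw [Sym2.eq_iff] at hqs
    rcases hqs with ⟨h1, h2⟩ | ⟨h1, h2⟩
    · left
      rw [← h1, ← h2, hpe _ _ hq1, hpe _ _ hq2]
      exact ⟨rfl, by rw [SimpleGraph.mem_interedges_iff]; exact ⟨hpt _, hpt _, hab⟩⟩
    · right
      rw [← h1, ← h2, hpe _ _ hq1, hpe _ _ hq2]
      exact ⟨by have := G.symm; exact Rel.card_interedges_comm _ _, by
        rw [SimpleGraph.mem_interedges_iff]; exact ⟨hpt _, hpt _, hab.symm⟩⟩
  have hN : (G.interedges (pt u) (pt v)).card = (G.interedges (pt a) (pt b)).card := by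
    rcases key with h | h
    · rw [h.1]
    · exact h.1
  have c2 : 1 ≤ (filter (fun q : Fin n × Fin n => s(a, b) = s(q.1, q.2))
      (G.interedges (pt u) (pt v))).card := by
    rw [Nat.one_le_iff_ne_zero, ← Nat.pos_iff_ne_zero, Finset.card_pos]
    rcases key with h | h
    · exact ⟨_, mem_filter.mpr ⟨h.2, rfl⟩⟩
    · exact ⟨_, mem_filter.mpr ⟨h.2, Sym2.eq_swap⟩⟩
  have c2' : (1 : ℝ) ≤ (filter (fun q : Fin n × Fin n => s(a, b) = s(q.1, q.2))
      (G.interedges (pt u) (pt v))).card := by exact_mod_cast c2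
  rw [hN]
  exact div_le_div_of_nonneg_right (c1'.trans c2') (Nat.cast_nonneg _)

lemma Lload {EH : Finset (Fin m × Fin m)} (hlt : ∀ p ∈ EH, p.1 < p.2)
    {pt : Fin n → Finset (Fin n)} (hpt : ∀ x, x ∈ pt x)
    (hpe : ∀ x y, y ∈ pt x → pt y = pt x) (φ : (Fin m → Fin n) → ℝ)
    (h0 : ∀ x, 0 ≤ φ x) (hl : ∀ e, wdeg (Ed EH) φ e ≤ 1)
    (hinj : ∀ x, φ x ≠ 0 → Function.Injective x)
    (hadj : ∀ x, φ x ≠ 0 → ∀ p ∈ EH, G.Adj (x p.1) (x p.2))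
    (hne : ∀ x, φ x ≠ 0 → ∀ p ∈ EH, pt (x p.1) ≠ pt (x p.2)) (e : Sym2 (Fin n)) :
    ∑ x, φ x * ∑ p ∈ EH, (∑ q ∈ G.interedges (pt (x p.1)) (pt (x p.2)),
      if s(q.1, q.2) = e then (1 : ℝ) else 0) / (G.interedges (pt (x p.1)) (pt (x p.2))).card ≤ 1 := by
  induction e with | _ u v =>
  have h1 : ∑ x, φ x * ∑ p ∈ EH, (∑ q ∈ G.interedges (pt (x p.1)) (pt (x p.2)),
      if s(q.1, q.2) = s(u, v) then (1 : ℝ) else 0) / (G.interedges (pt (x p.1)) (pt (x p.2))).card ≤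
      ∑ x, φ x * ∑ p ∈ EH, (∑ q ∈ G.interedges (pt u) (pt v),
        if s(x p.1, x p.2) = s(q.1, q.2) then (1 : ℝ) else 0) / (G.interedges (pt u) (pt v)).card := by
    refine Finset.sum_le_sum fun x _ => ?_
    by_cases hx : φ x = 0
    · simp [hx]
    refine mul_le_mul_of_nonneg_left (Finset.sum_le_sum fun p hp => ?_) (h0 x)
    exact pair_le G hpt hpe (hadj x hx p hp) (hne x hx p hp)
  refine h1.trans ?_
  have h2 : ∑ x, φ x * ∑ p ∈ EH, (∑ q ∈ G.interedges (pt u) (pt v),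
        if s(x p.1, x p.2) = s(q.1, q.2) then (1 : ℝ) else 0) / (G.interedges (pt u) (pt v)).card =
      (∑ q ∈ G.interedges (pt u) (pt v), wdeg (Ed EH) φ s(q.1, q.2)) /
        (G.interedges (pt u) (pt v)).card := by
    unfold wdeg
    rw [Finset.sum_comm, Finset.sum_div]
    refine Finset.sum_congr rfl fun x _ => ?_
    by_cases hx : φ x = 0
    · simp [hx]
    rw [← Finset.sum_div, mul_div_assoc', Finset.sum_comm, Finset.mul_sum]
    congr 1
    refine Finset.sum_congr rfl fun q _ => ?_
    rw [sum_ind_Ed hlt (hinj x hx)]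
    simp
  rw [h2]
  refine div_le_one_of_le₀ ?_ (Nat.cast_nonneg _)
  refine (Finset.sum_le_sum fun q _ => hl _).trans ?_
  simp

/-- the spread weights -/
noncomputable def spr (EH : Finset (Fin m × Fin m)) (pt : Fin n → Finset (Fin n))
    (φ : (Fin m → Fin n) → ℝ) (z : Fin m → Fin n) : ℝ :=
  ∑ x, φ x * ((if z ∈ homs G EH (fun k => pt (x k)) then (1 : ℝ) else 0) /
    (homs G EH (fun k => pt (x k))).card)

variable {EH : Finset (Fin m × Fin m)} {pt : Fin n → Finset (Fin n)} {φ : (Fin m → Fin n) → ℝ}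

lemma spr_nonneg (h0 : ∀ x, 0 ≤ φ x) (z : Fin m → Fin n) : 0 ≤ spr G EH pt φ z :=
  Finset.sum_nonneg fun x _ => mul_nonneg (h0 x) (by positivity)

lemma spr_supp {z : Fin m → Fin n} (hz : spr G EH pt φ z ≠ 0) : ∀ p ∈ EH, G.Adj (z p.1) (z p.2) := by
  by_contra hcon
  apply hz
  refine Finset.sum_eq_zero fun x _ => ?_
  rw [if_neg]
  · simp
  · intro h
    exact hcon (mem_filter.mp h).2

lemma spr_sum (hT : ∀ x, φ x ≠ 0 → 0 < (homs G EH (fun k => pt (x k))).card) :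
    ∑ z, spr G EH pt φ z = ∑ x, φ x := by
  unfold spr
  rw [Finset.sum_comm]
  refine Finset.sum_congr rfl fun x _ => ?_
  by_cases hx : φ x = 0
  · simp [hx]
  have h := hT x hx
  have h' : (0 : ℝ) < (homs G EH (fun k => pt (x k))).card := by exact_mod_cast h
  rw [← Finset.mul_sum, ← Finset.sum_div]
  simp only [sum_boole, filter_mem_eq_inter, univ_inter]
  rw [div_self h'.ne', mul_one]

lemma spr_le {c : ℝ} (hc : 0 < c) (h0 : ∀ x, 0 ≤ φ x)
    (hT : ∀ x, φ x ≠ 0 → c ≤ (homs G EH (fun k => pt (x k))).card) (z : Fin m → Fin n) :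
    spr G EH pt φ z ≤ (∑ x, φ x) / c := by
  unfold spr
  rw [Finset.sum_div]
  refine Finset.sum_le_sum fun x _ => ?_
  by_cases hx : φ x = 0
  · simp [hx]
  rw [div_eq_mul_inv (φ x)]
  refine mul_le_mul_of_nonneg_left ?_ (h0 x)
  rw [← one_div]
  refine div_le_div₀ zero_le_one ?_ hc (hT x hx)
  split_ifs <;> norm_num

lemma spr_wdeg (h0 : ∀ x, 0 ≤ φ x) (e : Sym2 (Fin n)) : wdeg (Ed EH) (spr G EH pt φ) e ≤
    ∑ x, φ x * ∑ p ∈ EH, (∑ z ∈ homs G EH (fun k => pt (x k)),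
      if s(z p.1, z p.2) = e then (1 : ℝ) else 0) / (homs G EH (fun k => pt (x k))).card := by
  have h1 : wdeg (Ed EH) (spr G EH pt φ) e = ∑ z, spr G EH pt φ z * if e ∈ Ed EH z then 1 else 0 := by
    unfold wdeg
    exact Finset.sum_congr rfl fun z _ => by split_ifs <;> simp
  rw [h1]
  refine (Finset.sum_le_sum fun z _ => mul_le_mul_of_nonneg_left (ind_Ed_le EH z e)
    (spr_nonneg G h0 z)).trans (le_of_eq ?_)
  unfold spr
  simp_rw [Finset.sum_mul]
  rw [Finset.sum_comm]
  refine Finset.sum_congr rfl fun x _ => ?_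
  simp_rw [mul_assoc]
  rw [← Finset.mul_sum]
  congr 1
  rw [← Finset.sum_div, Finset.sum_comm, Finset.sum_div]
  simp_rw [div_mul_eq_mul_div, ← Finset.sum_div, ite_mul, one_mul, zero_mul]
  congr 1
  simp

lemma spr_excess (hlt : ∀ p ∈ EH, p.1 < p.2) (hpt : ∀ x, x ∈ pt x)
    (hpe : ∀ x y, y ∈ pt x → pt y = pt x)
    (h0 : ∀ x, 0 ≤ φ x) (hl : ∀ e, wdeg (Ed EH) φ e ≤ 1)
    (hinj : ∀ x, φ x ≠ 0 → Function.Injective x)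
    (hadj : ∀ x, φ x ≠ 0 → ∀ p ∈ EH, G.Adj (x p.1) (x p.2)) {ε d0 c : ℝ} (hc : 0 < c)
    (hgood : ∀ x, φ x ≠ 0 → ∀ p ∈ EH, Good G pt ε d0 (x p.1) (x p.2))
    (hT : ∀ x, φ x ≠ 0 → c * ∏ k, ((pt (x k)).card : ℝ) ≤ (homs G EH (fun k => pt (x k))).card) :
    ∑ e, max 0 (wdeg (Ed EH) (spr G EH pt φ) e - 1) ≤
      (∑ x, φ x) * (EH.card * (8 * EH.card * ε / c)) := by
  set D : Sym2 (Fin n) → ℝ := fun e => ∑ x, φ x * ∑ p ∈ EH, (∑ z ∈ homs G EH (fun k => pt (x k)),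
      if s(z p.1, z p.2) = e then (1 : ℝ) else 0) / (homs G EH (fun k => pt (x k))).card with hD
  set L : Sym2 (Fin n) → ℝ := fun e => ∑ x, φ x * ∑ p ∈ EH,
    (∑ q ∈ G.interedges (pt (x p.1)) (pt (x p.2)),
      if s(q.1, q.2) = e then (1 : ℝ) else 0) / (G.interedges (pt (x p.1)) (pt (x p.2))).card with hL
  have hL1 : ∀ e, L e ≤ 1 := Lload G hlt hpt hpe φ h0 hl hinj hadj
    (fun x hx p hp => (hgood x hx p hp).1)
  set σ : Sym2 (Fin n) → ℝ := fun e => if L e ≤ D e then 1 else 0 with hσ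
  have hσ1 : ∀ e, |σ e| ≤ 1 := fun e => by simp only [hσ]; split_ifs <;> simp
  have h1 : ∑ e, max 0 (wdeg (Ed EH) (spr G EH pt φ) e - 1) ≤ ∑ e, (σ e * D e - σ e * L e) := by
    refine Finset.sum_le_sum fun e _ => ?_
    have a1 : wdeg (Ed EH) (spr G EH pt φ) e ≤ D e := spr_wdeg G h0 e
    have a2 := hL1 e
    by_cases h : L e ≤ D e
    · simp only [hσ, if_pos h, one_mul]
      exact max_le (by linarith) (by linarith)
    · simp only [hσ, if_neg h, zero_mul, sub_zero]
      exact max_le le_rfl (by linarith)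
  refine h1.trans ?_
  rw [Finset.sum_sub_distrib]
  have s1 := swap φ EH (fun x _ => homs G EH (fun k => pt (x k)))
    (fun x _ => ((homs G EH (fun k => pt (x k))).card : ℝ)) (fun p z => s(z p.1, z p.2)) σ
  have s2 := swap φ EH (fun x p => G.interedges (pt (x p.1)) (pt (x p.2)))
    (fun x p => ((G.interedges (pt (x p.1)) (pt (x p.2))).card : ℝ))
    (fun _ (q : Fin n × Fin n) => s(q.1, q.2)) σ
  rw [s1, s2, ← Finset.sum_sub_distrib, Finset.sum_mul]
  refine Finset.sum_le_sum fun x _ => ?_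
  by_cases hx : φ x = 0
  · simp [hx]
  rw [← mul_sub]
  refine mul_le_mul_of_nonneg_left ?_ (h0 x)
  rw [← Finset.sum_sub_distrib, ← nsmul_eq_mul]
  refine Finset.sum_le_card_nsmul _ _ _ fun p hp => ?_
  refine (le_abs_self _).trans ?_
  exact tv G EH hlt (fun k => pt (x k)) (fun k => ⟨_, hpt _⟩) hc
    (fun p hp => (hgood x hx p hp).2.1) (hT x hx) p hp (fun u v => σ s(u, v)) (fun u v => hσ1 _)
end spread
end HR

namespace HR
open Finset

open Classical in
theorem main_abs {m : ℕ} {EH : Finset (Fin m × Fin m)} (hlt : ∀ p ∈ EH, p.1 < p.2)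
    (hne : EH.Nonempty) (ε : ℝ) (hε : 0 < ε) :
    ∃ n₀ : ℕ, ∀ n : ℕ, n₀ ≤ n → ∀ G : SimpleGraph (Fin n), ∀ φ : (Fin m → Fin n) → ℝ,
      (∀ x, 0 ≤ φ x) → (∀ e, wdeg (Ed EH) φ e ≤ 1) →
      (∀ x, φ x ≠ 0 → Function.Injective x) →
      (∀ x, φ x ≠ 0 → ∀ p ∈ EH, G.Adj (x p.1) (x p.2)) →
      ∃ M : Finset (Fin m → Fin n),
        (∀ z ∈ M, Function.Injective z ∧ ∀ p ∈ EH, G.Adj (z p.1) (z p.2)) ∧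
        (M : Set (Fin m → Fin n)).Pairwise (fun z z' => Disjoint (Ed EH z) (Ed EH z')) ∧
        ∑ x, φ x - M.card ≤ ε * (n : ℝ) ^ 2 := by
  set r := EH.card with hr
  have hr1 : 1 ≤ r := hne.card_pos
  have hr1' : (1 : ℝ) ≤ r := by exact_mod_cast hr1
  obtain ⟨δ, hδ, hnib⟩ := nibble r hr1 (ε / 8) (by positivity)
  set d0 : ℝ := ε / 40 with hd0
  have hd0p : 0 < d0 := by positivity
  have hdr : 0 < d0 ^ r := by positivity
  set c : ℝ := d0 ^ r / 2 with hc
  have hcp : 0 < c := by positivity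
  set ε₁ : ℝ := min (ε / 32) (min (d0 ^ r / (8 * r)) (ε * d0 ^ r / (128 * r ^ 2))) with hε₁
  have hε₁p : 0 < ε₁ := by positivity
  have e1 : ε₁ ≤ ε / 32 := min_le_left _ _
  have e2 : ε₁ ≤ d0 ^ r / (8 * r) := (min_le_right _ _).trans (min_le_left _ _)
  have e3 : ε₁ ≤ ε * d0 ^ r / (128 * r ^ 2) := (min_le_right _ _).trans (min_le_right _ _)
  have e2' : c ≤ d0 ^ r - 4 * r * ε₁ := by
    rw [le_div_iff₀ (by positivity)] at e2
    linarith
  have e3' : r * (8 * r * ε₁ / c) ≤ ε / 8 := by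
    rw [le_div_iff₀ (by positivity)] at e3
    rw [mul_div_assoc', div_le_iff₀ hcp, hc]
    linarith
  obtain ⟨N, K, hK, hreg⟩ := reg ε₁ d0 hε₁p hd0p
  have hKp : (0 : ℝ) < K := by exact_mod_cast hK
  -- constants for lower-order terms
  set C : ℝ := K ^ m / c with hC
  have hCp : 0 < C := by positivity
  obtain ⟨N1, hN1⟩ := exists_nat_ge (8 * m ^ 2 * C / ε)
  obtain ⟨N2, hN2⟩ := exists_nat_ge (64 * 2 ^ m * C / δ)
  refine ⟨N + N1 + N2 + 1, fun n hn G φ h0 hl hinj hadj => ?_⟩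
  have hnp : (0 : ℝ) < n := by exact_mod_cast (by omega : 0 < n)
  obtain ⟨pt, hpt, hpe, hsz, hbad⟩ := hreg n (by omega) G
  set B := univ.filter fun p : Fin n × Fin n => G.Adj p.1 p.2 ∧ ¬ Good G pt ε₁ d0 p.1 p.2 with hB
  set φ1 : (Fin m → Fin n) → ℝ := fun x => if ∀ p ∈ EH, (x p.1, x p.2) ∉ B then φ x else 0 with hφ1
  have hdrop : ∑ x, φ x - B.card ≤ ∑ x, φ1 x := drop φ h0 hl B
  have le1 : ∀ x, φ1 x ≤ φ x := fun x => by
    simp only [hφ1]; split_ifs; exacts [le_rfl, h0 x]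
  have nn1 : ∀ x, 0 ≤ φ1 x := fun x => by
    simp only [hφ1]; split_ifs; exacts [h0 x, le_rfl]
  have ne1 : ∀ x, φ1 x ≠ 0 → φ x ≠ 0 := fun x hx h => hx (le_antisymm (h ▸ le1 x) (nn1 x))
  have good1 : ∀ x, φ1 x ≠ 0 → ∀ p ∈ EH, Good G pt ε₁ d0 (x p.1) (x p.2) := by
    intro x hx p hp
    have hall : ∀ p ∈ EH, (x p.1, x p.2) ∉ B := by
      by_contra hcon
      exact hx (if_neg hcon)
    have := hall p hp
    rw [hB, mem_filter] at this
    by_contra hg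
    exact this ⟨mem_univ _, hadj x (ne1 x hx) p hp, hg⟩
  have l1 : ∀ e, wdeg (Ed EH) φ1 e ≤ 1 := fun e => by
    refine le_trans (Finset.sum_le_sum fun x _ => ?_) (hl e)
    split_ifs
    · exact le1 x
    · exact le_rfl
  have tot1 : ∑ x, φ1 x ≤ (n : ℝ) ^ 2 := total_le hne φ1 nn1 l1
  have hT : ∀ x, φ1 x ≠ 0 → c * ∏ k, ((pt (x k)).card : ℝ) ≤
      (homs G EH (fun k => pt (x k))).card := by
    intro x hx
    refine le_trans ?_ (homs_card G EH hlt (fun k => pt (x k)) (fun k => ⟨_, hpt _⟩) hd0p.le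
      (fun p hp => (good1 x hx p hp).2.1) (fun p hp => (good1 x hx p hp).2.2))
    exact mul_le_mul_of_nonneg_right e2' (Finset.prod_nonneg fun _ _ => Nat.cast_nonneg _)
  have hT2 : ∀ x, φ1 x ≠ 0 → c * (n / K) ^ m ≤ ((homs G EH (fun k => pt (x k))).card : ℝ) := by
    intro x hx
    refine le_trans (mul_le_mul_of_nonneg_left ?_ hcp.le) (hT x hx)
    calc ((n : ℝ) / K) ^ m = ∏ _k : Fin m, ((n : ℝ) / K) := by rw [Finset.prod_const, Finset.card_univ, Fintype.card_fin]
      _ ≤ _ := Finset.prod_le_prod (fun _ _ => by positivity) (fun k _ => hsz _)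
  have hcn : 0 < c * ((n : ℝ) / K) ^ m := by positivity
  set φ2 := spr G EH pt φ1 with hφ2
  have nn2 : ∀ z, 0 ≤ φ2 z := spr_nonneg G nn1
  have sum2 : ∑ z, φ2 z = ∑ x, φ1 x := spr_sum G fun x hx => by
    have := hcn.trans_le (hT2 x hx)
    exact_mod_cast this
  have max2 : ∀ z, φ2 z * (n : ℝ) ^ m ≤ C * (n : ℝ) ^ 2 := by
    intro z
    have h := (spr_le G hcn nn1 hT2 z).trans (div_le_div_of_nonneg_right tot1 hcn.le)
    rw [le_div_iff₀ hcn] at h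
    have : φ2 z * (n : ℝ) ^ m = C * (φ2 z * (c * (n / K) ^ m)) := by
      rw [hC, div_pow]; field_simp
    rw [this]
    exact mul_le_mul_of_nonneg_left h hCp.le
  have exc2 := spr_excess G hlt hpt hpe nn1 l1 (fun x hx => hinj x (ne1 x hx))
    (fun x hx => hadj x (ne1 x hx)) hcp good1 hT
  rw [← hφ2] at exc2
  have exc2' : ∑ e, max 0 (wdeg (Ed EH) φ2 e - 1) ≤ ε / 8 * (n : ℝ) ^ 2 := by
    refine exc2.trans ?_
    rw [mul_comm]
    exact mul_le_mul e3' tot1 (Finset.sum_nonneg fun x _ => nn1 x) (by positivity)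
  -- remove the non-injective maps
  set φ3 : (Fin m → Fin n) → ℝ := fun z => if Function.Injective z then φ2 z else 0 with hφ3
  have nn3 : ∀ z, 0 ≤ φ3 z := fun x => by
    simp only [hφ3]; split_ifs; exacts [nn2 x, le_rfl]
  have le3 : ∀ z, φ3 z ≤ φ2 z := fun x => by
    simp only [hφ3]; split_ifs; exacts [le_rfl, nn2 x]
  have sum3 : ∑ z, φ2 z - ε / 8 * (n : ℝ) ^ 2 ≤ ∑ z, φ3 z := by
    have h1 : ∑ z, φ2 z = ∑ z, φ3 z + ∑ z ∈ univ.filter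
        (fun z : Fin m → Fin n => ¬ Function.Injective z), φ2 z := by
      rw [← Finset.sum_filter_add_sum_filter_not univ (fun z : Fin m → Fin n => Function.Injective z)]
      congr 1
      rw [Finset.sum_filter]
    have h2 : (∑ z ∈ univ.filter (fun z : Fin m → Fin n => ¬ Function.Injective z), φ2 z) *
        (n : ℝ) ^ m * n ≤ (m ^ 2 * C * (n : ℝ) ^ 2) * (n : ℝ) ^ m := by
      rw [Finset.sum_mul]
      calc _ ≤ (∑ z ∈ univ.filter (fun z : Fin m → Fin n => ¬ Function.Injective z),
            C * (n : ℝ) ^ 2) * n := by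
              refine mul_le_mul_of_nonneg_right (Finset.sum_le_sum fun z _ => max2 z) hnp.le
        _ = C * (n : ℝ) ^ 2 * (((univ.filter fun z : Fin m → Fin n =>
              ¬ Function.Injective z).card : ℝ) * n) := by
              rw [Finset.sum_const, nsmul_eq_mul]; ring
        _ ≤ C * (n : ℝ) ^ 2 * ((m : ℝ) ^ 2 * (n : ℝ) ^ m) :=
              mul_le_mul_of_nonneg_left card_noninj (by positivity)
        _ = _ := by ring
    set Q := ∑ z ∈ univ.filter (fun z : Fin m → Fin n => ¬ Function.Injective z), φ2 z
    have h3 : Q * n ≤ m ^ 2 * C * (n : ℝ) ^ 2 := by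
      refine le_of_mul_le_mul_right ?_ (show (0 : ℝ) < (n : ℝ) ^ m by positivity)
      linarith
    have hN : 8 * m ^ 2 * C / ε ≤ n := hN1.trans (by exact_mod_cast (by omega : N1 ≤ n))
    rw [div_le_iff₀ hε] at hN
    have h4 : Q ≤ ε / 8 * (n : ℝ) ^ 2 := by
      refine le_of_mul_le_mul_right ?_ hnp
      have := mul_le_mul_of_nonneg_right hN (sq_nonneg (n : ℝ))
      nlinarith
    linarith
  have exc3 : ∑ e, max 0 (wdeg (Ed EH) φ3 e - 1) ≤ ε / 8 * (n : ℝ) ^ 2 := by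
    refine le_trans (Finset.sum_le_sum fun e _ => ?_) exc2'
    refine max_le_max le_rfl (sub_le_sub_right (Finset.sum_le_sum fun z _ => ?_) _)
    split_ifs
    · exact le3 z
    · exact le_rfl
  obtain ⟨w, w0, wle, wdeg1, wsum⟩ := trim (Ed EH) φ3 nn3
  have wne : ∀ z, w z ≠ 0 → φ3 z ≠ 0 := fun z hz h => hz (le_antisymm (h ▸ wle z) (w0 z))
  have inj3 : ∀ z, φ3 z ≠ 0 → Function.Injective z := fun z hz => by
    by_contra hcon
    exact hz (if_neg hcon)
  have hom3 : ∀ z, φ3 z ≠ 0 → ∀ p ∈ EH, G.Adj (z p.1) (z p.2) := fun z hz => by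
    refine spr_supp G (pt := pt) (φ := φ1) (fun h => hz ?_)
    exact le_antisymm ((le3 z).trans h.le) (nn3 z)
  have hsys : Sys (Ed EH) r δ univ w := by
    refine ⟨w0, fun _ _ => subset_univ _, fun z hz => Ed_card hlt (inj3 z (wne z hz)), wdeg1, ?_⟩
    intro e e' hee
    have h1 : (∑ z, if e ∈ Ed EH z ∧ e' ∈ Ed EH z then w z else 0) * (n : ℝ) ^ m * (n : ℝ) ^ 3 ≤
        (C * (n : ℝ) ^ 2) * (64 * 2 ^ m * (n : ℝ) ^ m) := by
      rw [← Finset.sum_filter, Finset.sum_mul]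
      calc _ ≤ (∑ z ∈ univ.filter (fun z : Fin m → Fin n => e ∈ Ed EH z ∧ e' ∈ Ed EH z),
            C * (n : ℝ) ^ 2) * (n : ℝ) ^ 3 := by
              refine mul_le_mul_of_nonneg_right (Finset.sum_le_sum fun z _ => ?_) (by positivity)
              exact (mul_le_mul_of_nonneg_right ((wle z).trans (le3 z)) (by positivity)).trans (max2 z)
        _ = C * (n : ℝ) ^ 2 * (((univ.filter fun z : Fin m → Fin n =>
              e ∈ Ed EH z ∧ e' ∈ Ed EH z).card : ℝ) * (n : ℝ) ^ 3) := by
              rw [Finset.sum_const, nsmul_eq_mul]; ring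
        _ ≤ _ := mul_le_mul_of_nonneg_left (card_codeg hlt hee) (by positivity)
    set Q := ∑ z, if e ∈ Ed EH z ∧ e' ∈ Ed EH z then w z else 0
    have hN : 64 * 2 ^ m * C / δ ≤ n := hN2.trans (by exact_mod_cast (by omega : N2 ≤ n))
    rw [div_le_iff₀ hδ] at hN
    refine le_of_mul_le_mul_right ?_ (show (0 : ℝ) < (n : ℝ) ^ m * (n : ℝ) ^ 3 by positivity)
    have h2 := mul_le_mul_of_nonneg_right hN (show (0 : ℝ) ≤ (n : ℝ) ^ m * (n : ℝ) ^ 2 by positivity)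
    calc Q * ((n : ℝ) ^ m * (n : ℝ) ^ 3) = Q * (n : ℝ) ^ m * (n : ℝ) ^ 3 := by ring
      _ ≤ _ := h1
      _ = 64 * 2 ^ m * C * ((n : ℝ) ^ m * (n : ℝ) ^ 2) := by ring
      _ ≤ _ := h2
      _ = _ := by ring
  obtain ⟨M, hM, hMc⟩ := hnib (Ed EH) univ w hsys
  refine ⟨M, fun z hz => ⟨inj3 z (wne z (hM.1 z hz)), hom3 z (wne z (hM.1 z hz))⟩, hM.2, ?_⟩
  have hS : ε / 8 * ((univ : Finset (Sym2 (Fin n))).card : ℝ) ≤ ε / 8 * (n : ℝ) ^ 2 :=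
    mul_le_mul_of_nonneg_left card_sym2_le (by positivity)
  have hb : (4 * ε₁ + 5 * d0) * (n : ℝ) ^ 2 ≤ ε / 4 * (n : ℝ) ^ 2 := by
    refine mul_le_mul_of_nonneg_right ?_ (sq_nonneg _)
    rw [hd0]; linarith
  have hfin : 0 ≤ ε * (n : ℝ) ^ 2 := by positivity
  linarith
end HR

/-- Theorem of Haxell and Rödl: for every fixed graph `H` with at least one edge and every
`ε > 0` there exists `n₀` such that every graph `G` on `n ≥ n₀` vertices satisfies
`ν*_H(G) - ν_H(G) ≤ ε·n²`: every fractional `H`-packing of `G` exceeds some integral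
`H`-packing by at most `ε·n²`. -/
theorem haxell_rodl (m : ℕ) (H : SimpleGraph (Fin m)) (hH : H.edgeSet.Nonempty)
    (ε : ℝ) (hε : 0 < ε) :
    ∃ n₀ : ℕ, ∀ n : ℕ, n₀ ≤ n → ∀ G : SimpleGraph (Fin n),
      ∀ ψ : G.Subgraph → ℝ, IsFracPacking G H ψ →
        ∃ P : Finset G.Subgraph,
          (∀ c ∈ P, c.IsCopy H) ∧
          (P : Set G.Subgraph).Pairwise (fun c d => Disjoint c.edgeSet d.edgeSet) ∧
          (∑ᶠ c ∈ {c : G.Subgraph | c.IsCopy H}, ψ c) - (P.card : ℝ) ≤ ε * (n : ℝ) ^ 2 := by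
  classical
  set EH : Finset (Fin m × Fin m) := Finset.univ.filter fun p => p.1 < p.2 ∧ H.Adj p.1 p.2 with hEH
  have hmem : ∀ p, p ∈ EH ↔ p.1 < p.2 ∧ H.Adj p.1 p.2 := fun p => by simp [hEH]
  have hlt : ∀ p ∈ EH, p.1 < p.2 := fun p hp => ((hmem p).mp hp).1
  have hedge : ∀ a b, H.Adj a b → ∃ p ∈ EH, s(p.1, p.2) = s(a, b) := by
    intro a b hab
    rcases lt_or_gt_of_ne hab.ne with h | h
    · exact ⟨(a, b), (hmem _).mpr ⟨h, hab⟩, rfl⟩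
    · exact ⟨(b, a), (hmem _).mpr ⟨h, hab.symm⟩, Sym2.eq_swap⟩
  have hne : EH.Nonempty := by
    obtain ⟨e, he⟩ := hH
    induction e with | _ a b =>
    obtain ⟨p, hp, -⟩ := hedge a b he
    exact ⟨p, hp⟩
  obtain ⟨n₀, hmain⟩ := HR.main_abs hlt hne ε hε
  refine ⟨n₀ + 1, fun n hn G ψ hψ => ?_⟩
  obtain ⟨hψ0, -, hψl⟩ := hψ
  have : Nonempty (Fin n) := ⟨⟨0, by omega⟩⟩
  have : Fintype G.Subgraph := Fintype.ofFinite _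
  have hX : ∀ c : G.Subgraph, ∃ x : Fin m → Fin n, c.IsCopy H →
      Function.Injective x ∧ ∀ a b, H.Adj a b → c.Adj (x a) (x b) := by
    intro c
    by_cases hc : c.IsCopy H
    · obtain ⟨i⟩ := hc
      refine ⟨fun a => (i.symm a : Fin n), fun _ => ⟨?_, ?_⟩⟩
      · exact Subtype.val_injective.comp i.symm.injective
      · intro a b hab
        exact (i.symm.map_rel_iff.mpr hab : c.coe.Adj _ _)
    · exact ⟨fun _ => Classical.arbitrary _, fun h => absurd h hc⟩
  choose X hX using hX
  set Cs : Finset G.Subgraph := Finset.univ.filter fun c => c.IsCopy H with hCs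
  set φ : (Fin m → Fin n) → ℝ := fun x => ∑ c ∈ Cs with X c = x, ψ c with hφ
  have hφsum : ∑ x, φ x = ∑ c ∈ Cs, ψ c := Finset.sum_fiberwise Cs X ψ
  have hφ0 : ∀ x, 0 ≤ φ x := fun x => Finset.sum_nonneg fun c _ => (hψ0 c).1
  have hφne : ∀ x, φ x ≠ 0 → ∃ c, c.IsCopy H ∧ X c = x := by
    intro x hx
    obtain ⟨c, hc, -⟩ := Finset.exists_ne_zero_of_sum_ne_zero hx
    rw [Finset.mem_filter, hCs, Finset.mem_filter] at hc
    exact ⟨c, hc.1.2, hc.2⟩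
  have hEd : ∀ c : G.Subgraph, c.IsCopy H → ∀ e ∈ HR.Ed EH (X c), e ∈ c.edgeSet := by
    intro c hc e he
    obtain ⟨p, hp, rfl⟩ := Finset.mem_image.mp he
    exact (hX c hc).2 _ _ ((hmem p).mp hp).2
  have hφl : ∀ e, HR.wdeg (HR.Ed EH) φ e ≤ 1 := by
    intro e
    have h1 : HR.wdeg (HR.Ed EH) φ e = ∑ c ∈ Cs, if e ∈ HR.Ed EH (X c) then ψ c else 0 := by
      rw [← Finset.sum_fiberwise Cs X]
      unfold HR.wdeg
      refine Finset.sum_congr rfl fun x _ => ?_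
      have : ∀ c ∈ Cs.filter (fun c => X c = x), (if e ∈ HR.Ed EH (X c) then ψ c else 0) =
          if e ∈ HR.Ed EH x then ψ c else 0 := by
        intro c hc
        rw [(Finset.mem_filter.mp hc).2]
      rw [Finset.sum_congr rfl this]
      split_ifs
      · rfl
      · simp
    rw [h1]
    by_cases he : e ∈ G.edgeSet
    · refine le_trans ?_ (hψl e he)
      have h2 : {c : G.Subgraph | c.IsCopy H ∧ e ∈ c.edgeSet} =
          ((Cs.filter fun c => e ∈ c.edgeSet : Finset G.Subgraph) : Set G.Subgraph) := by
        ext c; simp [hCs]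
      rw [h2, finsum_mem_coe_finset, Finset.sum_filter (s := Cs) (fun c => e ∈ c.edgeSet)]
      apply Finset.sum_le_sum
      intro c hc
      by_cases h3 : e ∈ HR.Ed EH (X c)
      · rw [if_pos h3, if_pos (hEd c (Finset.mem_filter.mp hc).2 e h3)]
      · rw [if_neg h3]
        split_ifs
        exacts [(hψ0 c).1, le_rfl]
    · rw [Finset.sum_eq_zero]
      · exact zero_le_one
      · intro c hc
        rw [if_neg]
        intro h3
        exact he (c.edgeSet_subset (hEd c (Finset.mem_filter.mp hc).2 e h3))
  obtain ⟨M, hM1, hM2, hM3⟩ := hmain n (by omega) G φ hφ0 hφl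
    (fun x hx => by
      obtain ⟨c, hc, rfl⟩ := hφne x hx
      exact (hX c hc).1)
    (fun x hx p hp => by
      obtain ⟨c, hc, rfl⟩ := hφne x hx
      exact ((hX c hc).2 _ _ ((hmem p).mp hp).2).adj_sub)
  have hS : ∀ z : Fin m → Fin n, ∃ s : G.Subgraph, z ∈ M → s.IsCopy H ∧
      s.edgeSet = (HR.Ed EH z : Set (Sym2 (Fin n))) := by
    intro z
    by_cases hz : z ∈ M
    swap
    · exact ⟨⊥, fun h => absurd h hz⟩
    obtain ⟨hzi, hza⟩ := hM1 z hz
    have hhom : ∀ {a b}, H.Adj a b → G.Adj (z a) (z b) := by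
      intro a b hab
      obtain ⟨p, hp, h⟩ := hedge a b hab
      have h3 := hza p hp
      rw [Sym2.eq_iff] at h
      rcases h with ⟨h1, h2⟩ | ⟨h1, h2⟩
      · rwa [h1, h2] at h3
      · rw [h1, h2] at h3; exact h3.symm
    let f : H.Copy G := ⟨⟨z, hhom⟩, hzi⟩
    refine ⟨f.toSubgraph, fun _ => ⟨⟨f.isoToSubgraph.symm⟩, ?_⟩⟩
    rw [SimpleGraph.Copy.toSubgraph, SimpleGraph.Subgraph.edgeSet_map]
    ext e
    constructor
    · rintro ⟨e', he', rfl⟩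
      induction e' with | _ a b =>
      obtain ⟨p, hp, h⟩ := hedge a b (by simpa using he')
      refine Finset.mem_coe.mpr (Finset.mem_image.mpr ⟨p, hp, ?_⟩)
      rw [← h]; rfl
    · intro he
      obtain ⟨p, hp, rfl⟩ := Finset.mem_image.mp (Finset.mem_coe.mp he)
      exact ⟨s(p.1, p.2), by simpa using ((hmem p).mp hp).2, rfl⟩
  choose S hS using hS
  have hdisj : ∀ z ∈ M, ∀ z' ∈ M, z ≠ z' → Disjoint (S z).edgeSet (S z').edgeSet := by
    intro z hz z' hz' hzz
    rw [(hS z hz).2, (hS z' hz').2, Finset.disjoint_coe]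
    exact hM2 hz hz' hzz
  have hSinj : Set.InjOn S M := by
    intro z hz z' hz' h
    by_contra hzz
    have h1 := hdisj z hz z' hz' hzz
    rw [← h, disjoint_self, (hS z hz).2] at h1
    obtain ⟨p, hp⟩ := hne
    have h2 : s(z p.1, z p.2) ∈ (HR.Ed EH z : Set (Sym2 (Fin n))) :=
      Finset.mem_coe.mpr (Finset.mem_image.mpr ⟨p, hp, rfl⟩)
    rw [h1] at h2
    exact h2
  refine ⟨M.image S, ?_, ?_, ?_⟩
  · intro c hc
    obtain ⟨z, hz, rfl⟩ := Finset.mem_image.mp hc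
    exact (hS z hz).1
  · intro c hc d hd hcd
    obtain ⟨z, hz, rfl⟩ := Finset.mem_image.mp (Finset.mem_coe.mp hc)
    obtain ⟨z', hz', rfl⟩ := Finset.mem_image.mp (Finset.mem_coe.mp hd)
    exact hdisj z hz z' hz' (fun h => hcd (by rw [h]))
  · have h2 : {c : G.Subgraph | c.IsCopy H} = (Cs : Set G.Subgraph) := by
      ext c; simp [hCs]
    rw [h2, finsum_mem_coe_finset, Finset.card_image_of_injOn hSinj, ← hφsum]
    exact hM3
end
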